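/- arXiv:1912.10932 — 4 statements merged into one kernel-verified Lean document; each statement's English description precedes it below -/
import Mathlib

section
/- Let 𝒞 be a cocomplete category that is generated under colimits by its compact projective objects. Then an object X of 𝒞 is compact if and only if X is the coequalizer of a reflexive parallel pair of morphisms between two compact projective objects of 𝒞 (in particular, any coequalizer of a parallel pair between compact projective objects is compact). -/
open CategoryTheory CategoryTheory.Limits Opposite

universe v u

/-- An object `X` of a category `C` is compact (of finite presentation) if
`Hom_C(X, -)` preserves filtered colimits. -/
def IsCompactObj (C : Type u) [Category.{v} C] (X : C) : Prop :=
  ∀ (J : Type v) [SmallCategory J] [IsFiltered J],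
    Nonempty (PreservesColimitsOfShape J (coyoneda.obj (op X)))

/-- An object `X` of a category `C` is compact projective (strongly of finite presentation)
if `Hom_C(X, -)` preserves filtered colimits and reflexive coequalizers. -/
def IsCompactProjectiveObj (C : Type u) [Category.{v} C] (X : C) : Prop :=
  IsCompactObj C X ∧
    ∀ {Y Z : C} (f g : Y ⟶ Z) (s : Z ⟶ Y), s ≫ f = 𝟙 Z → s ≫ g = 𝟙 Z →
      Nonempty (PreservesColimit (parallelPair f g) (coyoneda.obj (op X)))

/-- A class of objects of `C` is closed under (small) colimits if the colimit point of any
small diagram all of whose objects belong to the class again belongs to the class. -/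
def ClosedUnderColimits (C : Type u) [Category.{v} C] (P : Set C) : Prop :=
  ∀ (J : Type v) [SmallCategory J], ∀ (F : J ⥤ C) (c : Cocone F),
    IsColimit c → (∀ j, F.obj j ∈ P) → c.pt ∈ P

/-- A cocomplete category `C` is generated under colimits by its compact projective
objects if the only class of objects of `C` containing all compact projective objects and
closed under colimits consists of all objects of `C`. -/
def GeneratedByCompactProjectives (C : Type u) [Category.{v} C] : Prop :=
  ∀ P : Set C, ClosedUnderColimits C P →
    (∀ X : C, IsCompactProjectiveObj C X → X ∈ P) → ∀ X : C, X ∈ P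

/-!
Compact projective objects, and hence their coproducts, lift along regular epimorphisms. Therefore a
coequalizer of coequalizers of such objects can be rewritten as a single coequalizer, and since
coproducts commute with coequalizers, every object `X` of `C` is the coequalizer of a pair `B ⇉ A`
of coproducts of compact projectives. Writing `A` and `B` as filtered colimits of finite coproducts
presents `X` as a filtered colimit of coequalizers of compact projectives. If `X` is compact, it is
a retract of one of these coequalizers, hence again such a coequalizer. Replacing `Y ⇉ Z` by
`Y ⨿ Z ⇉ Z`, with the identity on the second summand, makes the pair reflexive.
-/

universe w

section Coequalizers

variable {C : Type u} [Category.{v} C]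

lemma nonempty_isColimit_cofork_iff {Y Z X : C} {f g : Y ⟶ Z} {π : Z ⟶ X}
    (w : f ≫ π = g ≫ π) :
    Nonempty (IsColimit (Cofork.ofπ π w)) ↔
      ∀ ⦃T : C⦄ (k : Z ⟶ T), f ≫ k = g ≫ k → ∃! t : X ⟶ T, π ≫ t = k :=
  ⟨fun ⟨h⟩ _ _ hk ↦ Cofork.IsColimit.existsUnique h _ hk,
    fun h ↦ ⟨Cofork.IsColimit.ofExistsUnique fun s ↦ h s.π s.condition⟩⟩

lemma isRegularEpi_of_isColimit_cofork {Y Z X : C} {f g : Y ⟶ Z} {π : Z ⟶ X}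
    {w : f ≫ π = g ≫ π} (h : IsColimit (Cofork.ofπ π w)) : IsRegularEpi π :=
  ⟨⟨⟨Y, f, g, w, h⟩⟩⟩

lemma le_colimitsOfShape_of_isConnected (P : ObjectProperty C) (J : Type*) [Category* J]
    [IsConnected J] : P ≤ P.colimitsOfShape J :=
  fun X hX ↦ ⟨⟨⟨_, 𝟙 _, isColimitConstCocone J X⟩, fun _ ↦ hX⟩⟩

lemma colimitsOfShape_walkingParallelPair_iff (P : ObjectProperty C) (X : C) :
    P.colimitsOfShape WalkingParallelPair X ↔
      ∃ (Y Z : C) (f g : Y ⟶ Z) (π : Z ⟶ X) (w : f ≫ π = g ≫ π),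
        P Y ∧ P Z ∧ Nonempty (IsColimit (Cofork.ofπ π w)) := by
  constructor
  · rintro ⟨p⟩
    let c := Cofork.ofCocone p.cocone
    exact ⟨_, _, _, _, c.π, c.condition, p.prop_diag_obj .zero, p.prop_diag_obj .one,
      ⟨((IsColimit.precomposeHomEquiv (diagramIsoParallelPair p.diag).symm p.cocone).symm
        p.isColimit).ofIsoColimit (Cofork.isoCoforkOfπ c)⟩⟩
  · rintro ⟨Y, Z, f, g, π, w, hY, hZ, ⟨h⟩⟩
    exact ⟨{ diag := _, ι := _, isColimit := h, prop_diag_obj := by rintro (_ | _) <;> assumption }⟩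

variable [HasBinaryCoproducts C]

lemma exists_isColimit_cofork_comp {A B R E E' X : C} {f g : B ⟶ A} {p : A ⟶ E}
    {wp : f ≫ p = g ≫ p} (hp : IsColimit (Cofork.ofπ p wp)) {u v : E' ⟶ E} {q : E ⟶ X}
    {wq : u ≫ q = v ≫ q} (hq : IsColimit (Cofork.ofπ q wq)) {ε : R ⟶ E'} [Epi ε] {l m : R ⟶ A}
    (hl : l ≫ p = ε ≫ u) (hm : m ≫ p = ε ≫ v) :
    ∃ w : coprod.desc f l ≫ p ≫ q = coprod.desc g m ≫ p ≫ q,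
      Nonempty (IsColimit (Cofork.ofπ (p ≫ q) w)) := by
  have w : coprod.desc f l ≫ p ≫ q = coprod.desc g m ≫ p ≫ q := by
    simp [reassoc_of% wp, reassoc_of% hl, reassoc_of% hm, wq]
  refine ⟨w, (nonempty_isColimit_cofork_iff w).2 fun T k hk ↦ ?_⟩
  have hk_inl : f ≫ k = g ≫ k := by simpa only [coprod.inl_desc_assoc] using coprod.inl ≫= hk
  have hk_inr : l ≫ k = m ≫ k := by simpa only [coprod.inr_desc_assoc] using coprod.inr ≫= hk
  obtain ⟨t, ht : p ≫ t = k, ht_unique⟩ := Cofork.IsColimit.existsUnique hp k hk_inl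
  have htuv : u ≫ t = v ≫ t := by
    rw [← cancel_epi ε, ← reassoc_of% hl, ← reassoc_of% hm, ht, hk_inr]
  obtain ⟨r, hr : q ≫ r = t, hr_unique⟩ := Cofork.IsColimit.existsUnique hq t htuv
  exact ⟨r, by simp [hr, ht], fun r' hr' ↦ hr_unique r' (ht_unique _ (by simpa using hr'))⟩

lemma exists_isColimit_cofork_coprod_desc_id {Y Z X : C} {f g : Y ⟶ Z} {π : Z ⟶ X}
    {w : f ≫ π = g ≫ π} (h : IsColimit (Cofork.ofπ π w)) :
    ∃ w' : coprod.desc f (𝟙 Z) ≫ π = coprod.desc g (𝟙 Z) ≫ π,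
      Nonempty (IsColimit (Cofork.ofπ π w')) :=
  ⟨by simp [w], (nonempty_isColimit_cofork_iff _).2 fun _ k hk ↦
    Cofork.IsColimit.existsUnique h k <| by
      simpa only [coprod.inl_desc_assoc] using coprod.inl ≫= hk⟩

end Coequalizers

section RegularProjective

variable {C : Type u} [Category.{v} C]

/-- The objects of a category that are projective with respect to regular epimorphisms. Compact
projective objects and their coproducts have this lifting property, which is all that is needed to
iterate coequalizers of such objects. -/
def regularProjective (C : Type u) [Category.{v} C] : ObjectProperty C :=
  fun P ↦ ∀ ⦃Y Z : C⦄ (p : Y ⟶ Z) [IsRegularEpi p] (h : P ⟶ Z), ∃ l : P ⟶ Y, l ≫ p = h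

instance isClosedUnderColimitsOfShape_discrete_regularProjective (I : Type*) :
    (regularProjective C).IsClosedUnderColimitsOfShape (Discrete I) where
  colimitsOfShape_le := by
    rintro X ⟨pres⟩ Y Z p _ h
    choose l hl using fun i : Discrete I ↦ pres.prop_diag_obj i p (pres.ι.app i ≫ h)
    exact ⟨pres.isColimit.desc ⟨Y, Discrete.natTrans l⟩,
      pres.isColimit.hom_ext fun i ↦ by simp [pres.isColimit.fac_assoc, hl]⟩

variable [HasBinaryCoproducts C]

theorem isClosedUnderColimitsOfShape_colimitsOfShape_walkingParallelPair {Q : ObjectProperty C}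
    [Q.IsClosedUnderBinaryCoproducts] (hQ : Q ≤ regularProjective C) :
    (Q.colimitsOfShape WalkingParallelPair).IsClosedUnderColimitsOfShape WalkingParallelPair where
  colimitsOfShape_le X hX := by
    simp only [colimitsOfShape_walkingParallelPair_iff] at hX ⊢
    obtain ⟨E', E, u, v, q, wq, ⟨_, R, _, _, ε, _, _, hR, ⟨hε⟩⟩,
      ⟨B, A, f, g, p, wp, hB, hA, ⟨hp⟩⟩, ⟨hq⟩⟩ := hX
    have := isRegularEpi_of_isColimit_cofork hp
    have : Epi ε := epi_of_isColimit_cofork hε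
    obtain ⟨l, hl⟩ := hQ R hR p (ε ≫ u)
    obtain ⟨m, hm⟩ := hQ R hR p (ε ≫ v)
    obtain ⟨w, hw⟩ := exists_isColimit_cofork_comp hp hq hl hm
    exact ⟨_, _, _, _, _, w, Q.prop_coprod _ _ hB hR, hA, hw⟩

end RegularProjective

section Closure

variable {C : Type u} [Category.{v} C]

lemma isClosedUnderColimitsOfShape_colimitsOfShape_of_discrete (Q : ObjectProperty C)
    (J : Type*) [Category* J] [HasColimitsOfShape J C] (I : Type*)
    [HasColimitsOfShape (Discrete I) C] [Q.IsClosedUnderColimitsOfShape (Discrete I)] :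
    (Q.colimitsOfShape J).IsClosedUnderColimitsOfShape (Discrete I) where
  colimitsOfShape_le := by
    rintro X ⟨pres⟩
    have p (i : Discrete I) : Q.ColimitOfShape J (pres.diag.obj i) := (pres.prop_diag_obj i).some
    let D : Discrete I ⥤ J ⥤ C := Discrete.functor fun i ↦ (p ⟨i⟩).diag
    let e : D ⋙ colim ≅ pres.diag := Discrete.natIso fun i ↦
      (colimit.isColimit _).coconePointUniqueUpToIso (p i).isColimit
    have hD : Q.colimitsOfShape J (colimit (colimit D)) :=
      ⟨.colimit _ fun j ↦ Q.prop_of_isColimit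
        (isColimitOfPreserves ((evaluation J C).obj j) (colimit.isColimit D))
        fun i ↦ (p i).prop_diag_obj j⟩
    have : HasColimit pres.diag := pres.hasColimit
    exact (Q.colimitsOfShape J).prop_of_iso
      (preservesColimitIso colim D ≪≫ HasColimit.isoOfNatIso e ≪≫
        (colimit.isColimit _).coconePointUniqueUpToIso pres.isColimit) hD

open HasColimitOfHasCoproductsOfHasCoequalizers in
lemma isClosedUnderColimitsOfShape_of_discrete_of_walkingParallelPair (P : ObjectProperty C)
    (J : Type w) [SmallCategory J] [HasCoequalizers C]
    [HasColimitsOfShape (Discrete J) C] [HasColimitsOfShape (Discrete (Σ p : J × J, p.1 ⟶ p.2)) C]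
    [P.IsClosedUnderColimitsOfShape (Discrete J)]
    [P.IsClosedUnderColimitsOfShape (Discrete (Σ p : J × J, p.1 ⟶ p.2))]
    [P.IsClosedUnderColimitsOfShape WalkingParallelPair] :
    P.IsClosedUnderColimitsOfShape J where
  colimitsOfShape_le := by
    rintro X ⟨pres⟩
    let F := pres.diag
    let s : (∐ fun f : Σ p : J × J, p.1 ⟶ p.2 ↦ F.obj f.1.1) ⟶ ∐ F.obj :=
      Sigma.desc fun f ↦ F.map f.2 ≫ Sigma.ι F.obj f.1.2
    let t : (∐ fun f : Σ p : J × J, p.1 ⟶ p.2 ↦ F.obj f.1.1) ⟶ ∐ F.obj :=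
      Sigma.desc fun f ↦ Sigma.ι F.obj f.1.1
    have hc := buildIsColimit (F := F) s t (by simp [s]) (by simp [t]) (colimit.isColimit _)
      (colimit.isColimit _) (coequalizerIsCoequalizer s t)
    have hst : P (coequalizer s t) := P.prop_colimit _ <| by
      rintro (_ | _)
      exacts [P.prop_colimit _ fun f ↦ pres.prop_diag_obj _,
        P.prop_colimit _ fun j ↦ pres.prop_diag_obj _]
    exact P.prop_of_iso (hc.coconePointUniqueUpToIso pres.isColimit) hst

/-- The objects that are coproducts of families of objects satisfying `P`, indexed by types in the
universe of morphisms of `C`. For `P` the compact projective objects, these are the objects in terms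
of which every object of `C` is presented. -/
def smallCoproducts (P : ObjectProperty C) : ObjectProperty C :=
  fun X ↦ ∃ (I : Type v) (f : I → C) (inj : ∀ i, f i ⟶ X),
    (∀ i, P (f i)) ∧ Nonempty (IsColimit (Cofan.mk X inj))

lemma le_smallCoproducts (P : ObjectProperty C) : P ≤ smallCoproducts P := fun X hX ↦
  ⟨PUnit, fun _ ↦ X, fun _ ↦ 𝟙 X, fun _ ↦ hX,
    ⟨Cofan.IsColimit.mk _ (fun s ↦ s.inj ⟨⟩) (by simp) (fun s m hm ↦ by simpa using hm ⟨⟩)⟩⟩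

lemma smallCoproducts_le {P Q : ObjectProperty C} (h : P ≤ Q)
    [∀ I : Type v, Q.IsClosedUnderColimitsOfShape (Discrete I)] : smallCoproducts P ≤ Q := by
  rintro X ⟨I, f, inj, hf, ⟨hc⟩⟩
  exact Q.prop_of_isColimit hc fun i ↦ h _ (hf i.as)

instance isClosedUnderColimitsOfShape_discrete_smallCoproducts (P : ObjectProperty C)
    (I : Type v) : (smallCoproducts P).IsClosedUnderColimitsOfShape (Discrete I) where
  colimitsOfShape_le := by
    rintro X ⟨pres⟩
    choose J f inj hf hc using fun i ↦ pres.prop_diag_obj ⟨i⟩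
    have hX := (IsColimit.precomposeInvEquiv Discrete.natIsoFunctor pres.cocone).symm pres.isColimit
    exact ⟨Σ i, J i, fun p ↦ f p.1 p.2, _, fun p ↦ hf p.1 p.2,
      ⟨Cofan.isColimitTrans _ hX inj fun i ↦ (hc i).some⟩⟩

instance isClosedUnderBinaryCoproducts_smallCoproducts (P : ObjectProperty C) :
    (smallCoproducts P).IsClosedUnderBinaryCoproducts :=
  .of_equivalence (Discrete.equivalence Equiv.ulift.{v})

lemma smallCoproducts_le_ind [HasColimitsOfSize.{v, v} C] (P : ObjectProperty C)
    [P.IsClosedUnderFiniteCoproducts] : smallCoproducts P ≤ ObjectProperty.ind.{v} P := by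
  rintro X ⟨I, f, inj, hf, ⟨hc⟩⟩
  exact (ObjectProperty.ind.{v} P).prop_of_iso ((colimit.isColimit _).coconePointUniqueUpToIso hc)
    ⟨Finset (Discrete I), inferInstance, inferInstance,
      { diag := _
        ι := _
        isColimit := CoproductsFromFiniteFiltered.isColimitFiniteSubproductsCocone f },
      fun S ↦ P.prop_coproduct (J := S) fun i ↦ hf i.1.as⟩

end Closure

section CompactProjective

variable {C : Type u} [Category.{v} C]

lemma nonempty_preservesColimit_parallelPair_coyoneda_iff (X : C) {Y Z Q : C} {f g : Y ⟶ Z}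
    {π : Z ⟶ Q} {w : f ≫ π = g ≫ π} (h : IsColimit (Cofork.ofπ π w)) :
    Nonempty (PreservesColimit (parallelPair f g) (coyoneda.obj (op X))) ↔
      (∀ t : X ⟶ Q, ∃ a : X ⟶ Z, a ≫ π = t) ∧
        ∀ (T : Type v) (φ : (X ⟶ Z) → T), (∀ k : X ⟶ Y, φ (k ≫ f) = φ (k ≫ g)) →
          ∀ a b : X ⟶ Z, a ≫ π = b ≫ π → φ a = φ b := by
  constructor
  · rintro ⟨_⟩
    have hF := isColimitCoforkMapOfIsColimit (coyoneda.obj (op X)) w h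
    have : Epi ((coyoneda.obj (op X)).map π) := epi_of_isColimit_cofork hF
    refine ⟨(epi_iff_surjective _).1 this, fun T φ hφ a b hab ↦ ?_⟩
    obtain ⟨ψ, hψ, -⟩ := Cofork.IsColimit.existsUnique hF (↾φ) (by ext k; exact hφ k)
    have hψ' (c : X ⟶ Z) : ψ (c ≫ π) = φ c := ConcreteCategory.congr_hom hψ c
    rw [← hψ', hab, hψ']
  · rintro ⟨hsurj, hquot⟩
    choose σ hσ using hsurj
    refine ⟨preservesColimit_of_preserves_colimit_cocone h ((isColimitMapCoconeCoforkEquiv _ w).symm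
      (((nonempty_isColimit_cofork_iff _).2 fun T φ hφ ↦ ⟨↾(φ ∘ σ), ?_, fun ψ hψ ↦ ?_⟩).some))⟩
    · ext a
      exact hquot T φ (ConcreteCategory.congr_hom hφ) _ _ (hσ _)
    · ext t
      exact (congrArg ψ (hσ t)).symm.trans (ConcreteCategory.congr_hom hψ (σ t))

lemma preservesColimit_parallelPair_coyoneda_of_isColimit_binaryCofan {X₁ X₂ X : C}
    {inl : X₁ ⟶ X} {inr : X₂ ⟶ X} (hX : IsColimit (BinaryCofan.mk inl inr)) {Y Z : C}
    {f g : Y ⟶ Z} {s : Z ⟶ Y} (hf : s ≫ f = 𝟙 Z) (hg : s ≫ g = 𝟙 Z) [HasCoequalizer f g]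
    (h₁ : Nonempty (PreservesColimit (parallelPair f g) (coyoneda.obj (op X₁))))
    (h₂ : Nonempty (PreservesColimit (parallelPair f g) (coyoneda.obj (op X₂)))) :
    Nonempty (PreservesColimit (parallelPair f g) (coyoneda.obj (op X))) := by
  have hπ := coequalizerIsCoequalizer f g
  rw [nonempty_preservesColimit_parallelPair_coyoneda_iff _ hπ] at h₁ h₂ ⊢
  obtain ⟨hsurj₁, hquot₁⟩ := h₁
  obtain ⟨hsurj₂, hquot₂⟩ := h₂
  let pair {W : C} (a₁ : X₁ ⟶ W) (a₂ : X₂ ⟶ W) : X ⟶ W := hX.desc (BinaryCofan.mk a₁ a₂)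
  have inl_pair {W : C} (a₁ : X₁ ⟶ W) (a₂ : X₂ ⟶ W) : inl ≫ pair a₁ a₂ = a₁ :=
    hX.fac _ ⟨.left⟩
  have inr_pair {W : C} (a₁ : X₁ ⟶ W) (a₂ : X₂ ⟶ W) : inr ≫ pair a₁ a₂ = a₂ :=
    hX.fac _ ⟨.right⟩
  have pair_inl_inr {W : C} (a : X ⟶ W) : pair (inl ≫ a) (inr ≫ a) = a :=
    BinaryCofan.IsColimit.hom_ext hX (inl_pair _ _) (inr_pair _ _)
  have pair_comp {W W' : C} (a₁ : X₁ ⟶ W) (a₂ : X₂ ⟶ W) (k : W ⟶ W') :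
      pair a₁ a₂ ≫ k = pair (a₁ ≫ k) (a₂ ≫ k) := by
    rw [← pair_inl_inr (pair a₁ a₂ ≫ k), reassoc_of% inl_pair, reassoc_of% inr_pair]
  refine ⟨fun t ↦ ?_, fun T φ hφ a b hab ↦ ?_⟩
  · obtain ⟨a₁, ha₁⟩ := hsurj₁ (inl ≫ t)
    obtain ⟨a₂, ha₂⟩ := hsurj₂ (inr ≫ t)
    exact ⟨pair a₁ a₂, by rw [pair_comp, ha₁, ha₂, pair_inl_inr]⟩
  · have hφ_pair (k₁ : X₁ ⟶ Y) (k₂ : X₂ ⟶ Y) :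
        φ (pair (k₁ ≫ f) (k₂ ≫ f)) = φ (pair (k₁ ≫ g) (k₂ ≫ g)) := by
      rw [← pair_comp, ← pair_comp, hφ]
    -- The section `s` lets one component vary while the other is kept fixed.
    calc φ a = φ (pair (inl ≫ a) (inr ≫ a)) := by rw [pair_inl_inr]
      _ = φ (pair (inl ≫ b) (inr ≫ a)) :=
        hquot₁ T (fun k ↦ φ (pair k (inr ≫ a)))
          (fun k ↦ by simpa [hf, hg] using hφ_pair k ((inr ≫ a) ≫ s)) _ _ (by simp [hab])
      _ = φ (pair (inl ≫ b) (inr ≫ b)) :=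
        hquot₂ T (fun k ↦ φ (pair (inl ≫ b) k))
          (fun k ↦ by simpa [hf, hg] using hφ_pair ((inl ≫ b) ≫ s) k) _ _ (by simp [hab])
      _ = φ b := by rw [pair_inl_inr]

lemma isCompactObj_iff_isFinitelyPresentable {X : C} :
    IsCompactObj C X ↔ ObjectProperty.isFinitelyPresentable.{v} C X := by
  rw [ObjectProperty.isFinitelyPresentable, isFinitelyPresentable_iff_preservesFilteredColimits]
  exact ⟨fun h ↦ ⟨fun J _ _ ↦ (h J).some⟩, fun h J _ _ ↦ ⟨inferInstance⟩⟩

instance isClosedUnderColimitsOfShape_isFinitelyPresentable (J : Type) [SmallCategory J]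
    [FinCategory J] :
    (ObjectProperty.isFinitelyPresentable.{v} C).IsClosedUnderColimitsOfShape J :=
  have := Cardinal.fact_isRegular_aleph0
  isClosedUnderColimitsOfShape_isCardinalPresentable _
    (hasCardinalLT_aleph0_iff.{v} (Arrow J) |>.2 inferInstance)

lemma colimitsOfShape_le_isFinitelyPresentable {P : ObjectProperty C}
    (hP : P ≤ ObjectProperty.isFinitelyPresentable.{v} C) (J : Type) [SmallCategory J]
    [FinCategory J] :
    P.colimitsOfShape J ≤ ObjectProperty.isFinitelyPresentable.{v} C :=
  (ObjectProperty.colimitsOfShape_monotone J hP).trans (ObjectProperty.colimitsOfShape_le _ J)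

/-- The compact projective objects of `C`, bundled as an `ObjectProperty` in order to speak of their
closure properties. -/
def compactProjective (C : Type u) [Category.{v} C] : ObjectProperty C :=
  IsCompactProjectiveObj C

lemma compactProjective_le_isFinitelyPresentable :
    compactProjective C ≤ ObjectProperty.isFinitelyPresentable.{v} C :=
  fun _ h ↦ isCompactObj_iff_isFinitelyPresentable.1 h.1

instance isClosedUnderColimitsOfShape_pempty_compactProjective [HasCoequalizers C] :
    (compactProjective C).IsClosedUnderColimitsOfShape (Discrete.{0} PEmpty.{1}) where
  colimitsOfShape_le := by
    rintro X ⟨pres⟩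
    have hX (W : C) (a b : X ⟶ W) : a = b := pres.isColimit.hom_ext fun i ↦ i.as.elim
    refine ⟨isCompactObj_iff_isFinitelyPresentable.2
      ((ObjectProperty.isFinitelyPresentable.{v} C).prop_of_isColimit pres.isColimit
        fun i ↦ i.as.elim),
      fun f g _ _ _ ↦ (nonempty_preservesColimit_parallelPair_coyoneda_iff _
        (coequalizerIsCoequalizer f g)).2 ⟨fun t ↦ ?_, fun _ _ _ a b _ ↦ by rw [hX _ a b]⟩⟩
    exact ⟨pres.isColimit.desc ⟨_, Discrete.natTrans fun i ↦ i.as.elim⟩, hX _ _ _⟩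

instance isClosedUnderBinaryCoproducts_compactProjective [HasCoequalizers C] :
    (compactProjective C).IsClosedUnderBinaryCoproducts where
  colimitsOfShape_le := by
    rintro X ⟨pres⟩
    have hX := (IsColimit.precomposeInvEquiv (diagramIsoPair pres.diag) pres.cocone).symm
      pres.isColimit
    refine ⟨isCompactObj_iff_isFinitelyPresentable.2
      ((ObjectProperty.isFinitelyPresentable.{v} C).prop_of_isColimit pres.isColimit fun i ↦
        compactProjective_le_isFinitelyPresentable _ (pres.prop_diag_obj i)),
      fun f g s hf hg ↦ preservesColimit_parallelPair_coyoneda_of_isColimit_binaryCofan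
        (hX.ofIsoColimit (isoBinaryCofanMk _)) hf hg
        ((pres.prop_diag_obj ⟨.left⟩).2 f g s hf hg)
        ((pres.prop_diag_obj ⟨.right⟩).2 f g s hf hg)⟩

instance isClosedUnderFiniteCoproducts_compactProjective [HasCoequalizers C]
    [HasFiniteCoproducts C] : (compactProjective C).IsClosedUnderFiniteCoproducts :=
  .mk'

lemma compactProjective_le_regularProjective [HasBinaryCoproducts C] :
    compactProjective C ≤ regularProjective C := by
  rintro P hP Y Z p _ h
  obtain ⟨W, f, g, w, hp⟩ := IsRegularEpi.getStruct p
  obtain ⟨_, ⟨hp'⟩⟩ := exists_isColimit_cofork_coprod_desc_id hp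
  exact ((nonempty_preservesColimit_parallelPair_coyoneda_iff P hp').1
    (hP.2 _ _ coprod.inr (coprod.inr_desc _ _) (coprod.inr_desc _ _))).1 h

end CompactProjective

section Filtered

variable {C : Type u} [Category.{v} C]

lemma exists_colimitPresentation_of_isColimit_cofork [HasCoequalizers C] {J : Type*} [Category* J]
    {A B X : C} {presA : ColimitPresentation J A} {presB : ColimitPresentation J B}
    {α β : presB.diag ⟶ presA.diag} {f g : B ⟶ A}
    (hf : ∀ j, presB.ι.app j ≫ f = α.app j ≫ presA.ι.app j)
    (hg : ∀ j, presB.ι.app j ≫ g = β.app j ≫ presA.ι.app j)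
    {p : A ⟶ X} {w : f ≫ p = g ≫ p} (hp : IsColimit (Cofork.ofπ p w)) :
    ∃ pres : ColimitPresentation J X, ∀ j,
      ∃ (q : presA.diag.obj j ⟶ pres.diag.obj j) (wq : α.app j ≫ q = β.app j ≫ q),
        Nonempty (IsColimit (Cofork.ofπ q wq)) := by
  let ε : presA.diag ⟶ coequalizer α β := coequalizer.π α β
  have hε (j : J) := isColimitCoforkMapOfIsColimit ((evaluation J C).obj j) _
    (coequalizerIsCoequalizer α β)
  have (j : J) : Epi (ε.app j) := epi_of_isColimit_cofork (hε j)
  have : Epi p := epi_of_isColimit_cofork hp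
  let κ : coequalizer α β ⟶ (Functor.const J).obj X :=
    coequalizer.desc (presA.ι ≫ (Functor.const J).map p) <| by
      ext j
      simp [← reassoc_of% hf, ← reassoc_of% hg, w]
  have hκ (j : J) : ε.app j ≫ κ.app j = presA.ι.app j ≫ p :=
    NatTrans.congr_app (coequalizer.π_desc _ _) j
  have hX (s : Cocone (coequalizer α β)) : ∃! t : X ⟶ s.pt, ∀ j, κ.app j ≫ t = s.ι.app j := by
    let k : A ⟶ s.pt := presA.isColimit.desc ⟨s.pt, ε ≫ s.ι⟩
    have hk (j : J) : presA.ι.app j ≫ k = ε.app j ≫ s.ι.app j :=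
      presA.isColimit.fac ⟨s.pt, ε ≫ s.ι⟩ j
    have hε_w (j : J) : α.app j ≫ ε.app j = β.app j ≫ ε.app j :=
      NatTrans.congr_app (coequalizer.condition α β) j
    obtain ⟨t, ht : p ≫ t = k, ht_unique⟩ := Cofork.IsColimit.existsUnique hp k <|
      presB.isColimit.hom_ext fun j ↦ by
        simp [reassoc_of% hf, reassoc_of% hg, hk, reassoc_of% hε_w]
    refine ⟨t, fun j ↦ ?_, fun t' ht' ↦ ht_unique t' (presA.isColimit.hom_ext fun j ↦ ?_)⟩
    · rw [← cancel_epi (ε.app j), reassoc_of% hκ, ht, hk]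
    · simp [← reassoc_of% hκ, ht', hk]
  exact ⟨⟨_, κ, .ofExistsUnique hX⟩, fun j ↦ ⟨ε.app j, _, ⟨hε j⟩⟩⟩

variable {P : ObjectProperty C}

lemma ind_colimitsOfShape_of_isColimit_cofork [HasCoequalizers C] {A B X : C}
    [IsFinitelyPresentable.{v} B] {f g : B ⟶ A} {p : A ⟶ X} {w : f ≫ p = g ≫ p}
    (hp : IsColimit (Cofork.ofπ p w)) (hB : P B) (hA : ObjectProperty.ind.{v} P A) :
    ObjectProperty.ind.{v} (P.colimitsOfShape WalkingParallelPair) X := by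
  obtain ⟨J, _, _, presA, hpresA⟩ := hA
  obtain ⟨j₁, f₁, hf₁⟩ := IsFinitelyPresentable.exists_hom_of_isColimit presA.isColimit f
  obtain ⟨j₂, g₂, hg₂⟩ := IsFinitelyPresentable.exists_hom_of_isColimit presA.isColimit g
  let j₀ := IsFiltered.max j₁ j₂
  have := IsFiltered.isConnected (Under j₀)
  let lift {j : J} (u : j ⟶ j₀) (h : B ⟶ presA.diag.obj j) :
      (Functor.const (Under j₀)).obj B ⟶ Under.forget j₀ ⋙ presA.diag :=
    { app := fun k ↦ h ≫ presA.diag.map (u ≫ k.hom)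
      naturality := fun k l φ ↦ by simp [← Functor.map_comp] }
  have lift_ι {j : J} (u : j ⟶ j₀) (h : B ⟶ presA.diag.obj j) (k : Under j₀) :
      (lift u h).app k ≫ presA.ι.app k.right = h ≫ presA.ι.app j := by
    simp [lift]
  obtain ⟨pres, hpres⟩ := exists_colimitPresentation_of_isColimit_cofork
    (presA := presA.reindex (Under.forget j₀))
    (presB := ⟨_, 𝟙 _, isColimitConstCocone (Under j₀) B⟩)
    (α := lift (IsFiltered.leftToMax j₁ j₂) f₁) (β := lift (IsFiltered.rightToMax j₁ j₂) g₂)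
    (fun k ↦ (Category.id_comp f).trans (hf₁.symm.trans (lift_ι _ f₁ k).symm))
    (fun k ↦ (Category.id_comp g).trans (hg₂.symm.trans (lift_ι _ g₂ k).symm)) hp
  refine ⟨Under j₀, inferInstance, inferInstance, pres, fun k ↦ ?_⟩
  obtain ⟨q, wq, hq⟩ := hpres k
  exact (colimitsOfShape_walkingParallelPair_iff _ _).2
    ⟨_, _, _, _, q, wq, hB, hpresA k.right, hq⟩

theorem colimitsOfShape_walkingParallelPair_ind_le [HasCoequalizers C]
    (hP : P ≤ ObjectProperty.isFinitelyPresentable.{v} C) :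
    (ObjectProperty.ind.{v} P).colimitsOfShape WalkingParallelPair ≤
      ObjectProperty.ind.{v} (P.colimitsOfShape WalkingParallelPair) := by
  intro X hX
  obtain ⟨B, A, f, g, p, w, ⟨J, _, _, presB, hB⟩, hA, ⟨hp⟩⟩ :=
    (colimitsOfShape_walkingParallelPair_iff _ _).1 hX
  rw [← ObjectProperty.ind_ind (colimitsOfShape_le_isFinitelyPresentable hP WalkingParallelPair)]
  have := IsFiltered.isConnected J
  obtain ⟨pres, hpres⟩ := exists_colimitPresentation_of_isColimit_cofork
    (presA := ⟨_, 𝟙 _, isColimitConstCocone J A⟩) (presB := presB)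
    (α := presB.ι ≫ (Functor.const J).map f) (β := presB.ι ≫ (Functor.const J).map g)
    (fun j ↦ (Category.comp_id _).symm) (fun j ↦ (Category.comp_id _).symm) hp
  refine ⟨J, inferInstance, inferInstance, pres, fun j ↦ ?_⟩
  obtain ⟨q, wq, ⟨hq⟩⟩ := hpres j
  have : IsFinitelyPresentable.{v} (presB.diag.obj j) := hP _ (hB j)
  exact ind_colimitsOfShape_of_isColimit_cofork hq (hB j) hA

lemma prop_of_ind_of_isFinitelyPresentable [P.IsStableUnderRetracts] {X : C}
    [IsFinitelyPresentable.{v} X] (hX : ObjectProperty.ind.{v} P X) : P X := by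
  obtain ⟨J, _, _, pres, hpres⟩ := hX
  obtain ⟨j, i, hi⟩ := IsFinitelyPresentable.exists_hom_of_isColimit pres.isColimit (𝟙 X)
  exact P.prop_of_retract ⟨i, pres.ι.app j, hi⟩ (hpres j)

end Filtered

section Generation

variable {C : Type u} [Category.{v} C]

lemma eq_top_of_generatedByCompactProjectives (hgen : GeneratedByCompactProjectives C)
    {P : ObjectProperty C}
    (hP : ∀ (J : Type v) [SmallCategory J], P.IsClosedUnderColimitsOfShape J)
    (hCP : compactProjective C ≤ P) : P = ⊤ :=
  top_le_iff.1 fun X _ ↦ hgen {Y | P Y}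
    (fun J _ _ _ hc h ↦ have := hP J; P.prop_of_isColimit hc h) hCP X

variable [HasColimitsOfSize.{v, v} C]

theorem colimitsOfShape_walkingParallelPair_smallCoproducts_eq_top
    (hgen : GeneratedByCompactProjectives C) :
    (smallCoproducts (compactProjective C)).colimitsOfShape WalkingParallelPair = ⊤ := by
  have := isClosedUnderColimitsOfShape_colimitsOfShape_walkingParallelPair
    (smallCoproducts_le (compactProjective_le_regularProjective (C := C)))
  have (I : Type v) := isClosedUnderColimitsOfShape_colimitsOfShape_of_discrete
    (smallCoproducts (compactProjective C)) WalkingParallelPair I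
  exact eq_top_of_generatedByCompactProjectives hgen
    (fun J _ ↦ isClosedUnderColimitsOfShape_of_discrete_of_walkingParallelPair _ J)
    ((le_smallCoproducts _).trans (le_colimitsOfShape_of_isConnected _ _))

theorem isFinitelyPresentable_eq_colimitsOfShape_compactProjective
    (hgen : GeneratedByCompactProjectives C) :
    ObjectProperty.isFinitelyPresentable.{v} C =
      (compactProjective C).colimitsOfShape WalkingParallelPair := by
  have := isClosedUnderColimitsOfShape_colimitsOfShape_walkingParallelPair
    (compactProjective_le_regularProjective (C := C))
  refine le_antisymm (fun X (_ : IsFinitelyPresentable.{v} X) ↦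
    prop_of_ind_of_isFinitelyPresentable ?_) <|
    colimitsOfShape_le_isFinitelyPresentable compactProjective_le_isFinitelyPresentable _
  refine colimitsOfShape_walkingParallelPair_ind_le compactProjective_le_isFinitelyPresentable X
    (ObjectProperty.colimitsOfShape_monotone _ (smallCoproducts_le_ind _) X ?_)
  simp [colimitsOfShape_walkingParallelPair_smallCoproducts_eq_top hgen]

end Generation

/-- In a cocomplete category generated under colimits by its compact projective objects,
an object is compact iff it is a reflexive coequalizer of compact projective objects;
in particular any coequalizer of a parallel pair between compact projectives is compact. -/
theorem compact_iff_reflexive_coequalizer_of_compactProjectives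
    (C : Type u) [Category.{v} C] [HasColimits C]
    (hgen : GeneratedByCompactProjectives C) :
    (∀ X : C, IsCompactObj C X ↔
      ∃ (Y Z : C) (f g : Y ⟶ Z) (s : Z ⟶ Y) (π : Z ⟶ X) (hπ : f ≫ π = g ≫ π),
        s ≫ f = 𝟙 Z ∧ s ≫ g = 𝟙 Z ∧
        IsCompactProjectiveObj C Y ∧ IsCompactProjectiveObj C Z ∧
        Nonempty (IsColimit (Cofork.ofπ π hπ))) ∧
    (∀ (X Y Z : C) (f g : Y ⟶ Z) (π : Z ⟶ X) (hπ : f ≫ π = g ≫ π),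
      IsCompactProjectiveObj C Y → IsCompactProjectiveObj C Z →
      Nonempty (IsColimit (Cofork.ofπ π hπ)) → IsCompactObj C X) := by
  have hcompact (X : C) : IsCompactObj C X ↔
      ∃ (Y Z : C) (f g : Y ⟶ Z) (π : Z ⟶ X) (hπ : f ≫ π = g ≫ π),
        IsCompactProjectiveObj C Y ∧ IsCompactProjectiveObj C Z ∧
        Nonempty (IsColimit (Cofork.ofπ π hπ)) := by
    rw [isCompactObj_iff_isFinitelyPresentable,
      isFinitelyPresentable_eq_colimitsOfShape_compactProjective hgen,
      colimitsOfShape_walkingParallelPair_iff]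
    rfl
  refine ⟨fun X ↦ ⟨fun hX ↦ ?_, ?_⟩, fun X Y Z f g π hπ hY hZ hc ↦
    (hcompact X).2 ⟨Y, Z, f, g, π, hπ, hY, hZ, hc⟩⟩
  · obtain ⟨Y, Z, f, g, π, _, hY, hZ, ⟨hc⟩⟩ := (hcompact X).1 hX
    obtain ⟨hπ, hc'⟩ := exists_isColimit_cofork_coprod_desc_id hc
    exact ⟨_, Z, _, _, coprod.inr, π, hπ, coprod.inr_desc _ _, coprod.inr_desc _ _,
      (compactProjective C).prop_coprod _ _ hY hZ, hZ, hc'⟩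
  · rintro ⟨Y, Z, f, g, _, π, hπ, -, -, hY, hZ, hc⟩
    exact (hcompact X).2 ⟨Y, Z, f, g, π, hπ, hY, hZ, hc⟩
end

section
/- The forgetful functor from the category CommRing of commutative rings to the category Set of sets preserves reflexive coequalizers: if f, g : B ⇉ C is a parallel pair of ring homomorphisms admitting a common section s : C → B (f ∘ s = g ∘ s = id_C), then the coequalizer of (f, g) in CommRing has underlying set the coequalizer of the underlying pair of maps of sets (namely C modulo the equivalence relation generated by f(b) ∼ g(b)). -/
open CategoryTheory CategoryTheory.Limits

universe u

/-!
The coequalizer of `f, g : B ⇉ C` in commutative rings is the quotient of `C` by the ring congruence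
generated by `f b ∼ g b`, whereas in sets it is the quotient by the equivalence relation generated
by the same pairs. The relation `{(f b, g b)}` is compatible with the ring operations, and for a
reflexive pair it is reflexive. Since rings have the Mal'cev operation `x - y + z`, every reflexive
compatible relation is a congruence, so both quotients are by `{(f b, g b)}` itself.
-/

section Congruence

variable {B C F : Type*} [NonUnitalNonAssocRing B] [NonUnitalNonAssocRing C]
  [FunLike F B C] [NonUnitalRingHomClass F B C]

/-- The relation `{(f b, g b) | b ∈ B}` as a ring congruence on `C`, for homomorphisms `f` and `g`
of (possibly non-unital, non-associative) rings such that it is reflexive. -/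
def ringConOfReflexivePair (f g : F) (hfg : ∀ c, ∃ b, f b = c ∧ g b = c) : RingCon C where
  r x y := ∃ b, f b = x ∧ g b = y
  iseqv :=
    { refl := hfg
      symm := by
        rintro _ _ ⟨b, rfl, rfl⟩
        obtain ⟨p, hfp, hgp⟩ := hfg (f b)
        obtain ⟨q, hfq, hgq⟩ := hfg (g b)
        exact ⟨p - b + q, by simp [hfp, hfq], by simp [hgp, hgq]⟩
      trans := by
        rintro _ _ _ ⟨b, rfl, rfl⟩ ⟨b', hb', rfl⟩
        obtain ⟨q, hfq, hgq⟩ := hfg (g b)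
        exact ⟨b - q + b', by simp [hfq, hb'], by simp [hgq]⟩ }
  add' := by
    rintro _ _ _ _ ⟨b, rfl, rfl⟩ ⟨b', rfl, rfl⟩
    exact ⟨b + b', map_add f b b', map_add g b b'⟩
  mul' := by
    rintro _ _ _ _ ⟨b, rfl, rfl⟩ ⟨b', rfl, rfl⟩
    exact ⟨b * b', map_mul f b b', map_mul g b b'⟩

theorem ringConGen_coequalizerRel_iff {f g : F} (hfg : ∀ c, ∃ b, f b = c ∧ g b = c) {x y : C} :
    ringConGen (Function.Coequalizer.Rel f g) x y ↔ ∃ b, f b = x ∧ g b = y := by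
  constructor
  · have rel_le : Function.Coequalizer.Rel f g ≤ ⇑(ringConOfReflexivePair f g hfg) := by
      rintro _ _ ⟨b⟩
      exact ⟨b, rfl, rfl⟩
    exact fun hxy ↦ RingCon.ringConGen_le.2 rel_le hxy
  · rintro ⟨b, rfl, rfl⟩
    exact RingCon.le_ringConGen _ _ ⟨b⟩

end Congruence

section CommRingCat

variable {B C : CommRingCat.{u}} (f g : B ⟶ C)

/-- The cofork exhibiting the quotient of `C` by the ring congruence generated by `f b ∼ g b` as
the coequalizer of `f` and `g` in `CommRingCat`. -/
def commRingCatCoequalizerCofork : Cofork f g :=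
  Cofork.ofπ (CommRingCat.ofHom (ringConGen (Function.Coequalizer.Rel f g)).mk') <| by
    ext b
    exact (RingCon.eq _).2 (RingCon.le_ringConGen _ _ ⟨b⟩)

theorem ringConGen_coequalizerRel_le_ker (s : Cofork f g) :
    ringConGen (Function.Coequalizer.Rel f g) ≤ RingCon.ker s.π.hom := by
  refine RingCon.ringConGen_le.2 ?_
  rintro _ _ ⟨b⟩
  exact ConcreteCategory.congr_hom s.condition b

/-- The universal property of `commRingCatCoequalizerCofork`: a ring homomorphism coequalizing `f`
and `g` descends to the quotient because its kernel is a ring congruence. -/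
def isColimitCommRingCatCoequalizerCofork : IsColimit (commRingCatCoequalizerCofork f g) :=
  Cofork.IsColimit.mk _
    (fun s ↦ CommRingCat.ofHom (RingCon.lift _ s.π.hom (ringConGen_coequalizerRel_le_ker f g s)))
    (fun _ ↦ rfl)
    (fun _ _ hm ↦ CommRingCat.hom_ext
      (RingCon.Quotient.hom_ext (congrArg CommRingCat.Hom.hom hm)))

end CommRingCat

theorem bijective_coequalizerDesc {α β γ : Type*} {f g : α → β} {u : β → γ} (w : u ∘ f = u ∘ g)
    (hu : Function.Surjective u)
    (hfib : ∀ y y', u y = u y' → Function.Coequalizer.mk f g y = Function.Coequalizer.mk f g y') :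
    Function.Bijective (Function.Coequalizer.desc f g u w) := by
  constructor
  · intro q q' hqq'
    obtain ⟨y, rfl⟩ := Function.Coequalizer.mk_surjective f g q
    obtain ⟨y', rfl⟩ := Function.Coequalizer.mk_surjective f g q'
    exact hfib y y' hqq'
  · intro z
    obtain ⟨y, rfl⟩ := hu z
    exact ⟨Function.Coequalizer.mk f g y, rfl⟩

/-- A cofork of types whose projection is surjective, and identifies only elements that are
identified in the set-theoretic coequalizer, is a coequalizer. -/
noncomputable def isColimitCoforkOfSurjective {X Y Z : Type u} {f g : X ⟶ Y} {p : Y ⟶ Z}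
    (w : f ≫ p = g ≫ p) (hp : Function.Surjective p)
    (hfib : ∀ y y', p y = p y' → Function.Coequalizer.mk f g y = Function.Coequalizer.mk f g y') :
    IsColimit (Cofork.ofπ p w) :=
  have comp_eq : ⇑p ∘ ⇑f = ⇑p ∘ ⇑g := funext (ConcreteCategory.congr_hom w)
  (Types.coequalizerColimit f g).isColimit.ofIsoColimit
    (Cofork.ext (Equiv.ofBijective _ (bijective_coequalizerDesc comp_eq hp hfib)).toIso rfl)

theorem forget_commRingCat_preservesReflexiveCoequalizer_general
    {B C : CommRingCat.{u}} (f g : B ⟶ C) (hfg : ∀ c, ∃ b, f b = c ∧ g b = c) :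
    PreservesColimit (parallelPair f g) (forget CommRingCat.{u}) := by
  refine preservesColimit_of_preserves_colimit_cocone
    (isColimitCommRingCatCoequalizerCofork f g) ?_
  refine (isColimitMapCoconeCoforkEquiv (forget CommRingCat.{u}) _).symm ?_
  refine isColimitCoforkOfSurjective _ (RingCon.mk'_surjective _) fun x y hxy ↦ ?_
  obtain ⟨b, rfl, rfl⟩ : ∃ b, f.hom b = x ∧ g.hom b = y :=
    (ringConGen_coequalizerRel_iff hfg).1 ((RingCon.eq _).1 hxy)
  exact Function.Coequalizer.condition _ _ b

/-- The forgetful functor from commutative rings to sets preserves reflexive coequalizers: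
for any parallel pair `f, g : B ⇉ C` of ring homomorphisms admitting a common section `s`
(`s ≫ f = 𝟙 C` and `s ≫ g = 𝟙 C`), the coequalizer of `(f, g)` in `CommRing` is computed on
underlying sets. -/
theorem forget_commRingCat_preservesReflexiveCoequalizer
    {B C : CommRingCat.{u}} (f g : B ⟶ C) (s : C ⟶ B)
    (hf : s ≫ f = 𝟙 C) (hg : s ≫ g = 𝟙 C) :
    Nonempty (PreservesColimit (parallelPair f g) (forget CommRingCat.{u})) :=
  ⟨forget_commRingCat_preservesReflexiveCoequalizer_general f g fun c ↦
    ⟨s c, ConcreteCategory.congr_hom hf c, ConcreteCategory.congr_hom hg c⟩⟩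
end

section
/- Let R be a commutative ring and I ⊆ R an ideal contained in every maximal ideal of R. Then there exists a commutative R-algebra R̃ such that: (i) R̃ is faithfully flat over R; (ii) R̃ is a filtered colimit of flat, finitely presented R-algebras (R̃ is ind-fppf over R); (iii) the pair (R̃, I·R̃) is Henselian; and (iv) every faithfully flat, finitely presented R̃-algebra S admits an R̃-algebra homomorphism S → R̃, i.e. every fppf cover of R̃ splits. -/
universe u

/-- Data witnessing that `R̃` (the field `At`) is a faithfully flat, ind-fppf `R`-algebra
which is Henselian along `I·R̃` and over which every fppf cover splits: it is exhibited as a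
filtered colimit of flat, finitely presented `R`-algebras. -/
structure IndFppfSplittingAlgebra (R : Type u) [CommRing R] (I : Ideal R) where
  /-- the `R`-algebra `R̃` -/
  At : Type u
  [commRing : CommRing At]
  [alg : Algebra R At]
  /-- (i) `R̃` is faithfully flat over `R` -/
  faithfullyFlat : Module.FaithfullyFlat R At
  /-- the filtered index of the ind-fppf presentation -/
  ι : Type u
  [preorder : Preorder ι]
  directed : IsDirected ι (· ≤ ·)
  nonempty_ι : Nonempty ι
  /-- the directed system of flat, finitely presented `R`-algebras -/
  A : ι → Type u
  [commRingA : ∀ i, CommRing (A i)]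
  [algA : ∀ i, Algebra R (A i)]
  flatA : ∀ i, Module.Flat R (A i)
  fpA : ∀ i, Algebra.FinitePresentation R (A i)
  /-- the transition maps of the directed system -/
  t : ∀ {i j : ι}, i ≤ j → (A i →ₐ[R] A j)
  t_id : ∀ (i : ι) (x : A i), t (le_refl i) x = x
  t_comp : ∀ {i j k : ι} (hij : i ≤ j) (hjk : j ≤ k) (x : A i),
    t hjk (t hij x) = t (hij.trans hjk) x
  /-- the maps to the colimit -/
  g : ∀ i, A i →ₐ[R] At
  g_comp : ∀ {i j : ι} (h : i ≤ j) (x : A i), g j (t h x) = g i x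
  /-- (ii) `R̃` is the filtered colimit of the system: the maps to it are jointly
  surjective … -/
  g_jointly_surjective : ∀ x : At, ∃ (i : ι) (a : A i), g i a = x
  /-- … and two elements identified in `R̃` are identified already at a finite stage -/
  g_eq_eventually : ∀ (i : ι) (x y : A i), g i x = g i y → ∃ (j : ι) (h : i ≤ j), t h x = t h y
  /-- (iii) the pair `(R̃, I·R̃)` is Henselian -/
  henselian : HenselianRing At (I.map (algebraMap R At))
  /-- (iv) every faithfully flat, finitely presented `R̃`-algebra admits an `R̃`-point,
  i.e. every fppf cover of `R̃` splits -/
  splits : ∀ (S : Type u) [CommRing S] [Algebra At S],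
    Module.FaithfullyFlat At S → Algebra.FinitePresentation At S → Nonempty (S →ₐ[At] At)

/-!
Call a flat finitely presented `B`-algebra a flat cover along an ideal `I` if the image of its
spectrum contains `V(I)`. These covers form a small set up to isomorphism, so one may tensor
together finitely many of them and pass to the colimit over all finite sets; repeating this
countably many times produces `L`. A flat cover of `L` descends to a flat cover of some stage, hence
has a section over the next one. The delicate point is to descend flatness from a colimit `C` to a
finitely generated subring: by the local criterion and generic freeness, a finitely presented
algebra over a Noetherian ring `A` is flat over all sufficiently large finitely generated
`A`-subalgebras of `C` once it is flat over `C`.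

Since `V(I)` contains every maximal ideal of `R`, the flat algebra `L` is faithfully flat. The
localizations at the elements `1 + a` with `a ∈ I L` are flat covers, so `I L` lies in the Jacobson
radical. A root of `f` that is simple modulo `I L` is lifted by means of the flat cover formed by
the invertible roots of a suitable polynomial with constant term `1`. Finally, a form of Lazard's
theorem turns the iterated colimit into one directed colimit of flat finitely presented
`R`-algebras.
-/

namespace IndFppf

open TensorProduct

/-! ### The local criterion of flatness -/

section TensorInjective

variable {B : Type u} [CommRing B]

/-- `M ⊗ N → M ⊗ Y` is injective, for a submodule `N` of `Y`; when `Y` is flat this expresses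
the vanishing of `Tor₁ M (Y ⧸ N)`. -/
def TensorInjective (M : Type u) [AddCommGroup M] [Module B M] {Y : Type u} [AddCommGroup Y]
    [Module B Y] (N : Submodule B Y) : Prop :=
  Function.Injective (N.subtype.lTensor M)

/-- `M ⊗ B ⧸ p` is flat over `B ⧸ p`, expressed through the `B`-modules killed by `p`. -/
def FlatModulo (p : Ideal B) (M : Type u) [AddCommGroup M] [Module B M] : Prop :=
  ∀ ⦃Y : Type u⦄ [AddCommGroup Y] [Module B Y], Module.IsTorsionBySet B Y p →
    ∀ N : Submodule B Y, TensorInjective M N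

/-- The multiplication `p ⊗ N → p N`. -/
noncomputable def idealSMul (p : Ideal B) (N : Type u) [AddCommGroup N] [Module B N] :
    p ⊗[B] N →ₗ[B] (p • ⊤ : Submodule B N) :=
  ((TensorProduct.lid B N).toLinearMap ∘ₗ p.subtype.rTensor N).codRestrict _ fun x ↦ by
    rw [← Ideal.subtype_rTensor_range]
    exact ⟨x, rfl⟩

section Submodule

variable {M : Type u} [AddCommGroup M] [Module B M]
  {X Y : Type u} [AddCommGroup X] [AddCommGroup Y] [Module B X] [Module B Y]

lemma TensorInjective.trans {N P : Submodule B Y} (hNP : N ≤ P) (hP : TensorInjective M P)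
    (hN : TensorInjective M (N.submoduleOf P)) : TensorInjective M N := by
  let e : N ≃ₗ[B] N.submoduleOf P := (Submodule.submoduleOfEquivOfLe hNP).symm
  have hfac : N.subtype = P.subtype ∘ₗ (N.submoduleOf P).subtype ∘ₗ e.toLinearMap := rfl
  rw [TensorInjective, hfac, LinearMap.lTensor_comp, LinearMap.lTensor_comp]
  exact hP.comp (hN.comp (e.lTensor M).injective)

lemma mem_range_lTensor_inf_ker {f : X →ₗ[B] Y} {N : Submodule B X}
    (hN : TensorInjective M (N.map f)) {z : M ⊗[B] N}
    (hz : (f ∘ₗ N.subtype).lTensor M z = 0) :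
    z ∈ ((Submodule.inclusion (inf_le_left : N ⊓ f.ker ≤ N)).lTensor M).range := by
  let g : N →ₗ[B] N.map f := f.submoduleMap N
  have hfac : f ∘ₗ N.subtype = (N.map f).subtype ∘ₗ g := rfl
  have hgz : g.lTensor M z = 0 :=
    hN (by rw [← LinearMap.comp_apply, ← LinearMap.lTensor_comp, ← hfac, hz, map_zero])
  have hexact : Function.Exact (Submodule.inclusion (inf_le_left : N ⊓ f.ker ≤ N)) g := fun x ↦ by
    simp [g, Subtype.ext_iff]
  exact (lTensor_exact M hexact (f.submoduleMap_surjective N) z).1 hgz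

lemma TensorInjective.of_map {f : X →ₗ[B] Y} {N : Submodule B X}
    (hker : TensorInjective M (N ⊓ f.ker)) (hmap : TensorInjective M (N.map f)) :
    TensorInjective M N := by
  refine (injective_iff_map_eq_zero _).2 fun z hz ↦ ?_
  obtain ⟨w, rfl⟩ := mem_range_lTensor_inf_ker hmap (z := z) (by
    rw [LinearMap.lTensor_comp, LinearMap.comp_apply, hz, map_zero])
  rw [← LinearMap.comp_apply, ← LinearMap.lTensor_comp] at hz
  rw [(injective_iff_map_eq_zero _).1 hker w hz, map_zero]

end Submodule

section Ideal

variable (p : Ideal B) (N : Type u) [AddCommGroup N] [Module B N]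

lemma coe_idealSMul_tmul (a : p) (n : N) : (idealSMul p N (a ⊗ₜ n) : N) = (a : B) • n := rfl

lemma idealSMul_surjective : Function.Surjective (idealSMul p N) := by
  rintro ⟨y, hy⟩
  rw [← Ideal.subtype_rTensor_range] at hy
  obtain ⟨x, rfl⟩ := hy
  exact ⟨x, rfl⟩

variable {p N} {M L : Type u} [AddCommGroup M] [Module B M] [AddCommGroup L] [Module B L]

lemma restrict_comp_idealSMul (f : L →ₗ[B] N) :
    f.restrict (Submodule.smul_top_le_comap_smul_top p f) ∘ₗ idealSMul p L =
      idealSMul p N ∘ₗ f.lTensor p := by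
  ext a l
  simp [coe_idealSMul_tmul]

lemma mem_range_rTensor_ker_of_flat [Module.Flat B L] {ξ : M ⊗[B] (p ⊗[B] L)}
    (hξ : ((p • ⊤ : Submodule B L).subtype ∘ₗ idealSMul p L).lTensor M ξ = 0) :
    ∃ ζ : (p.subtype.lTensor M).ker ⊗[B] L,
      TensorProduct.assoc B M p L ((p.subtype.lTensor M).ker.subtype.rTensor L ζ) = ξ := by
  obtain ⟨δ, rfl⟩ := (TensorProduct.assoc B M p L).surjective ξ
  have hsquare : ((p • ⊤ : Submodule B L).subtype ∘ₗ idealSMul p L).lTensor M ∘ₗ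
      (TensorProduct.assoc B M p L).toLinearMap =
      ((TensorProduct.lid B L).lTensor M).toLinearMap ∘ₗ
        (TensorProduct.assoc B M B L).toLinearMap ∘ₗ (p.subtype.lTensor M).rTensor L := by
    ext m a l
    simp [coe_idealSMul_tmul]
  have hδ : (p.subtype.lTensor M).rTensor L δ = 0 := by
    have h := (DFunLike.congr_fun hsquare δ).symm.trans hξ
    simpa only [LinearMap.comp_apply, LinearEquiv.coe_coe, LinearEquiv.map_eq_zero_iff] using h
  obtain ⟨ζ, hζ⟩ :=
    (Module.Flat.rTensor_exact L (p.subtype.lTensor M).exact_subtype_ker_map δ).1 hδ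
  exact ⟨ζ, by rw [hζ]⟩

lemma lTensor_idealSMul_assoc_eq_zero
    (hN : ∀ η ∈ (p.subtype.lTensor M).ker, ∀ n : N,
      (idealSMul p N ∘ₗ (TensorProduct.mk B p N).flip n).lTensor M η = 0)
    (f : L →ₗ[B] N) (ζ : (p.subtype.lTensor M).ker ⊗[B] L) :
    (idealSMul p N ∘ₗ f.lTensor p).lTensor M
      (TensorProduct.assoc B M p L ((p.subtype.lTensor M).ker.subtype.rTensor L ζ)) = 0 := by
  induction ζ with
  | zero => simp
  | add x y hx hy => simp only [map_add, hx, hy, add_zero]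
  | tmul η l =>
    have hcomp : (idealSMul p N ∘ₗ f.lTensor p).lTensor M ∘ₗ
        (TensorProduct.assoc B M p L).toLinearMap ∘ₗ (TensorProduct.mk B (M ⊗[B] p) L).flip l =
        (idealSMul p N ∘ₗ (TensorProduct.mk B p N).flip (f l)).lTensor M := by
      ext m a
      simp
    exact (DFunLike.congr_fun hcomp η.1).trans (hN η.1 η.2 (f l))

lemma FlatModulo.exists_lTensor_eq_and_lTensor_eq_zero (hM : FlatModulo p M) {f : L →ₗ[B] N}
    (hf : Function.Surjective f) (ξ : M ⊗[B] (p ⊗[B] L))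
    (hξ : (f ∘ₗ (p • ⊤ : Submodule B L).subtype ∘ₗ idealSMul p L).lTensor M ξ = 0) :
    ∃ ξ' : M ⊗[B] (p ⊗[B] L),
      ((p • ⊤ : Submodule B L).subtype ∘ₗ idealSMul p L).lTensor M ξ' =
        ((p • ⊤ : Submodule B L).subtype ∘ₗ idealSMul p L).lTensor M ξ ∧
      (idealSMul p N ∘ₗ f.lTensor p).lTensor M ξ' = 0 := by
  set P : Submodule B L := p • ⊤
  rw [LinearMap.lTensor_comp] at hξ
  obtain ⟨μ, hμ⟩ := (lTensor_exact M (LinearMap.exact_subtype_ker_map f) hf _).1 hξ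
  have hμP : (P.mkQ ∘ₗ f.ker.subtype).lTensor M μ = 0 := by
    have hzero : P.mkQ ∘ₗ P.subtype ∘ₗ idealSMul p L = 0 := by
      rw [← LinearMap.comp_assoc, LinearMap.exact_subtype_mkQ P |>.linearMap_comp_eq_zero,
        LinearMap.zero_comp]
    rw [LinearMap.lTensor_comp, LinearMap.comp_apply, hμ, ← LinearMap.comp_apply,
      ← LinearMap.lTensor_comp, hzero, LinearMap.lTensor_zero, LinearMap.zero_apply]
  obtain ⟨ν, rfl⟩ :=
    mem_range_lTensor_inf_ker (hM (Module.isTorsionBySet_quotient_ideal_smul _ p) _) hμP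
  let ι : (f.ker ⊓ P.mkQ.ker : Submodule B L) →ₗ[B] P :=
    Submodule.inclusion (inf_le_right.trans P.ker_mkQ.le)
  obtain ⟨ξ', hξ'⟩ := LinearMap.lTensor_surjective M (idealSMul_surjective p L) (ι.lTensor M ν)
  refine ⟨ξ', ?_, ?_⟩
  · rw [← hμ, LinearMap.lTensor_comp, LinearMap.comp_apply, hξ', ← LinearMap.comp_apply,
      ← LinearMap.comp_apply, ← LinearMap.lTensor_comp, ← LinearMap.lTensor_comp]
    rfl
  · have hzero : f.restrict (q := p • ⊤) (Submodule.smul_top_le_comap_smul_top p f) ∘ₗ ι = 0 := by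
      ext x
      exact (Submodule.mem_inf.1 x.2).1
    rw [← restrict_comp_idealSMul, LinearMap.lTensor_comp, LinearMap.comp_apply, hξ',
      ← LinearMap.comp_apply, ← LinearMap.lTensor_comp, hzero, LinearMap.lTensor_zero,
      LinearMap.zero_apply]

/-- The point is that `Tor₁ M (B ⧸ p) ⊗ N` surjects onto the kernel of `M ⊗ p N → M ⊗ N`. -/
lemma FlatModulo.tensorInjective_smul_top (hM : FlatModulo p M)
    (hN : ∀ η ∈ (p.subtype.lTensor M).ker, ∀ n : N,
      (idealSMul p N ∘ₗ (TensorProduct.mk B p N).flip n).lTensor M η = 0) :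
    TensorInjective M (p • ⊤ : Submodule B N) := by
  refine (injective_iff_map_eq_zero _).2 fun z hz ↦ ?_
  let π : (N →₀ B) →ₗ[B] N := Finsupp.linearCombination B id
  have hπ : Function.Surjective π := Finsupp.linearCombination_id_surjective B N
  have hρ : Function.Surjective (idealSMul p N ∘ₗ π.lTensor p) :=
    (idealSMul_surjective p N).comp (LinearMap.lTensor_surjective p hπ)
  obtain ⟨ξ, rfl⟩ := LinearMap.lTensor_surjective M hρ z
  rw [← LinearMap.comp_apply, ← LinearMap.lTensor_comp, ← restrict_comp_idealSMul] at hz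
  obtain ⟨ξ', hξ', hξ'N⟩ := hM.exists_lTensor_eq_and_lTensor_eq_zero hπ ξ hz
  obtain ⟨ζ, hζ⟩ := mem_range_rTensor_ker_of_flat (ξ := ξ - ξ') (by rw [map_sub, hξ', sub_self])
  have hdiff := lTensor_idealSMul_assoc_eq_zero hN π ζ
  rwa [hζ, map_sub, hξ'N, sub_zero] at hdiff

lemma FlatModulo.tensorInjective_smul_top_of_tensorInjective (hM : FlatModulo p M)
    (hp : TensorInjective M p) (N : Type u) [AddCommGroup N] [Module B N] :
    TensorInjective M (p • ⊤ : Submodule B N) :=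
  hM.tensorInjective_smul_top fun η hη n ↦ by
    rw [(injective_iff_map_eq_zero _).1 hp η hη, map_zero]

lemma FlatModulo.pow (hM : FlatModulo p M) (hp : TensorInjective M p) (n : ℕ) :
    FlatModulo (p ^ n) M := by
  induction n with
  | zero =>
    intro Y _ _ hY N
    have : Subsingleton Y := ⟨fun x y ↦ by
      simpa using (@hY x ⟨1, by simp⟩).trans (@hY y ⟨1, by simp⟩).symm⟩
    exact Function.injective_of_subsingleton _
  | succ n ih =>
    intro Y _ _ hY N
    have hpY : Module.IsTorsionBySet B (p • ⊤ : Submodule B Y) (p ^ n : Ideal B) := by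
      rintro ⟨y, hy⟩ ⟨a, ha⟩
      refine Subtype.ext (?_ : a • y = 0)
      refine Submodule.smul_induction_on hy (fun b hb y _ ↦ ?_) fun x y hx hy ↦ ?_
      · rw [smul_smul]
        exact @hY y ⟨a * b, pow_succ p n ▸ Ideal.mul_mem_mul ha hb⟩
      · rw [smul_add, hx, hy, add_zero]
    refine TensorInjective.of_map (f := (p • ⊤ : Submodule B Y).mkQ) ?_
      (hM (Module.isTorsionBySet_quotient_ideal_smul _ p) _)
    rw [Submodule.ker_mkQ]
    exact (hM.tensorInjective_smul_top_of_tensorInjective hp Y).trans inf_le_right (ih hpY _)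

end Ideal

end TensorInjective

section LocalCriterion

variable {B : Type u} [CommRing B]

lemma range_lTensor_le_pow_smul_top (p : Ideal B) (S : Type u) [CommRing S] [Algebra B S]
    {L N : Type u} [AddCommGroup L] [Module B L] [AddCommGroup N] [Module B N] {n : ℕ}
    {f : L →ₗ[B] N} (hf : f.range ≤ p ^ n • ⊤) {z : S ⊗[B] N} (hz : z ∈ (f.lTensor S).range) :
    z ∈ ((p.map (algebraMap B S)) ^ n • ⊤ : Submodule S (S ⊗[B] N)) := by
  obtain ⟨w, rfl⟩ := hz
  have htmul (s : S) (y : N) (hy : y ∈ (p ^ n • ⊤ : Submodule B N)) :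
      s ⊗ₜ[B] y ∈ ((p.map (algebraMap B S)) ^ n • ⊤ : Submodule S (S ⊗[B] N)) := by
    refine Submodule.smul_induction_on hy (fun c hc y' _ ↦ ?_) fun a b ha hb ↦ ?_
    · rw [TensorProduct.tmul_smul, ← algebraMap_smul S c, ← Ideal.map_pow]
      exact Submodule.smul_mem_smul (Ideal.mem_map_of_mem _ hc) trivial
    · rw [TensorProduct.tmul_add]
      exact add_mem ha hb
  induction w with
  | zero => simp
  | add x y hx hy => simpa only [map_add] using add_mem hx hy
  | tmul s l => exact htmul s (f l) (hf ⟨l, rfl⟩)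

lemma exists_inf_pow_le_pow_smul [IsNoetherianRing B] (p 𝔞 : Ideal B) (n : ℕ) :
    ∃ m, (Submodule.inclusion (inf_le_left : 𝔞 ⊓ p ^ m ≤ 𝔞)).range ≤
      (p ^ n • ⊤ : Submodule B 𝔞) := by
  obtain ⟨k, hk⟩ := Ideal.exists_pow_inf_eq_pow_smul p (𝔞 : Submodule B B)
  refine ⟨n + k, ?_⟩
  have hle : 𝔞 ⊓ p ^ (n + k) ≤ (p ^ n • ⊤ : Submodule B 𝔞).map 𝔞.subtype := by
    have h := hk (n + k) (Nat.le_add_left k n)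
    rw [Nat.add_sub_cancel, Ideal.smul_top_eq_map, Algebra.algebraMap_self, Ideal.map_id,
      Submodule.restrictScalars_self] at h
    rw [Submodule.map_smul'', Submodule.map_top, Submodule.range_subtype, inf_comm, h]
    exact Submodule.smul_mono le_rfl inf_le_right
  rintro _ ⟨x, rfl⟩
  obtain ⟨y, hy, hyx⟩ := hle x.2
  rwa [show Submodule.inclusion inf_le_left x = y from Subtype.ext hyx.symm]

/-- By Artin–Rees, the kernel of `S ⊗ 𝔞 → S` lies in every `pⁿ (S ⊗ 𝔞)`. -/
theorem FlatModulo.flat_of_le_jacobson [IsNoetherianRing B] {p : Ideal B} {S : Type u} [CommRing S]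
    [Algebra B S] [IsNoetherianRing S] (hS : FlatModulo p S) (hp : TensorInjective S p)
    (hjac : p.map (algebraMap B S) ≤ Ideal.jacobson ⊥) : Module.Flat B S := by
  refine Module.Flat.iff_lTensor_injective'.2 fun 𝔞 ↦ (injective_iff_map_eq_zero _).2 fun z hz ↦ ?_
  have hmem : z ∈ (⨅ n : ℕ, p.map (algebraMap B S) ^ n • ⊤ : Submodule S (S ⊗[B] 𝔞)) := by
    refine (Submodule.mem_iInf _).2 fun n ↦ ?_
    obtain ⟨m, hm⟩ := exists_inf_pow_le_pow_smul p 𝔞 n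
    have htors : Module.IsTorsionBySet B (B ⧸ p ^ m) (p ^ m : Ideal B) :=
      (Module.isTorsionBySet_quotient_iff _ _).2 fun x r hr ↦ Ideal.mul_mem_right x _ hr
    refine range_lTensor_le_pow_smul_top p S ?_ (mem_range_lTensor_inf_ker
      (f := (p ^ m).mkQ) (hS.pow hp m htors _) ?_)
    · rintro _ ⟨x, rfl⟩
      exact hm ⟨⟨x.1, x.2.1, (Submodule.ker_mkQ (p ^ m)).le x.2.2⟩, rfl⟩
    · rw [LinearMap.lTensor_comp, LinearMap.comp_apply, hz, map_zero]
  rwa [Ideal.iInf_pow_smul_eq_bot_of_le_jacobson _ hjac, Submodule.mem_bot] at hmem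

end LocalCriterion

/-! ### Change of rings -/

section BaseChange

variable {A B : Type u} [CommRing A] [CommRing B] [Algebra A B]
  {M : Type u} [AddCommGroup M] [Module A M]

lemma tensorInjective_baseChange_iff {Y : Type u} [AddCommGroup Y] [Module A Y] [Module B Y]
    [IsScalarTower A B Y] {X : Submodule B Y} :
    TensorInjective (B ⊗[A] M) X ↔ TensorInjective M (X.restrictScalars A) := by
  have hcomm : (AlgebraTensorModule.cancelBaseChange A B B Y M).toLinearMap ∘ₗ
      X.subtype.rTensor (B ⊗[A] M) = AlgebraTensorModule.rTensor A M X.subtype ∘ₗ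
        (AlgebraTensorModule.cancelBaseChange A B B X M).toLinearMap := by
    ext x m
    simp
  rw [TensorInjective, LinearMap.lTensor_inj_iff_rTensor_inj,
    ← (AlgebraTensorModule.cancelBaseChange A B B Y M).injective.of_comp_iff,
    TensorInjective, LinearMap.lTensor_inj_iff_rTensor_inj]
  change Function.Injective ((AlgebraTensorModule.cancelBaseChange A B B Y M).toLinearMap ∘ₗ
    X.subtype.rTensor (B ⊗[A] M)) ↔ _
  rw [hcomm]
  exact (AlgebraTensorModule.cancelBaseChange A B B X M).toEquiv.injective_comp _

lemma tensorInjective_map_iff {p : Ideal A} :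
    TensorInjective (B ⊗[A] M) (p.map (algebraMap A B)) ↔
      TensorInjective M (p • ⊤ : Submodule A B) := by
  rw [tensorInjective_baseChange_iff, Ideal.smul_top_eq_map]

lemma FlatModulo.baseChange {p : Ideal A} (hM : FlatModulo p M) :
    FlatModulo (p.map (algebraMap A B)) (B ⊗[A] M) := by
  intro Y _ _ hY N
  let _ : Module A Y := Module.compHom Y (algebraMap A B)
  have : IsScalarTower A B Y := ⟨fun a b y ↦ by
    rw [Algebra.smul_def, mul_smul]
    rfl⟩
  exact tensorInjective_baseChange_iff.2
    (hM (fun y a ↦ @hY y ⟨_, Ideal.mem_map_of_mem _ a.2⟩) (N.restrictScalars A))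

lemma flatModulo_of_flat_quotient {p : Ideal A} [Module.Flat (A ⧸ p) ((A ⧸ p) ⊗[A] M)] :
    FlatModulo p M := by
  intro Y _ _ hY N
  let _ : Module (A ⧸ p) Y := hY.module
  have : IsScalarTower A (A ⧸ p) Y := hY.isScalarTower
  let N' : Submodule (A ⧸ p) Y :=
    { N with
      smul_mem' := fun c y hy ↦ by
        obtain ⟨c, rfl⟩ := Ideal.Quotient.mk_surjective c
        exact N.smul_mem c hy }
  exact (tensorInjective_baseChange_iff (X := N')).1
    (Module.Flat.lTensor_preserves_injective_linearMap _ N'.injective_subtype)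

end BaseChange

section FlatExtension

variable {R T U : Type u} [CommRing R] [CommRing T] [CommRing U] [Algebra R T] [Algebra R U]
  [Algebra T U] [IsScalarTower R T U] {Y : Type u} [AddCommGroup Y] [Module R Y]
  {X : Submodule R Y}

lemma TensorInjective.of_flat [Module.Flat T U] (h : TensorInjective T X) :
    TensorInjective U X := by
  have hcomm : (AlgebraTensorModule.cancelBaseChange R T T U Y).toLinearMap ∘ₗ
      (AlgebraTensorModule.lTensor T T X.subtype).lTensor U =
        AlgebraTensorModule.lTensor T U X.subtype ∘ₗ
          (AlgebraTensorModule.cancelBaseChange R T T U X).toLinearMap := by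
    ext u x
    simp
  rw [TensorInjective, ← (AlgebraTensorModule.cancelBaseChange R T T U X).toEquiv.injective_comp]
  change Function.Injective (AlgebraTensorModule.lTensor T U X.subtype ∘ₗ
    (AlgebraTensorModule.cancelBaseChange R T T U X).toLinearMap)
  rw [← hcomm]
  exact (AlgebraTensorModule.cancelBaseChange R T T U Y).injective.comp
    (Module.Flat.lTensor_preserves_injective_linearMap
      (AlgebraTensorModule.lTensor T T X.subtype) h)

lemma TensorInjective.of_flat_of_isUnit {T' : Type u} [CommRing T'] [Algebra R T'] [Algebra T T']
    [IsScalarTower R T T'] [Module.Flat T U] {t : T} [IsLocalization.Away t T']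
    (ht : IsUnit (algebraMap T U t)) (h : TensorInjective T' X) : TensorInjective U X := by
  let _ : Algebra T' U := (IsLocalization.Away.lift t ht).toAlgebra
  have : IsScalarTower T T' U :=
    IsScalarTower.of_algebraMap_eq' (IsLocalization.Away.lift_comp t ht).symm
  have : IsScalarTower R T' U := IsScalarTower.of_algebraMap_eq fun r ↦ by
    rw [IsScalarTower.algebraMap_apply R T U, IsScalarTower.algebraMap_apply T T' U,
      ← IsScalarTower.algebraMap_apply R T T']
  have : Module.Flat T' U := (Module.flat_iff_of_isLocalization T' (.powers t) U).2 inferInstance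
  exact h.of_flat

end FlatExtension

section Equiv

variable {B M M' : Type u} [CommRing B] [AddCommGroup M] [Module B M] [AddCommGroup M']
  [Module B M']

lemma TensorInjective.of_linearEquiv (e : M ≃ₗ[B] M') {Y : Type u} [AddCommGroup Y] [Module B Y]
    {N : Submodule B Y} (h : TensorInjective M N) : TensorInjective M' N := by
  rw [TensorInjective, ← (e.rTensor N).toEquiv.injective_comp]
  change Function.Injective (N.subtype.lTensor M' ∘ₗ e.toLinearMap.rTensor N)
  rw [LinearMap.lTensor_comp_rTensor, ← LinearMap.rTensor_comp_lTensor]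
  exact (e.rTensor Y).injective.comp h

/-- Localizing at an element of the base commutes with base change. -/
noncomputable def tensorAwayEquiv (A B S : Type u) [CommRing A] [CommRing B] [CommRing S]
    [Algebra A B] [Algebra A S] (f : A) :
    B ⊗[A] Localization.Away (algebraMap A S f) ≃ₐ[B]
      Localization.Away (algebraMap A (B ⊗[A] S) f) :=
  have : IsLocalization ((Submonoid.powers (algebraMap A S f)).map
      (Algebra.TensorProduct.includeRight (R := A) (A := B)))
      (Localization.Away (algebraMap A (B ⊗[A] S) f)) := by
    rw [Submonoid.map_powers, AlgHom.commutes]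
    infer_instance
  IsLocalization.tensorProductEquivOfMapIncludeRight A B (.powers (algebraMap A S f)) _ _

end Equiv

/-! ### Generic freeness -/

section GenericFreeness

open MvPolynomial

lemma isCompl_restrictSupport {σ R : Type*} [CommRing R] (m : MonomialOrder σ)
    {I : Ideal (MvPolynomial σ R)} {G : Set (MvPolynomial σ R)} (hGI : G ⊆ I)
    (hG : ∀ g ∈ G, IsUnit (m.leadingCoeff g))
    (hI : ∀ h ∈ I, h ≠ 0 → ∃ g ∈ G, m.degree g ≤ m.degree h) :
    IsCompl (I.restrictScalars R) (restrictSupport R {d | ∀ g ∈ G, ¬ m.degree g ≤ d}) := by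
  refine IsCompl.of_eq (eq_bot_iff.2 fun h ⟨hhI, hh⟩ ↦ ?_) (eq_top_iff.2 fun h _ ↦ ?_)
  · by_contra h0
    obtain ⟨g, hg, hgh⟩ := hI h hhI h0
    exact hh (m.degree_mem_support h0) g hg hgh
  · obtain ⟨q, r, rfl, -, hr⟩ := m.div_set hG h
    refine Submodule.add_mem_sup (Submodule.sum_mem _ fun g _ ↦ ?_) hr
    exact I.mul_mem_left _ (hGI g.2)

lemma free_of_isUnit_leadingCoeff {σ R S : Type*} [CommRing R] [CommRing S] [Algebra R S]
    (m : MonomialOrder σ) {π : MvPolynomial σ R →ₐ[R] S} (hπ : Function.Surjective π)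
    {G : Set (MvPolynomial σ R)} (hGπ : ∀ g ∈ G, π g = 0)
    (hG : ∀ g ∈ G, IsUnit (m.leadingCoeff g))
    (hI : ∀ h, π h = 0 → h ≠ 0 → ∃ g ∈ G, m.degree g ≤ m.degree h) : Module.Free R S := by
  let V : Submodule R (MvPolynomial σ R) := restrictSupport R {d | ∀ g ∈ G, ¬ m.degree g ≤ d}
  have hcompl : IsCompl π.toLinearMap.ker V :=
    isCompl_restrictSupport m (I := RingHom.ker π) hGπ hG hI
  have : Module.Free R V := Module.Free.of_basis (basisRestrictSupport R _)
  exact Module.Free.of_equiv ((Submodule.quotientEquivOfIsCompl _ _ hcompl).symm ≪≫ₗ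
    π.toLinearMap.quotKerEquivOfSurjective hπ)

lemma exists_finset_degree_le {σ R : Type*} [Finite σ] [CommRing R] (m : MonomialOrder σ)
    (I : Ideal (MvPolynomial σ R)) :
    ∃ G : Finset (MvPolynomial σ R), (∀ g ∈ G, g ∈ I) ∧ (∀ g ∈ G, g ≠ 0) ∧
      ∀ h ∈ I, h ≠ 0 → ∃ g ∈ G, m.degree g ≤ m.degree h := by
  classical
  let P : (σ →₀ ℕ) → Prop := fun d ↦ ∃ g ∈ I, g ≠ 0 ∧ m.degree g = d
  have hfin : {d | Minimal P d}.Finite :=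
    WellQuasiOrderedLE.finite_of_isAntichain (setOfPred_minimal_antichain P)
  have hP : ∀ d ∈ hfin.toFinset, P d := fun d hd ↦ (hfin.mem_toFinset.1 hd).prop
  choose! g hgI hg0 hgd using hP
  refine ⟨hfin.toFinset.image g, ?_, ?_, fun h hh h0 ↦ ?_⟩
  · simpa only [Finset.forall_mem_image] using hgI
  · simpa only [Finset.forall_mem_image] using hg0
  · obtain ⟨d, hle, hd⟩ := exists_minimal_le_of_wellFoundedLT P (m.degree h) ⟨h, hh, h0, rfl⟩
    have hd : d ∈ hfin.toFinset := hfin.mem_toFinset.2 hd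
    exact ⟨g d, Finset.mem_image_of_mem g hd, (hgd d hd).trans_le hle⟩

lemma degree_map_of_injective {σ R S : Type*} [CommRing R] [CommRing S] (m : MonomialOrder σ)
    {φ : R →+* S} (hφ : Function.Injective φ) (p : MvPolynomial σ R) :
    m.degree (map φ p) = m.degree p := by
  rw [MonomialOrder.degree, MonomialOrder.degree, support_map_of_injective p hφ]

lemma exists_smul_eq_zero_of_one_tmul_eq_zero {R E M : Type*} [CommRing R] [CommRing E]
    [Algebra R E] (W : Submonoid R) [IsLocalization W E] [AddCommGroup M] [Module R M] {x : M}
    (hx : (1 : E) ⊗ₜ[R] x = 0) : ∃ w ∈ W, w • x = 0 := by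
  have : IsLocalizedModule W (TensorProduct.mk R E M 1) :=
    (isLocalizedModule_iff_isBaseChange W E _).2 (TensorProduct.isBaseChange R M E)
  obtain ⟨w, hw⟩ := (IsLocalizedModule.eq_zero_iff W (TensorProduct.mk R E M 1)).1 hx
  exact ⟨w, w.2, hw⟩

lemma exists_map_degree_eq_of_isLocalization {σ R E S : Type*} [CommRing R] [CommRing E]
    [Algebra R E] [CommRing S] [Algebra R S] (W : Submonoid R) [IsLocalization W E]
    (hE : Function.Injective (algebraMap R E)) (m : MonomialOrder σ)
    {π : MvPolynomial σ R →ₐ[R] S} {π' : MvPolynomial σ E →ₐ[E] E ⊗[R] S}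
    (hπ' : ∀ p, π' (map (algebraMap R E) p) = 1 ⊗ₜ π p) {h : MvPolynomial σ E}
    (hh : π' h = 0) (h0 : h ≠ 0) :
    ∃ p, π p = 0 ∧ p ≠ 0 ∧ m.degree p = m.degree h := by
  let _ : Algebra (MvPolynomial σ R) (MvPolynomial σ E) := algebraMvPolynomial
  obtain ⟨⟨q, ⟨_, w, hw, rfl⟩⟩, hq⟩ := IsLocalization.surj (W.map (C (σ := σ))) h
  have hq : map (algebraMap R E) q = algebraMap R E w • h := by
    rw [smul_eq_C_mul, mul_comm, ← map_C]
    exact hq.symm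
  obtain ⟨v, hv, hvq⟩ := exists_smul_eq_zero_of_one_tmul_eq_zero (E := E) W (x := π q) (by
    rw [← hπ', hq, map_smul, hh, smul_zero])
  have hvw : IsUnit (algebraMap R E (v * w)) := IsLocalization.map_units E ⟨_, mul_mem hv hw⟩
  have hvq' : map (algebraMap R E) (v • q) = algebraMap R E (v * w) • h := by
    rw [smul_eq_C_mul, map_mul, map_C, hq, ← smul_eq_C_mul, smul_smul, map_mul]
  refine ⟨v • q, by rw [map_smul, hvq], ?_, ?_⟩
  · rintro hzero
    rw [hzero, map_zero] at hvq'
    exact h0 (hvw.smul_eq_zero.1 hvq'.symm)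
  · rw [← degree_map_of_injective m hE, hvq',
      m.degree_smul_of_mem_nonZeroDivisors hvw.mem_nonZeroDivisors]

theorem exists_free_localizationAway_tensorProduct (R S : Type*) [CommRing R] [IsDomain R]
    [CommRing S] [Algebra R S] [Algebra.FiniteType R S] :
    ∃ f : R, f ≠ 0 ∧ Module.Free (Localization.Away f) (Localization.Away f ⊗[R] S) := by
  classical
  obtain ⟨n, π, hπ⟩ := Algebra.FiniteType.iff_quotient_mvPolynomial''.1 ‹Algebra.FiniteType R S›
  let m : MonomialOrder (Fin n) := MonomialOrder.lex
  obtain ⟨G, hGπ, hG0, hG⟩ := exists_finset_degree_le m (RingHom.ker π)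
  let f : R := ∏ g ∈ G, m.leadingCoeff g
  have hf : f ≠ 0 := Finset.prod_ne_zero_iff.2 fun g hg ↦ m.leadingCoeff_ne_zero_iff.2 (hG0 g hg)
  let E := Localization.Away f
  have hE : Function.Injective (algebraMap R E) :=
    IsLocalization.injective E (powers_le_nonZeroDivisors_of_noZeroDivisors hf)
  let π' : MvPolynomial (Fin n) E →ₐ[E] E ⊗[R] S := aeval fun i ↦ 1 ⊗ₜ π (X i)
  have hπ' (p) : π' (map (algebraMap R E) p) = 1 ⊗ₜ π p := by
    suffices (π'.restrictScalars R).comp (mapAlgHom (Algebra.ofId R E)) =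
        Algebra.TensorProduct.includeRight.comp π from DFunLike.congr_fun this p
    ext i
    simp [π']
  refine ⟨f, hf, free_of_isUnit_leadingCoeff m (π := π')
    (G := map (algebraMap R E) '' G) ?_ ?_ ?_ ?_⟩
  · intro z
    induction z with
    | zero => exact ⟨0, map_zero _⟩
    | add x y hx hy => exact AlgHom.range π' |>.add_mem hx hy
    | tmul e s =>
      obtain ⟨p, rfl⟩ := hπ s
      exact ⟨e • map (algebraMap R E) p, by rw [map_smul, hπ', smul_tmul', smul_eq_mul, mul_one]⟩
  · rintro _ ⟨g, hg, rfl⟩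
    rw [hπ', hGπ g hg, tmul_zero]
  · rintro _ ⟨g, hg, rfl⟩
    rw [MonomialOrder.leadingCoeff, degree_map_of_injective m hE, coeff_map]
    exact isUnit_of_dvd_unit (map_dvd _ (Finset.dvd_prod_of_mem m.leadingCoeff hg))
      (IsLocalization.Away.algebraMap_isUnit f)
  · intro h hh h0
    obtain ⟨p, hp, hp0, hdeg⟩ := exists_map_degree_eq_of_isLocalization (.powers f) hE m hπ' hh h0
    obtain ⟨g, hg, hgp⟩ := hG p hp hp0
    exact ⟨_, ⟨g, hg, rfl⟩, by rwa [degree_map_of_injective m hE, ← hdeg]⟩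

theorem exists_flatModulo_localizationAway (A S : Type u) [CommRing A] [CommRing S] [Algebra A S]
    [Algebra.FiniteType A S] (p : Ideal A) [p.IsPrime] :
    ∃ f ∉ p, FlatModulo p (Localization.Away (algebraMap A S f)) := by
  obtain ⟨f, hf, _⟩ := exists_free_localizationAway_tensorProduct (A ⧸ p) ((A ⧸ p) ⊗[A] S)
  obtain ⟨f, rfl⟩ := Ideal.Quotient.mk_surjective f
  refine ⟨f, fun hfp ↦ hf (Ideal.Quotient.eq_zero_iff_mem.2 hfp), ?_⟩
  let T := (A ⧸ p) ⊗[A] S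
  let E := Localization.Away (Ideal.Quotient.mk p f)
  let T' := Localization.Away (algebraMap A T f)
  have : Module.Flat (A ⧸ p) E := IsLocalization.flat E (.powers (Ideal.Quotient.mk p f))
  have : Module.Flat E (E ⊗[A ⧸ p] T) := .of_free
  have : Module.Flat (A ⧸ p) (E ⊗[A ⧸ p] T) := .trans _ E _
  have : IsLocalizedModule (.powers (Ideal.Quotient.mk p f)) (TensorProduct.mk (A ⧸ p) E T 1) :=
    (isLocalizedModule_iff_isBaseChange _ E _).2 (TensorProduct.isBaseChange _ T E)
  have : IsLocalizedModule (.powers (Ideal.Quotient.mk p f))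
      (IsScalarTower.toAlgHom (A ⧸ p) T T').toLinearMap := by
    rw [isLocalizedModule_iff_isLocalization, Algebra.algebraMapSubmonoid_powers]
    exact inferInstanceAs (IsLocalization (.powers (algebraMap A T f)) T')
  let e : E ⊗[A ⧸ p] T ≃ₗ[A ⧸ p] T' := IsLocalizedModule.linearEquiv
    (.powers (Ideal.Quotient.mk p f)) (TensorProduct.mk (A ⧸ p) E T 1)
    (IsScalarTower.toAlgHom (A ⧸ p) T T').toLinearMap
  have : Module.Flat (A ⧸ p) ((A ⧸ p) ⊗[A] Localization.Away (algebraMap A S f)) :=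
    .of_linearEquiv ((tensorAwayEquiv A (A ⧸ p) S f).toLinearEquiv ≪≫ₗ e.symm)
  exact flatModulo_of_flat_quotient

end GenericFreeness

/-! ### Descent of flatness to finitely generated subalgebras -/

section IdealSMul

variable {A C : Type u} [CommRing A] [CommRing C] [Algebra A C] {p : Ideal A}

variable (p) in
/-- The map `p B → p C` induced by the inclusion of a subalgebra `B` of `C`. -/
def smulTopInclusion (B : Subalgebra A C) :
    (p • ⊤ : Submodule A B) →ₗ[A] (p • ⊤ : Submodule A C) :=
  B.val.toLinearMap.restrict (Submodule.smul_top_le_comap_smul_top p _)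

lemma smulTopInclusion_injective (B : Subalgebra A C) :
    Function.Injective (smulTopInclusion p B) := fun _ _ hxy ↦ by
  have hval := Subtype.ext_iff.1 hxy
  exact Subtype.ext (Subtype.ext hval)

lemma range_smulTopInclusion_mono {B B' : Subalgebra A C} (h : B ≤ B') :
    (smulTopInclusion p B).range ≤ (smulTopInclusion p B').range := by
  rintro _ ⟨x, rfl⟩
  exact ⟨(Subalgebra.inclusion h).toLinearMap.restrict
    (Submodule.smul_top_le_comap_smul_top p _) x, rfl⟩

lemma exists_fg_mem_range_smulTopInclusion (x : (p • ⊤ : Submodule A C)) :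
    ∃ B : Subalgebra A C, B.FG ∧ x ∈ (smulTopInclusion p B).range := by
  obtain ⟨ξ, rfl⟩ := idealSMul_surjective p C x
  induction ξ with
  | zero => exact ⟨⊥, Subalgebra.fg_bot, by simp⟩
  | tmul a c =>
    exact ⟨Algebra.adjoin A {c}, ⟨{c}, by simp⟩,
      idealSMul p _ (a ⊗ₜ ⟨c, Algebra.self_mem_adjoin_singleton A c⟩), rfl⟩
  | add ξ ζ hξ hζ =>
    obtain ⟨B, hB, hξB⟩ := hξ
    obtain ⟨B', hB', hζB'⟩ := hζ
    rw [map_add]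
    exact ⟨B ⊔ B', hB.sup hB', add_mem (range_smulTopInclusion_mono le_sup_left hξB)
      (range_smulTopInclusion_mono le_sup_right hζB')⟩

lemma exists_fg_le_range_smulTopInclusion {Q : Submodule A (p • ⊤ : Submodule A C)} (hQ : Q.FG) :
    ∃ B : Subalgebra A C, B.FG ∧ Q ≤ (smulTopInclusion p B).range := by
  induction Q, hQ using Submodule.fg_induction with
  | singleton x => simpa using exists_fg_mem_range_smulTopInclusion x
  | sup Q Q' _ _ hQ hQ' =>
    obtain ⟨B, hB, hQB⟩ := hQ
    obtain ⟨B', hB', hQB'⟩ := hQ'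
    exact ⟨B ⊔ B', hB.sup hB', sup_le (hQB.trans (range_smulTopInclusion_mono le_sup_left))
      (hQB'.trans (range_smulTopInclusion_mono le_sup_right))⟩

/-- The structure map `p → p C` of an algebra `C`. -/
noncomputable def idealToSMulTop (p : Ideal A) (C : Type u) [CommRing C] [Algebra A C] :
    p →ₗ[A] (p • ⊤ : Submodule A C) :=
  idealSMul p C ∘ₗ (TensorProduct.mk A p C).flip 1

lemma exists_fg_lTensor_idealToSMulTop_eq_zero {M : Type u} [AddCommGroup M] [Module A M]
    (hp : p.FG) {η : M ⊗[A] p} (hη : (idealToSMulTop p C).lTensor M η = 0) :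
    ∃ B : Subalgebra A C, B.FG ∧ (idealToSMulTop p B).lTensor M η = 0 := by
  have : Module.Finite A p := Module.Finite.iff_fg.2 hp
  have hzero : (idealToSMulTop p C).range.subtype.rTensor M
      ((idealToSMulTop p C).rangeRestrict.rTensor M (TensorProduct.comm A M p η)) = 0 := by
    rw [← LinearMap.comp_apply, ← LinearMap.rTensor_comp, LinearMap.subtype_comp_codRestrict,
      LinearMap.rTensor_comm, hη, map_zero]
  obtain ⟨Q, hQ', hQ, hQzero⟩ := TensorProduct.eq_zero_of_fg_of_subtype_eq_zero
    (Module.Finite.iff_fg.1 (Module.Finite.range (idealToSMulTop p C))) hzero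
  obtain ⟨B, hB, hQB⟩ := exists_fg_le_range_smulTopInclusion hQ
  refine ⟨B, hB, (TensorProduct.comm A M _).injective ?_⟩
  let e := LinearEquiv.ofInjective _ (smulTopInclusion_injective (p := p) B)
  have hfac : e.symm.toLinearMap ∘ₗ Submodule.inclusion hQB ∘ₗ Submodule.inclusion hQ' ∘ₗ
      (idealToSMulTop p C).rangeRestrict = idealToSMulTop p B :=
    LinearMap.ext fun a ↦ e.symm_apply_eq.2 rfl
  rw [← LinearMap.rTensor_comm, ← hfac, LinearMap.rTensor_comp_apply,
    LinearMap.rTensor_comp_apply, LinearMap.rTensor_comp_apply, hQzero, map_zero, map_zero,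
    map_zero]

variable {S : Type u} [CommRing S] [Algebra A S]

variable (p S) in
lemma ker_lTensor_idealToSMulTop_mono {B B' : Subalgebra A C} (h : B ≤ B') :
    (AlgebraTensorModule.lTensor S S (idealToSMulTop p B)).ker ≤
      (AlgebraTensorModule.lTensor S S (idealToSMulTop p B')).ker := by
  let ι : (p • ⊤ : Submodule A B) →ₗ[A] (p • ⊤ : Submodule A B') :=
    (Subalgebra.inclusion h).toLinearMap.restrict (Submodule.smul_top_le_comap_smul_top p _)
  have hfac : idealToSMulTop p B' = ι ∘ₗ idealToSMulTop p B := rfl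
  rw [hfac, AlgebraTensorModule.lTensor_comp]
  exact LinearMap.ker_le_ker_comp _ _

lemma exists_fg_le_ker_lTensor_idealToSMulTop (hp : p.FG) {K : Submodule S (S ⊗[A] p)}
    (hK : K.FG) (hKC : K ≤ (AlgebraTensorModule.lTensor S S (idealToSMulTop p C)).ker) :
    ∃ B : Subalgebra A C, B.FG ∧
      K ≤ (AlgebraTensorModule.lTensor S S (idealToSMulTop p B)).ker := by
  induction K, hK using Submodule.fg_induction with
  | singleton η =>
    simp only [Submodule.span_singleton_le_iff_mem, LinearMap.mem_ker] at hKC ⊢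
    exact exists_fg_lTensor_idealToSMulTop_eq_zero hp hKC
  | sup K K' _ _ hK hK' =>
    obtain ⟨B, hB, hKB⟩ := hK (le_sup_left.trans hKC)
    obtain ⟨B', hB', hKB'⟩ := hK' (le_sup_right.trans hKC)
    exact ⟨B ⊔ B', hB.sup hB',
      sup_le (hKB.trans (ker_lTensor_idealToSMulTop_mono p S le_sup_left))
        (hKB'.trans (ker_lTensor_idealToSMulTop_mono p S le_sup_right))⟩

lemma FlatModulo.exists_fg_tensorInjective [IsNoetherianRing A] [IsNoetherianRing S]
    (hS : FlatModulo p S) (hC : TensorInjective S (p • ⊤ : Submodule A C)) :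
    ∃ B : Subalgebra A C, B.FG ∧ ∀ B' : Subalgebra A C, B ≤ B' →
      TensorInjective S (p • ⊤ : Submodule A B') := by
  let κ := AlgebraTensorModule.lTensor S S p.subtype
  have hkerC : κ.ker ≤ (AlgebraTensorModule.lTensor S S (idealToSMulTop p C)).ker := by
    intro η hη
    have hfac : (p • ⊤ : Submodule A C).subtype ∘ₗ idealToSMulTop p C =
        Algebra.linearMap A C ∘ₗ p.subtype := by
      ext a
      simp [idealToSMulTop, coe_idealSMul_tmul, Algebra.algebraMap_eq_smul_one]
    refine (injective_iff_map_eq_zero _).1 hC _ ?_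
    change (p • ⊤ : Submodule A C).subtype.lTensor S ((idealToSMulTop p C).lTensor S η) = 0
    rw [← LinearMap.lTensor_comp_apply, hfac, LinearMap.lTensor_comp_apply]
    exact (congrArg _ hη).trans (map_zero _)
  obtain ⟨B, hB, hker⟩ :=
    exists_fg_le_ker_lTensor_idealToSMulTop p.fg_of_isNoetherianRing (IsNoetherian.noetherian _)
      hkerC
  refine ⟨B, hB, fun B' hBB' ↦ hS.tensorInjective_smul_top fun η hη b ↦ ?_⟩
  have hfac : idealSMul p B' ∘ₗ (TensorProduct.mk A p B').flip b =
      (LinearMap.mulRight A b).restrict (Submodule.smul_top_le_comap_smul_top p _) ∘ₗ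
        idealToSMulTop p B' := by
    ext a
    simp [idealToSMulTop, coe_idealSMul_tmul]
  rw [hfac, LinearMap.lTensor_comp_apply]
  have hη' : (idealToSMulTop p B').lTensor S η = 0 :=
    ker_lTensor_idealToSMulTop_mono p S hBB' (hker hη)
  rw [hη', map_zero]

end IdealSMul

section FlatDescent

variable {A : Type u} [CommRing A]

lemma FlatModulo.flat_localizationAtPrime {B S : Type u} [CommRing B] [CommRing S] [Algebra A B]
    [Algebra A S] [IsNoetherianRing B] [IsNoetherianRing (B ⊗[A] S)] {p : Ideal A} {f : A}
    (hS : FlatModulo p (Localization.Away (algebraMap A S f)))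
    (hB : TensorInjective (Localization.Away (algebraMap A S f)) (p • ⊤ : Submodule A B))
    (q : Ideal (B ⊗[A] S)) [q.IsPrime] (hpq : p ≤ q.comap (algebraMap A _))
    (hfq : f ∉ q.comap (algebraMap A _)) : Module.Flat B (Localization.AtPrime q) := by
  have hunit : IsUnit (algebraMap (B ⊗[A] S) (Localization.AtPrime q) (algebraMap A _ f)) :=
    IsLocalization.map_units _ (⟨_, hfq⟩ : q.primeCompl)
  let e := (tensorAwayEquiv A B S f).toLinearEquiv
  have hmod : FlatModulo (p.map (algebraMap A B)) (Localization.AtPrime q) := fun Y _ _ hY N ↦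
    ((hS.baseChange hY N).of_linearEquiv e).of_flat_of_isUnit hunit
  have htensor : TensorInjective (Localization.AtPrime q) (p.map (algebraMap A B)) :=
    ((tensorInjective_map_iff.2 hB).of_linearEquiv e).of_flat_of_isUnit hunit
  have : IsNoetherianRing (Localization.AtPrime q) :=
    IsLocalization.isNoetherianRing q.primeCompl _ inferInstance
  refine hmod.flat_of_le_jacobson htensor ?_
  rw [IsLocalRing.jacobson_eq_maximalIdeal _ bot_ne_top, Ideal.map_map,
    ← IsScalarTower.algebraMap_eq, IsScalarTower.algebraMap_eq A (B ⊗[A] S), ← Ideal.map_map,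
    ← Localization.AtPrime.map_eq_maximalIdeal]
  exact Ideal.map_mono (Ideal.map_le_iff_le_comap.2 hpq)

/-- For all sufficiently large finitely generated `B ⊆ C`, the algebra `B ⊗ S` is flat over `B`
at the primes lying above `J`. -/
def EventuallyFlatAt (C S : Type u) [CommRing C] [CommRing S] [Algebra A C] [Algebra A S]
    (J : Ideal A) : Prop :=
  ∃ B : Subalgebra A C, B.FG ∧ ∀ B' : Subalgebra A C, B'.FG → B ≤ B' →
    ∀ (q : Ideal (B' ⊗[A] S)) [q.IsPrime], J ≤ q.comap (algebraMap A _) →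
      Module.Flat B' (Localization.AtPrime q)

variable {C S : Type u} [CommRing C] [CommRing S] [Algebra A C] [Algebra A S]

lemma eventuallyFlatAt_top : EventuallyFlatAt C S (⊤ : Ideal A) :=
  ⟨⊥, Subalgebra.fg_bot, fun _ _ _ _ hq hJ ↦
    (hq.comap (algebraMap A _)).ne_top (top_le_iff.1 hJ) |>.elim⟩

lemma EventuallyFlatAt.of_mul_mem {J : Ideal A} {a b : A} (hab : a * b ∈ J)
    (ha : EventuallyFlatAt C S (J ⊔ Ideal.span {a}))
    (hb : EventuallyFlatAt C S (J ⊔ Ideal.span {b})) : EventuallyFlatAt C S J := by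
  obtain ⟨B, hB, hBflat⟩ := ha
  obtain ⟨B', hB', hBflat'⟩ := hb
  refine ⟨B ⊔ B', hB.sup hB', fun D hD hle q hq hJ ↦ ?_⟩
  rcases (hq.comap (algebraMap A _)).mem_or_mem (hJ hab) with hmem | hmem
  · exact hBflat D hD (le_sup_left.trans hle) q (sup_le hJ (by simpa using hmem))
  · exact hBflat' D hD (le_sup_right.trans hle) q (sup_le hJ (by simpa using hmem))

variable [IsNoetherianRing A] [Algebra.FiniteType A S]

lemma eventuallyFlatAt_of_isPrime [Module.Flat C (C ⊗[A] S)] {p : Ideal A} [p.IsPrime]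
    (ih : ∀ J > p, EventuallyFlatAt C S J) : EventuallyFlatAt C S p := by
  obtain ⟨f, hf, hSf⟩ := exists_flatModulo_localizationAway A S p
  obtain ⟨B, hB, hBflat⟩ := ih (p ⊔ Ideal.span {f}) (by simpa using hf)
  have : Algebra.FiniteType S (Localization.Away (algebraMap A S f)) :=
    IsLocalization.finiteType_of_monoid_fg (.powers (algebraMap A S f)) _
  have : Algebra.FiniteType A (Localization.Away (algebraMap A S f)) := .trans ‹_› this
  have : IsNoetherianRing (Localization.Away (algebraMap A S f)) :=
    Algebra.FiniteType.isNoetherianRing A _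
  have hC : TensorInjective S (p • ⊤ : Submodule A C) := tensorInjective_map_iff.1
    (Module.Flat.lTensor_preserves_injective_linearMap _ (Submodule.injective_subtype _))
  obtain ⟨B', hB', hBinj⟩ := hSf.exists_fg_tensorInjective
    (hC.of_flat (U := Localization.Away (algebraMap A S f)))
  refine ⟨B ⊔ B', hB.sup hB', fun D hD hle q hq hpq ↦ ?_⟩
  by_cases hfq : f ∈ q.comap (algebraMap A _)
  · exact hBflat D hD (le_sup_left.trans hle) q (sup_le hpq (by simpa using hfq))
  have : Algebra.FiniteType A D := (Subalgebra.fg_iff_finiteType _).1 hD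
  have : IsNoetherianRing D := Algebra.FiniteType.isNoetherianRing A D
  have : IsNoetherianRing (D ⊗[A] S) := Algebra.FiniteType.isNoetherianRing D _
  exact hSf.flat_localizationAtPrime (hBinj D (le_sup_right.trans hle)) q hpq hfq

variable (C S) in
lemma eventuallyFlatAt [Module.Flat C (C ⊗[A] S)] (J : Ideal A) : EventuallyFlatAt C S J := by
  induction J using WellFoundedGT.induction with
  | ind J ih =>
    by_cases hJ : J.IsPrime
    · exact eventuallyFlatAt_of_isPrime ih
    obtain rfl | ⟨a, ha, b, hb, hab⟩ := Ideal.not_isPrime_iff.1 hJ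
    · exact eventuallyFlatAt_top
    · exact .of_mul_mem hab (ih _ (by simpa using ha)) (ih _ (by simpa using hb))

variable (C S) in
theorem exists_fg_flat_tensorProduct [Module.Flat C (C ⊗[A] S)] :
    ∃ B : Subalgebra A C, B.FG ∧ Module.Flat B (B ⊗[A] S) := by
  obtain ⟨B, hB, hflat⟩ := eventuallyFlatAt C S (⊥ : Ideal A)
  refine ⟨B, hB, Module.flat_of_isLocalized_maximal (B ⊗[A] S) (B ⊗[A] S)
    (fun P _ ↦ Localization.AtPrime P) (fun P _ ↦ Algebra.linearMap _ _)
    fun P _ ↦ hflat B hB le_rfl P bot_le⟩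

end FlatDescent

/-! ### Directed colimits of algebras -/

section Colimits

/-- A directed system of commutative `A`-algebras, bundled with its index set so that systems with
varying index sets can be constructed. -/
structure AlgSystem (A : Type u) [CommRing A] where
  ι : Type u
  [preorder : Preorder ι]
  [directed : IsDirectedOrder ι]
  [nonempty : Nonempty ι]
  G : ι → Type u
  [commRing : ∀ i, CommRing (G i)]
  [algebra : ∀ i, Algebra A (G i)]
  t : ∀ {i j : ι}, i ≤ j → G i →ₐ[A] G j
  t_id : ∀ (i : ι) (x : G i), t (le_refl i) x = x
  t_comp : ∀ {i j k : ι} (hij : i ≤ j) (hjk : j ≤ k) (x : G i),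
    t hjk (t hij x) = t (hij.trans hjk) x

attribute [instance] AlgSystem.preorder AlgSystem.directed AlgSystem.nonempty AlgSystem.commRing
  AlgSystem.algebra

variable {A : Type u} [CommRing A]

/-- A cocone exhibiting `L` as the colimit of `D`, characterised elementwise. -/
structure AlgSystem.Colimit (D : AlgSystem A) (L : Type u) [CommRing L] [Algebra A L] where
  g : ∀ i, D.G i →ₐ[A] L
  g_comp : ∀ {i j : D.ι} (h : i ≤ j) (x : D.G i), g j (D.t h x) = g i x
  exists_rep : ∀ x : L, ∃ (i : D.ι) (a : D.G i), g i a = x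
  exists_eq : ∀ (i : D.ι) (x y : D.G i), g i x = g i y → ∃ (j : D.ι) (h : i ≤ j), D.t h x = D.t h y

namespace AlgSystem

instance (D : AlgSystem A) : DirectedSystem D.G fun _ _ h ↦ D.t h where
  map_self i x := D.t_id i x
  map_map _ _ _ hij hjk x := D.t_comp hij hjk x

lemma exists_colimit (D : AlgSystem A) :
    ∃ (L : Type u) (_ : CommRing L) (_ : Algebra A L), Nonempty (D.Colimit L) := by
  refine ⟨DirectLimit D.G (fun _ _ h ↦ D.t h), inferInstance, inferInstance, ⟨?_⟩⟩
  exact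
    { g := DirectLimit.Algebra.of D.G (fun _ _ h ↦ D.t h)
      g_comp := fun _ _ ↦ DirectLimit.Algebra.of_f _ _
      exists_rep := fun x ↦ DirectLimit.induction _ (fun i a ↦ ⟨i, a, rfl⟩) x
      exists_eq := fun i x y h ↦ by
        obtain ⟨j, hj, _, h⟩ := Quotient.exact h
        exact ⟨j, hj, h⟩ }

variable {D : AlgSystem A} {L : Type u} [CommRing L] [Algebra A L] (c : D.Colimit L)

namespace Colimit

lemma comp_t {i j : D.ι} (h : i ≤ j) : (c.g j).comp (D.t h) = c.g i := AlgHom.ext (c.g_comp h)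

lemma exists_rep_finite {κ : Type*} [Finite κ] (x : κ → L) :
    ∃ (i : D.ι) (y : κ → D.G i), ∀ k, c.g i (y k) = x k := by
  choose s y hy using fun k ↦ c.exists_rep (x k)
  obtain ⟨i, hi⟩ := Finite.exists_le s
  exact ⟨i, fun k ↦ D.t (hi k) (y k), fun k ↦ (c.g_comp _ _).trans (hy k)⟩

lemma exists_eq_finite {κ : Type*} [Finite κ] {i : D.ι} (x y : κ → D.G i)
    (h : ∀ k, c.g i (x k) = c.g i (y k)) :
    ∃ (j : D.ι) (hj : i ≤ j), ∀ k, D.t hj (x k) = D.t hj (y k) := by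
  choose s hs hxy using fun k ↦ c.exists_eq i _ _ (h k)
  obtain ⟨m, hm⟩ := Finite.exists_le s
  obtain ⟨j, hij, hmj⟩ := exists_ge_ge i m
  refine ⟨j, hij, fun k ↦ ?_⟩
  rw [← D.t_comp (hs k) ((hm k).trans hmj), hxy, D.t_comp]

/-- Finitely presented algebras are compact objects: the finitely many generators and relations are
dealt with at a single stage. -/
lemma exists_comp_eq {P : Type u} [CommRing P] [Algebra A P] [Algebra.FinitePresentation A P]
    (ψ : P →ₐ[A] L) : ∃ (i : D.ι) (φ : P →ₐ[A] D.G i), (c.g i).comp φ = ψ := by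
  obtain ⟨n, f, hf, r, hr⟩ := Algebra.FinitePresentation.out (R := A) (A := P)
  obtain ⟨i, y, hy⟩ := c.exists_rep_finite fun k ↦ ψ (f (MvPolynomial.X k))
  have hcomp : (c.g i).comp (MvPolynomial.aeval y) = ψ.comp f :=
    MvPolynomial.algHom_ext (by simp [hy])
  have hrel (p : r) : c.g i (MvPolynomial.aeval y (p : MvPolynomial (Fin n) A)) = c.g i 0 := by
    have hp : f p = 0 := RingHom.mem_ker.1 (hr ▸ Ideal.subset_span p.2)
    rw [map_zero, ← AlgHom.comp_apply, hcomp, AlgHom.comp_apply, hp, map_zero]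
  obtain ⟨j, hij, hj⟩ := c.exists_eq_finite _ _ hrel
  have hker : RingHom.ker f.toRingHom ≤
      RingHom.ker ((D.t hij).comp (MvPolynomial.aeval y)).toRingHom := by
    rw [← hr, Ideal.span_le]
    exact fun p hp ↦ (hj ⟨p, hp⟩).trans (map_zero _)
  refine ⟨j, AlgHom.liftOfSurjective f hf _ hker, (AlgHom.cancel_right hf).1 ?_⟩
  rw [AlgHom.comp_assoc, AlgHom.liftOfSurjective_comp, ← AlgHom.comp_assoc, c.comp_t, hcomp]

end Colimit

section Above

variable (D) in
/-- The part of `D` at and after the stage `i`, as a system of algebras over `D.G i`. -/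
def above (i : D.ι) : AlgSystem (D.G i) where
  ι := Set.Ici i
  directed := ⟨fun j k ↦
    let ⟨l, hj, hk⟩ := exists_ge_ge j.1 k.1
    ⟨⟨l, j.2.trans hj⟩, hj, hk⟩⟩
  G j := D.G j
  algebra j := (D.t j.2).toRingHom.toAlgebra
  t {j k} h :=
    letI := (D.t j.2).toRingHom.toAlgebra
    letI := (D.t k.2).toRingHom.toAlgebra
    { (D.t h).toRingHom with commutes' := D.t_comp j.2 h }
  t_id j := D.t_id j
  t_comp hij hjk := D.t_comp (i := Subtype.val _) hij hjk

/-- `D` and its tail `D.above i` have the same colimit, over `D.G i` through the cocone map. -/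
def Colimit.above (i : D.ι) [Algebra (D.G i) L] (hi : algebraMap (D.G i) L = (c.g i).toRingHom) :
    (D.above i).Colimit L where
  g j :=
    letI := (D.t j.2).toRingHom.toAlgebra
    { (c.g j.1).toRingHom with commutes' := fun x ↦ (c.g_comp j.2 x).trans (by rw [hi]; rfl) }
  g_comp h x := c.g_comp (i := Subtype.val _) h x
  exists_rep x := by
    obtain ⟨j, y, rfl⟩ := c.exists_rep x
    obtain ⟨k, hik, hjk⟩ := exists_ge_ge i j
    exact ⟨⟨k, hik⟩, D.t hjk y, c.g_comp hjk y⟩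
  exists_eq j x y h := by
    obtain ⟨k, hk, h⟩ := c.exists_eq j.1 x y h
    exact ⟨⟨k, j.2.trans hk⟩, hk, h⟩

end Above

section RestrictScalars

variable (R : Type u) [CommRing R] [Algebra R A]

variable (D) in
/-- The system `D` viewed over a ring `R` of which `A` is an algebra. -/
def restrictScalars : AlgSystem R where
  ι := D.ι
  G := D.G
  algebra (i : D.ι) := ((algebraMap A (D.G i)).comp (algebraMap R A)).toAlgebra
  t {i j : D.ι} h :=
    letI := ((algebraMap A (D.G i)).comp (algebraMap R A)).toAlgebra
    letI := ((algebraMap A (D.G j)).comp (algebraMap R A)).toAlgebra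
    { (D.t h).toRingHom with commutes' := fun r ↦ (D.t h).commutes (algebraMap R A r) }
  t_id := D.t_id
  t_comp := D.t_comp

/-- Restriction of scalars does not change the colimit. -/
def Colimit.restrictScalars [Algebra R L] [IsScalarTower R A L] :
    (D.restrictScalars R).Colimit L where
  g (i : D.ι) :=
    letI := ((algebraMap A (D.G i)).comp (algebraMap R A)).toAlgebra
    let φ : D.G i →ₐ[R] L :=
      { (c.g i).toRingHom with
        commutes' := fun r ↦ ((c.g i).commutes (algebraMap R A r)).trans
          (IsScalarTower.algebraMap_apply R A L r).symm }
    φ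
  g_comp := c.g_comp
  exists_rep := c.exists_rep
  exists_eq := c.exists_eq

end RestrictScalars

section Tensor

variable (S : Type u) [CommRing S] [Algebra A S]

variable (D) in
/-- The base change of `D` along `A → S`, regarded as a system of `A`-algebras. -/
noncomputable def tensor : AlgSystem A where
  ι := D.ι
  G i := D.G i ⊗[A] S
  t h := Algebra.TensorProduct.map (D.t h) (AlgHom.id A S)
  t_id i x := by
    have h : D.t (le_refl i) = AlgHom.id A _ := AlgHom.ext (D.t_id i)
    rw [h, Algebra.TensorProduct.map_id, AlgHom.id_apply]
  t_comp hij hjk x := by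
    have h : (D.t hjk).comp (D.t hij) = D.t (hij.trans hjk) := AlgHom.ext (D.t_comp hij hjk)
    rw [← AlgHom.comp_apply, ← Algebra.TensorProduct.map_comp, h, AlgHom.comp_id]

variable (D) in
/-- The transition maps of `D` as linear maps, in the shape that `Module.DirectLimit` expects. -/
abbrev linearMap (i j : D.ι) (h : i ≤ j) : D.G i →ₗ[A] D.G j := (D.t h).toLinearMap

instance : DirectedSystem D.G (D.linearMap · · ·) :=
  inferInstanceAs (DirectedSystem D.G fun _ _ h ↦ D.t h)

namespace Colimit

section

variable [DecidableEq D.ι]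

/-- The comparison map from Mathlib's direct limit of modules. -/
noncomputable def ofDirectLimit : Module.DirectLimit D.G D.linearMap →ₗ[A] L :=
  Module.DirectLimit.lift A D.ι D.G D.linearMap (fun i ↦ (c.g i).toLinearMap)
    fun _ _ h ↦ c.g_comp h

lemma ofDirectLimit_comp_of (i : D.ι) :
    c.ofDirectLimit ∘ₗ Module.DirectLimit.of A D.ι D.G D.linearMap i = (c.g i).toLinearMap :=
  LinearMap.ext <| Module.DirectLimit.lift_of (f := D.linearMap) (fun i ↦ (c.g i).toLinearMap)
    fun _ _ h ↦ c.g_comp h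

lemma ofDirectLimit_injective : Function.Injective c.ofDirectLimit := fun z w hzw ↦ by
  obtain ⟨i, x, y, rfl, rfl⟩ := Module.DirectLimit.exists_of₂ z w
  simp only [← LinearMap.comp_apply, ofDirectLimit_comp_of] at hzw
  obtain ⟨j, hj, h⟩ := c.exists_eq i x y hzw
  rw [← Module.DirectLimit.of_f (f := D.linearMap) (hij := hj),
    ← Module.DirectLimit.of_f (f := D.linearMap) (hij := hj)]
  exact congrArg _ h

lemma ofDirectLimit_surjective : Function.Surjective c.ofDirectLimit := fun z ↦ by
  obtain ⟨i, y, rfl⟩ := c.exists_rep z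
  exact ⟨Module.DirectLimit.of A D.ι D.G D.linearMap i y,
    DFunLike.congr_fun (c.ofDirectLimit_comp_of i) y⟩

end

lemma exists_rep_tensor (z : L ⊗[A] S) :
    ∃ (i : D.ι) (x : D.G i ⊗[A] S), (c.g i).toLinearMap.rTensor S x = z := by
  induction z with
  | zero => exact ⟨Classical.arbitrary _, 0, map_zero _⟩
  | tmul a s =>
    obtain ⟨i, y, rfl⟩ := c.exists_rep a
    exact ⟨i, y ⊗ₜ s, rfl⟩
  | add z w hz hw =>
    obtain ⟨i, x, rfl⟩ := hz
    obtain ⟨j, y, rfl⟩ := hw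
    obtain ⟨k, hik, hjk⟩ := exists_ge_ge i j
    refine ⟨k, (D.t hik).toLinearMap.rTensor S x + (D.t hjk).toLinearMap.rTensor S y, ?_⟩
    simp only [map_add, ← LinearMap.rTensor_comp_apply, ← AlgHom.comp_toLinearMap, c.comp_t]

lemma exists_eq_tensor (i : D.ι) (x y : D.G i ⊗[A] S)
    (h : (c.g i).toLinearMap.rTensor S x = (c.g i).toLinearMap.rTensor S y) :
    ∃ (j : D.ι) (hj : i ≤ j),
      (D.t hj).toLinearMap.rTensor S x = (D.t hj).toLinearMap.rTensor S y := by
  classical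
  let e := LinearEquiv.ofBijective c.ofDirectLimit
    ⟨c.ofDirectLimit_injective, c.ofDirectLimit_surjective⟩
  simp only [← c.ofDirectLimit_comp_of, LinearMap.rTensor_comp_apply] at h
  have := congrArg (TensorProduct.directLimitLeft D.linearMap S) ((e.rTensor S).injective h)
  rw [TensorProduct.directLimitLeft_rTensor_of, TensorProduct.directLimitLeft_rTensor_of] at this
  exact Module.DirectLimit.exists_eq_of_of_eq
    (G := (D.G · ⊗[A] S)) (f := fun _ _ h ↦ LinearMap.rTensor S (D.linearMap _ _ h)) this

/-- Base change commutes with directed colimits. -/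
noncomputable def tensor (c : D.Colimit L) : (D.tensor S).Colimit (L ⊗[A] S) where
  g (i : D.ι) := Algebra.TensorProduct.map (c.g i) (AlgHom.id A S)
  g_comp {i j : D.ι} (h : i ≤ j) := by
    have hcomp : (Algebra.TensorProduct.map (c.g j) (AlgHom.id A S)).comp
        (Algebra.TensorProduct.map (D.t h) (AlgHom.id A S)) =
          Algebra.TensorProduct.map (c.g i) (AlgHom.id A S) := by
      rw [← Algebra.TensorProduct.map_comp, c.comp_t, AlgHom.comp_id]
    exact DFunLike.congr_fun hcomp
  exists_rep := c.exists_rep_tensor S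
  exists_eq := c.exists_eq_tensor S

lemma algebraMap_mem_map_iff_tmul_eq_zero {B : Type u} [CommRing B] [Algebra A B] {J : Ideal A}
    {x : A} : algebraMap A B x ∈ J.map (algebraMap A B) ↔
      algebraMap A (B ⊗[A] (A ⧸ J)) x = 0 := by
  let e := Algebra.TensorProduct.quotIdealMapEquivTensorQuot B J
  rw [← Ideal.Quotient.eq_zero_iff_mem, ← map_eq_zero_iff e e.injective]
  rfl

include c in
lemma exists_algebraMap_mem_map {J : Ideal A} {x : A}
    (hx : algebraMap A L x ∈ J.map (algebraMap A L)) :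
    ∃ i : D.ι, algebraMap A (D.G i) x ∈ J.map (algebraMap A (D.G i)) := by
  simp only [algebraMap_mem_map_iff_tmul_eq_zero] at hx ⊢
  let c' := c.tensor (A ⧸ J)
  obtain ⟨j, _, h⟩ := c'.exists_eq (Classical.arbitrary _) (algebraMap A _ x) 0
    (by rw [AlgHom.commutes, hx, map_zero])
  exact ⟨j, by rwa [AlgHom.commutes, map_zero] at h⟩

end Colimit

end Tensor

end AlgSystem

end Colimits

/-! ### Lazard's theorem for algebras -/

section Lazard

open CategoryTheory

/-- `B` is a filtered colimit of flat finitely presented `R`-algebras. This is expressed by the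
factorisation property of Lazard's theorem; `IndFlat.exists_algSystem` produces a system. -/
def IndFlat (R B : Type u) [CommRing R] [CommRing B] [Algebra R B] : Prop :=
  ∀ (P : Type u) [CommRing P] [Algebra R P] [Algebra.FinitePresentation R P] (ψ : P →ₐ[R] B),
    ∃ (Q : Type u) (_ : CommRing Q) (_ : Algebra R Q) (α : P →ₐ[R] Q) (β : Q →ₐ[R] B),
      Module.Flat R Q ∧ Algebra.FinitePresentation R Q ∧ β.comp α = ψ

variable {R B : Type u} [CommRing R] [CommRing B] [Algebra R B]

lemma IndFlat.of_flat [Module.Flat R B] [Algebra.FinitePresentation R B] : IndFlat R B :=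
  fun _ _ _ _ ψ ↦ ⟨B, _, _, ψ, .id R B, inferInstance, inferInstance, AlgHom.id_comp ψ⟩

lemma IndFlat.of_algEquiv {S : Type u} [CommRing S] [Algebra R S] (hB : IndFlat R B)
    (e : B ≃ₐ[R] S) : IndFlat R S := fun P _ _ _ ψ ↦ by
  obtain ⟨Q, _, _, α, β, hQ, hQ', h⟩ := hB P ((e.symm : S →ₐ[R] B).comp ψ)
  refine ⟨Q, _, _, α, (e : B →ₐ[R] S).comp β, hQ, hQ', ?_⟩
  rw [AlgHom.comp_assoc, h, ← AlgHom.comp_assoc, e.comp_symm, AlgHom.id_comp]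

lemma AlgSystem.Colimit.indFlat {D : AlgSystem R} (c : D.Colimit B) (h : ∀ i, IndFlat R (D.G i)) :
    IndFlat R B := fun P _ _ _ ψ ↦ by
  obtain ⟨i, φ, rfl⟩ := c.exists_comp_eq ψ
  obtain ⟨Q, _, _, α, β, hQ, hQ', rfl⟩ := h i P φ
  exact ⟨Q, _, _, α, (c.g i).comp β, hQ, hQ', AlgHom.comp_assoc ..⟩

/-- A linear relation in `B` is a homomorphism from the algebra it presents, so it becomes trivial
in the flat algebra through which this homomorphism factors. -/
lemma IndFlat.flat (hB : IndFlat R B) : Module.Flat R B := by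
  refine Module.Flat.iff_forall_isTrivialRelation.2 fun {l f x} hfx ↦ ?_
  let p : MvPolynomial (Fin l) R := ∑ i, f i • MvPolynomial.X i
  let J := Ideal.span {p}
  have hJ (q) (hq : q ∈ J) : MvPolynomial.aeval (R := R) x q = 0 := by
    obtain ⟨r, rfl⟩ := Ideal.mem_span_singleton.1 hq
    simp [p, hfx]
  have : Algebra.FinitePresentation R (MvPolynomial (Fin l) R ⧸ J) := .quotient ⟨{p}, by simp [J]⟩
  obtain ⟨Q, _, _, α, β, hQ, -, hαβ⟩ := hB _ (Ideal.Quotient.liftₐ J (MvPolynomial.aeval x) hJ)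
  let y i := α (Ideal.Quotient.mkₐ R J (MvPolynomial.X i))
  have hxy i : x i = β (y i) := (DFunLike.congr_fun hαβ _).trans
    (MvPolynomial.aeval_X x i) |>.symm
  have hy : ∑ i, f i • y i = 0 := by
    simp only [y, ← map_smul, ← map_sum]
    exact (congrArg α (Ideal.Quotient.eq_zero_iff_mem.2 (Ideal.mem_span_singleton_self p))).trans
      (map_zero α)
  obtain ⟨k, a, z, hyz, ha⟩ :=
    Module.Flat.isTrivialRelation_of_sum_smul_eq_zero (R := R) (M := Q) hy
  exact ⟨k, a, β ∘ z, fun i ↦ by simp [hxy, hyz], ha⟩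

variable (R B) in
/-- A flat finitely presented `R`-algebra mapping to `B`. It is recorded by a presentation, so that
these form a small category. -/
structure FlatOver where
  n : ℕ
  J : Ideal (MvPolynomial (Fin n) R)
  fg : J.FG
  flat : Module.Flat R (MvPolynomial (Fin n) R ⧸ J)
  hom : (MvPolynomial (Fin n) R ⧸ J) →ₐ[R] B

namespace FlatOver

/-- The underlying algebra of an object of `FlatOver R B`. -/
abbrev Alg (X : FlatOver R B) : Type u := MvPolynomial (Fin X.n) R ⧸ X.J

instance (X : FlatOver R B) : Algebra.FinitePresentation R X.Alg := .quotient X.fg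

noncomputable instance : SmallCategory (FlatOver R B) where
  Hom X Y := {φ : X.Alg →ₐ[R] Y.Alg // Y.hom.comp φ = X.hom}
  id X := ⟨.id R _, AlgHom.comp_id _⟩
  comp f g := ⟨g.1.comp f.1, by rw [← AlgHom.comp_assoc, g.2, f.2]⟩

lemma hom_ext {X Y : FlatOver R B} {f g : X ⟶ Y}
    (h : ∀ i, f.1 (Ideal.Quotient.mk _ (MvPolynomial.X i)) =
      g.1 (Ideal.Quotient.mk _ (MvPolynomial.X i))) : f = g :=
  Subtype.ext <| Ideal.Quotient.algHom_ext R <| MvPolynomial.algHom_ext h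

end FlatOver

lemma IndFlat.exists_flatOver (hB : IndFlat R B) {P : Type u} [CommRing P] [Algebra R P]
    [Algebra.FinitePresentation R P] (ψ : P →ₐ[R] B) :
    ∃ (X : FlatOver R B) (φ : P →ₐ[R] X.Alg), X.hom.comp φ = ψ := by
  obtain ⟨Q, _, _, α, β, hQ, hQ', rfl⟩ := hB P ψ
  obtain ⟨n, J, e, hJ⟩ := Algebra.FinitePresentation.iff.1 hQ'
  refine ⟨⟨n, J, hJ, .of_linearEquiv e.toLinearEquiv, β.comp e⟩,
    (e.symm : Q →ₐ[R] _).comp α, ?_⟩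
  ext; simp

lemma IndFlat.exists_flatOver_hom_eq (hB : IndFlat R B) {X : FlatOver R B} {κ : Type*} [Finite κ]
    (x y : κ → X.Alg) (h : ∀ k, X.hom (x k) = X.hom (y k)) :
    ∃ (Y : FlatOver R B) (f : X ⟶ Y), ∀ k, f.1 (x k) = f.1 (y k) := by
  let J := Ideal.span (Set.range fun k ↦ x k - y k)
  have : Algebra.FinitePresentation R (X.Alg ⧸ J) :=
    .quotient (Submodule.fg_span (Set.finite_range _))
  have hJ : J ≤ RingHom.ker X.hom := by
    rw [Ideal.span_le]
    rintro _ ⟨k, rfl⟩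
    simp [RingHom.mem_ker, h]
  obtain ⟨Y, φ, hφ⟩ := hB.exists_flatOver (P := X.Alg ⧸ J) (Ideal.Quotient.liftₐ J X.hom hJ)
  refine ⟨Y, ⟨φ.comp (Ideal.Quotient.mkₐ R J), ?_⟩, fun k ↦ congrArg φ ?_⟩
  · rw [← AlgHom.comp_assoc, hφ]
    exact Ideal.Quotient.liftₐ_comp ..
  · exact Ideal.Quotient.mk_eq_mk_iff_sub_mem _ _ |>.2 (Ideal.subset_span ⟨k, rfl⟩)

lemma IndFlat.isFiltered (hB : IndFlat R B) : IsFiltered (FlatOver R B) where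
  nonempty := (hB.exists_flatOver (Algebra.ofId R B)).nonempty
  cocone_objs X Y := by
    have : Algebra.FinitePresentation R (X.Alg ⊗[R] Y.Alg) :=
      .trans R X.Alg (X.Alg ⊗[R] Y.Alg)
    obtain ⟨Z, φ, hφ⟩ := hB.exists_flatOver (P := X.Alg ⊗[R] Y.Alg)
      (Algebra.TensorProduct.lift X.hom Y.hom fun _ _ ↦ Commute.all _ _)
    refine ⟨Z, ⟨φ.comp Algebra.TensorProduct.includeLeft, ?_⟩,
      ⟨φ.comp Algebra.TensorProduct.includeRight, ?_⟩, trivial⟩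
    · rw [← AlgHom.comp_assoc, hφ, Algebra.TensorProduct.lift_comp_includeLeft]
    · rw [← AlgHom.comp_assoc, hφ]
      exact Algebra.TensorProduct.lift_comp_includeRight _ _ fun _ _ ↦ .all _ _
  cocone_maps X Y f g := by
    have h := DFunLike.congr_fun (f.2.trans g.2.symm)
    obtain ⟨Z, u, hu⟩ := hB.exists_flatOver_hom_eq _ _ fun i ↦ h (Ideal.Quotient.mk _ (.X i))
    exact ⟨Z, u, FlatOver.hom_ext hu⟩

/-- The system of algebras underlying a directed diagram in `FlatOver R B`. -/
noncomputable def FlatOver.algSystem {α : Type u} [Preorder α] [IsDirectedOrder α] [Nonempty α]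
    (F : α ⥤ FlatOver R B) : AlgSystem R where
  ι := α
  G a := (F.obj a).Alg
  t h := (F.map (homOfLE h)).1
  t_id a x := congrArg (fun f ↦ f.1 x) (F.map_id a)
  t_comp hij hjk x := congrArg (fun f ↦ f.1 x) (F.map_comp (homOfLE hij) (homOfLE hjk)).symm

/-- A final directed diagram in `FlatOver R B` has colimit `B`. -/
noncomputable def FlatOver.colimit (hB : IndFlat R B) {α : Type u} [Preorder α]
    [IsDirectedOrder α] [Nonempty α] (F : α ⥤ FlatOver R B) [F.Final] :
    (FlatOver.algSystem F).Colimit B where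
  g (a : α) := (F.obj a).hom
  g_comp h := DFunLike.congr_fun (F.map (homOfLE h)).2
  exists_rep b := by
    have := hB.isFiltered
    obtain ⟨X, φ, hφ⟩ := hB.exists_flatOver (Polynomial.aeval b)
    obtain ⟨a, ⟨f⟩⟩ := ((Functor.final_iff_of_isFiltered F).1 inferInstance).1 X
    have hf : (F.obj a).hom.comp (f.1.comp φ) = Polynomial.aeval b := by
      rw [← AlgHom.comp_assoc, f.2, hφ]
    exact ⟨a, f.1 (φ .X), (DFunLike.congr_fun hf _).trans (Polynomial.aeval_X b)⟩
  exists_eq (a : α) x y h := by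
    have := hB.isFiltered
    obtain ⟨h₁, h₂⟩ := (Functor.final_iff_of_isFiltered F).1 inferInstance
    obtain ⟨X, f, hf⟩ := hB.exists_flatOver_hom_eq (fun _ : Unit ↦ x) (fun _ ↦ y) fun _ ↦ h
    obtain ⟨b, ⟨s⟩⟩ := h₁ X
    obtain ⟨c, hac, hbc⟩ := exists_ge_ge a b
    obtain ⟨d, hcd, hd⟩ := h₂ (F.map (homOfLE hac)) (f ≫ s ≫ F.map (homOfLE hbc))
    refine ⟨d, hac.trans (leOfHom hcd), ?_⟩
    have hd' z : (F.map (homOfLE (hac.trans (leOfHom hcd)))).1 z =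
        (F.map hcd).1 ((F.map (homOfLE hbc)).1 (s.1 (f.1 z))) :=
      (congrArg (fun f ↦ f.1 z) (F.map_comp (homOfLE hac) hcd)).trans
        (congrArg (fun f ↦ f.1 z) hd)
    exact (hd' x).trans <| .trans (by rw [hf ()]) (hd' y).symm

theorem IndFlat.exists_algSystem (hB : IndFlat R B) :
    ∃ D : AlgSystem R, (∀ i, Module.Flat R (D.G i)) ∧
      (∀ i, Algebra.FinitePresentation R (D.G i)) ∧ Nonempty (D.Colimit B) := by
  have := hB.isFiltered
  obtain ⟨α, _, _, _, F, _⟩ := IsFiltered.exists_directed (FlatOver R B)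
  exact ⟨FlatOver.algSystem F, fun a ↦ (F.obj a).flat, fun a ↦ .quotient (F.obj a).fg,
    ⟨FlatOver.colimit hB F⟩⟩

end Lazard

section Descent

lemma exists_finitePresentation_int_flat (A S : Type u) [CommRing A] [CommRing S] [Algebra A S]
    [Module.Flat A S] [Algebra.FinitePresentation A S] :
    ∃ (A₀ S₀ : Type u) (_ : CommRing A₀) (_ : Algebra A₀ A) (_ : CommRing S₀) (_ : Algebra A₀ S₀),
      Algebra.FinitePresentation ℤ A₀ ∧ Module.Flat A₀ S₀ ∧ Algebra.FinitePresentation A₀ S₀ ∧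
        Nonempty (A ⊗[A₀] S₀ ≃ₐ[A] S) := by
  let P := Algebra.Presentation.ofFinitePresentation A S
  let A₀ := Algebra.adjoin ℤ P.coeffs
  have : P.HasCoeffs A₀ := ⟨by simp [A₀]⟩
  have : Algebra.FiniteType ℤ A₀ := (Subalgebra.fg_iff_finiteType _).1
    ⟨P.finite_coeffs.toFinset, by simp [A₀]⟩
  have : IsNoetherianRing A₀ := Algebra.FiniteType.isNoetherianRing ℤ A₀
  let M := P.ModelOfHasCoeffs A₀
  have e : A ⊗[A₀] M ≃ₐ[A] S := P.tensorModelOfHasCoeffsEquiv A₀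
  have : Module.Flat A (A ⊗[A₀] M) := .of_linearEquiv e.toLinearEquiv
  obtain ⟨B, hB, hflat⟩ := exists_fg_flat_tensorProduct (A := A₀) A M
  have : Algebra.FiniteType A₀ B := (Subalgebra.fg_iff_finiteType _).1 hB
  have : Algebra.FiniteType ℤ B := .trans (S := A₀) inferInstance inferInstance
  exact ⟨B, B ⊗[A₀] M, inferInstance, inferInstance, inferInstance, inferInstance,
    Algebra.FinitePresentation.of_finiteType.1 this, hflat, inferInstance,
    ⟨(Algebra.TensorProduct.cancelBaseChange A₀ B A A M).trans e⟩⟩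

variable {R B : Type u} [CommRing R] [CommRing B] [Algebra R B]

lemma AlgSystem.Colimit.exists_flat_tensor_algEquiv {D : AlgSystem R} (c : D.Colimit B)
    (S : Type u) [CommRing S] [Algebra B S] [Module.Flat B S] [Algebra.FinitePresentation B S] :
    ∃ (i : D.ι) (S₀ : Type u) (_ : CommRing S₀) (_ : Algebra (D.G i) S₀),
      Module.Flat (D.G i) S₀ ∧ Algebra.FinitePresentation (D.G i) S₀ ∧
        letI := (c.g i).toRingHom.toAlgebra
        Nonempty (B ⊗[D.G i] S₀ ≃ₐ[B] S) := by
  obtain ⟨A₀, S₀, _, _, _, _, _, hflat, hfp, ⟨e⟩⟩ := exists_finitePresentation_int_flat B S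
  obtain ⟨i, φ, hφ⟩ := c.exists_comp_eq (P := R ⊗[ℤ] A₀)
    (Algebra.TensorProduct.lift (Algebra.ofId R B) (IsScalarTower.toAlgHom ℤ A₀ B)
      fun _ _ ↦ Commute.all _ _)
  let _ : Algebra A₀ (D.G i) :=
    (φ.toRingHom.comp (Algebra.TensorProduct.includeRight : A₀ →ₐ[ℤ] R ⊗[ℤ] A₀).toRingHom).toAlgebra
  let _ : Algebra (D.G i) B := (c.g i).toRingHom.toAlgebra
  have : IsScalarTower A₀ (D.G i) B := .of_algebraMap_eq fun a ↦ by
    refine .trans ?_ (DFunLike.congr_fun hφ (1 ⊗ₜ a)).symm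
    simp
  exact ⟨i, D.G i ⊗[A₀] S₀, _, _, inferInstance, inferInstance,
    ⟨(Algebra.TensorProduct.cancelBaseChange A₀ (D.G i) B B S₀).trans e⟩⟩

lemma IndFlat.trans (hB : IndFlat R B) {S : Type u} [CommRing S] [Algebra R S] [Algebra B S]
    [IsScalarTower R B S] [Module.Flat B S] [Algebra.FinitePresentation B S] : IndFlat R S := by
  obtain ⟨D, hD, hD', ⟨c⟩⟩ := hB.exists_algSystem
  obtain ⟨i, S₀, _, _, _, _, ⟨e⟩⟩ := c.exists_flat_tensor_algEquiv S
  let _ : Algebra (D.G i) B := (c.g i).toRingHom.toAlgebra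
  have : IsScalarTower R (D.G i) B := .of_algebraMap_eq fun r ↦ ((c.g i).commutes r).symm
  let c' := ((c.above i rfl).tensor S₀).restrictScalars R
  have hstage j : IndFlat R ((((D.above i).tensor S₀).restrictScalars R).G j) := by
    let _ : Algebra (D.G i) (D.G j.1) := (D.t j.2).toRingHom.toAlgebra
    have : IsScalarTower R (D.G i) (D.G j.1) :=
      .of_algebraMap_eq fun r ↦ ((D.t j.2).commutes r).symm
    have := hD j.1
    have := hD' j.1
    have : Module.Flat R (D.G j.1 ⊗[D.G i] S₀) := .trans R (D.G j.1) _
    have : Algebra.FinitePresentation R (D.G j.1 ⊗[D.G i] S₀) := .trans R (D.G j.1) _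
    exact (IndFlat.of_flat (R := R) (B := D.G j.1 ⊗[D.G i] S₀)).of_algEquiv
      (.ofRingEquiv (f := RingEquiv.refl _)
        fun r ↦ IsScalarTower.algebraMap_apply R (D.G i) (D.G j.1 ⊗[D.G i] S₀) r)
  exact (c'.indFlat hstage).of_algEquiv (e.restrictScalars R)

end Descent

/-! ### Flat covers of a closed subset -/

section Covers

variable {B C S : Type*} [CommRing B] [CommRing C] [CommRing S] [Algebra B C] [Algebra B S]

/-- The image of `Spec S → Spec B` contains the closed subset `V(I)`. For flat finitely presented
`S` this says that `S` together with the complement of `V(I)` is an fppf cover of `Spec B`. -/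
def CoversZeroLocus (I : Ideal B) (S : Type*) [CommRing S] [Algebra B S] : Prop :=
  PrimeSpectrum.zeroLocus (I : Set B) ⊆ Set.range (PrimeSpectrum.comap (algebraMap B S))

lemma mem_range_comap_of_algHom {p : PrimeSpectrum B} (f : C →ₐ[B] S)
    (hp : p ∈ Set.range (PrimeSpectrum.comap (algebraMap B S))) :
    p ∈ Set.range (PrimeSpectrum.comap (algebraMap B C)) := by
  obtain ⟨q, rfl⟩ := hp
  exact ⟨q.comap f.toRingHom, by rw [← PrimeSpectrum.comap_comp_apply, ← f.comp_algebraMap]; rfl⟩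

lemma mem_range_comap_tensor_iff (q : PrimeSpectrum C) :
    q ∈ Set.range (PrimeSpectrum.comap (algebraMap C (C ⊗[B] S))) ↔
      q.comap (algebraMap B C) ∈ Set.range (PrimeSpectrum.comap (algebraMap B S)) := by
  refine ⟨?_, fun hq ↦ ?_⟩
  · rintro ⟨Q, rfl⟩
    rw [← PrimeSpectrum.comap_comp_apply, ← IsScalarTower.algebraMap_eq]
    exact mem_range_comap_of_algHom Algebra.TensorProduct.includeRight ⟨Q, rfl⟩
  rw [← PrimeSpectrum.nontrivial_iff_mem_rangeComap] at hq ⊢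
  let κ := (q.comap (algebraMap B C)).asIdeal.ResidueField
  algebraize [Ideal.ResidueField.map (q.comap (algebraMap B C)).asIdeal q.asIdeal
    (algebraMap B C) rfl]
  have : IsScalarTower B κ q.asIdeal.ResidueField := .of_algebraMap_eq fun b ↦
    ((Ideal.ResidueField.map_algebraMap _ _ _ _ b).trans
      (IsScalarTower.algebraMap_apply B C _ b).symm).symm
  have : Nontrivial (q.asIdeal.ResidueField ⊗[κ] (κ ⊗[B] S)) :=
    Module.FaithfullyFlat.lTensor_nontrivial _ _ _
  have := (AlgebraTensorModule.cancelBaseChange B κ q.asIdeal.ResidueField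
    q.asIdeal.ResidueField S).symm.toEquiv.nontrivial
  exact (AlgebraTensorModule.cancelBaseChange B C q.asIdeal.ResidueField
    q.asIdeal.ResidueField S).toEquiv.nontrivial

variable {I : Ideal B}

lemma coversZeroLocus_tensor_iff {J : Ideal B}
    (hJ : (PrimeSpectrum.zeroLocus (J : Set B))ᶜ =
      Set.range (PrimeSpectrum.comap (algebraMap B S))) :
    CoversZeroLocus (I.map (algebraMap B C)) (C ⊗[B] S) ↔ (J ⊔ I).map (algebraMap B C) = ⊤ := by
  have h (q : PrimeSpectrum C) :
      q ∈ Set.range (PrimeSpectrum.comap (algebraMap C (C ⊗[B] S))) ↔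
        ¬ J.map (algebraMap B C) ≤ q.asIdeal := by
    rw [mem_range_comap_tensor_iff, ← hJ, Ideal.map_le_iff_le_comap]
    rfl
  rw [← PrimeSpectrum.zeroLocus_empty_iff_eq_top, Ideal.map_sup, PrimeSpectrum.zeroLocus_sup,
    Set.inter_comm, ← Set.disjoint_iff_inter_eq_empty, Set.disjoint_left]
  exact forall₂_congr fun q _ ↦ h q

namespace CoversZeroLocus

lemma of_algHom (hS : CoversZeroLocus I S) (f : C →ₐ[B] S) : CoversZeroLocus I C :=
  fun _ hp ↦ mem_range_comap_of_algHom f (hS hp)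

lemma of_faithfullyFlat [Module.FaithfullyFlat B S] : CoversZeroLocus I S :=
  fun p _ ↦ PrimeSpectrum.comap_surjective_of_faithfullyFlat p

lemma baseChange (hS : CoversZeroLocus I S) :
    CoversZeroLocus (I.map (algebraMap B C)) (C ⊗[B] S) := fun q hq ↦
  (mem_range_comap_tensor_iff q).2 (hS (Ideal.map_le_iff_le_comap.1 hq))

lemma trans [Algebra C S] [IsScalarTower B C S] (hC : CoversZeroLocus I C)
    (hS : CoversZeroLocus (I.map (algebraMap B C)) S) : CoversZeroLocus I S := fun p hp ↦ by
  obtain ⟨q, rfl⟩ := hC hp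
  obtain ⟨r, rfl⟩ := hS (Ideal.map_le_iff_le_comap.2 hp)
  exact ⟨r, by rw [← PrimeSpectrum.comap_comp_apply, ← IsScalarTower.algebraMap_eq]⟩

/-- Flatness lets one test faithfulness on maximal ideals only, and all of these lie in `V(I)`. -/
lemma faithfullyFlat (hS : CoversZeroLocus I S) [Module.Flat B S]
    (hI : ∀ m : Ideal B, m.IsMaximal → I ≤ m) : Module.FaithfullyFlat B S := by
  refine ⟨fun m hm h ↦ ?_⟩
  rw [Ideal.smul_top_eq_map, Submodule.restrictScalars_eq_top_iff] at h
  obtain ⟨q, hq⟩ := hS (a := ⟨m, hm.isPrime⟩) (hI m hm)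
  have hq' : m = q.asIdeal.comap (algebraMap B S) := congrArg PrimeSpectrum.asIdeal hq.symm
  exact q.2.ne_top (top_le_iff.1 (h ▸ Ideal.map_le_iff_le_comap.2 hq'.le))

end CoversZeroLocus

lemma exists_ideal_compl_zeroLocus_eq_range_comap [Module.Flat B S]
    [Algebra.FinitePresentation B S] :
    ∃ J : Ideal B, (PrimeSpectrum.zeroLocus (J : Set B))ᶜ =
      Set.range (PrimeSpectrum.comap (algebraMap B S)) := by
  have h : IsOpen (Set.range (PrimeSpectrum.comap (algebraMap B S))) :=
    PrimeSpectrum.isOpenMap_comap_of_hasGoingDown_of_finitePresentation.isOpen_range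
  obtain ⟨J, hJ⟩ := (PrimeSpectrum.isClosed_iff_zeroLocus_ideal _).1 h.isClosed_compl
  exact ⟨J, by rw [← hJ, compl_compl]⟩

end Covers

lemma AlgSystem.Colimit.coversZeroLocus {B : Type u} [CommRing B] {I : Ideal B} {D : AlgSystem B}
    {L : Type u} [CommRing L] [Algebra B L] (c : D.Colimit L)
    (h : ∀ i, CoversZeroLocus I (D.G i)) : CoversZeroLocus I L := fun p hp ↦ by
  rw [PrimeSpectrum.mem_range_comap_iff]
  refine (fun x hx ↦ ?_ : _ ≤ _).antisymm Ideal.le_comap_map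
  obtain ⟨i, hi⟩ := c.exists_algebraMap_mem_map hx
  rwa [← (PrimeSpectrum.mem_range_comap_iff _).1 (h i hp)]

lemma AlgSystem.Colimit.exists_coversZeroLocus_tensor {B S : Type u} [CommRing B] [CommRing S]
    [Algebra B S] [Module.Flat B S] [Algebra.FinitePresentation B S] {I : Ideal B}
    {D : AlgSystem B} {L : Type u} [CommRing L] [Algebra B L] (c : D.Colimit L)
    (h : CoversZeroLocus (I.map (algebraMap B L)) (L ⊗[B] S)) :
    ∃ i, CoversZeroLocus (I.map (algebraMap B (D.G i))) (D.G i ⊗[B] S) := by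
  obtain ⟨J, hJ⟩ := exists_ideal_compl_zeroLocus_eq_range_comap (B := B) (S := S)
  simp only [coversZeroLocus_tensor_iff hJ, Ideal.eq_top_iff_one] at h ⊢
  obtain ⟨i, hi⟩ := c.exists_algebraMap_mem_map (x := 1) (by rwa [map_one])
  exact ⟨i, by rwa [map_one] at hi⟩

section PiTensorProduct

variable {B : Type*} [CommRing B] {κ : Type*} {A : κ → Type*} [∀ k, CommRing (A k)]
  [∀ k, Algebra B (A k)] {X : Type*} [CommRing X] [Algebra B X]

/-- The universal property of a finite tensor product of commutative algebras as a coproduct. -/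
noncomputable def liftFamily [Fintype κ] (f : ∀ k, A k →ₐ[B] X) : (⨂[B] k, A k) →ₐ[B] X :=
  PiTensorProduct.liftAlgHom
    ((MultilinearMap.mkPiAlgebra B κ X).compLinearMap fun k ↦ (f k).toLinearMap)
    (by simp) (by simp [Finset.prod_mul_distrib])

@[simp]
lemma liftFamily_tprod [Fintype κ] (f : ∀ k, A k →ₐ[B] X) (a : ∀ k, A k) :
    liftFamily f (PiTensorProduct.tprod B a) = ∏ k, f k (a k) :=
  PiTensorProduct.lift.tprod a

lemma liftFamily_singleAlgHom [Fintype κ] [DecidableEq κ] (f : ∀ k, A k →ₐ[B] X) (k : κ)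
    (a : A k) : liftFamily f (PiTensorProduct.singleAlgHom k a) = f k a := by
  rw [PiTensorProduct.singleAlgHom_apply, liftFamily_tprod, Finset.prod_eq_single k]
  · simp
  · intro l _ hl
    simp [Pi.mulSingle_eq_of_ne hl]
  · simp

variable (B A) in
/-- The algebra isomorphism underlying `PiTensorProduct.reindex`. -/
noncomputable def reindexAlgEquiv {κ' : Type*} (e : κ ≃ κ') :
    (⨂[B] k, A k) ≃ₐ[B] ⨂[B] k, A (e.symm k) :=
  AlgEquiv.ofLinearEquiv (PiTensorProduct.reindex B A e)
    (PiTensorProduct.reindex_tprod e _) <| (LinearMap.map_mul_iff _).2 <| by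
      ext x y
      simp [Pi.mul_def]

variable (B) in
/-- Splitting off one factor of a finite tensor product of algebras. -/
noncomputable def optionAlgEquiv [Fintype κ] [DecidableEq κ] (A : Option κ → Type*)
    [∀ k, CommRing (A k)] [∀ k, Algebra B (A k)] :
    A none ⊗[B] (⨂[B] k : κ, A (some k)) ≃ₐ[B] ⨂[B] k, A k :=
  .ofAlgHom
    (Algebra.TensorProduct.lift (PiTensorProduct.singleAlgHom none)
      (liftFamily fun k ↦ PiTensorProduct.singleAlgHom (some k)) fun _ _ ↦ .all _ _)
    (liftFamily <| Option.rec Algebra.TensorProduct.includeLeft fun k ↦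
      Algebra.TensorProduct.includeRight.comp
        (PiTensorProduct.singleAlgHom (A := fun k ↦ A (some k)) k))
    (PiTensorProduct.algHom_ext fun k ↦ by
      ext a
      cases k <;> simp only [AlgHom.comp_apply, AlgHom.id_apply, liftFamily_singleAlgHom,
        Algebra.TensorProduct.includeLeft_apply, Algebra.TensorProduct.includeRight_apply,
        Algebra.TensorProduct.lift_tmul, map_one, one_mul, mul_one])
    (Algebra.TensorProduct.ext
      (by
        ext a
        simp only [AlgHom.comp_apply, AlgHom.id_apply, liftFamily_singleAlgHom,
          Algebra.TensorProduct.includeLeft_apply, Algebra.TensorProduct.lift_tmul, map_one,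
          mul_one])
      (PiTensorProduct.algHom_ext fun k ↦ by
        ext a
        simp only [AlgHom.comp_apply, AlgHom.id_apply, AlgHom.restrictScalars_apply,
          liftFamily_singleAlgHom, Algebra.TensorProduct.includeRight_apply,
          Algebra.TensorProduct.lift_tmul, map_one, one_mul]))

variable (A) [DecidableEq κ]

/-- The inclusion of a finite tensor product in a larger one. -/
noncomputable def mapFinset {s t : Finset κ} (h : s ⊆ t) :
    (⨂[B] k : s, A k) →ₐ[B] ⨂[B] k : t, A k :=
  liftFamily fun k : s ↦
    PiTensorProduct.singleAlgHom (A := fun k : t ↦ A k) ⟨k, Finset.mem_of_subset h k.2⟩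

lemma mapFinset_refl (s : Finset κ) :
    mapFinset A (Finset.Subset.refl s) = AlgHom.id B _ :=
  PiTensorProduct.algHom_ext fun k ↦ AlgHom.ext fun a ↦
    liftFamily_singleAlgHom (A := fun k : s ↦ A k) _ k a

lemma mapFinset_comp {r s t : Finset κ} (h : r ⊆ s) (h' : s ⊆ t) :
    (mapFinset A h').comp (mapFinset A h) = mapFinset (B := B) A (h.trans h') :=
  PiTensorProduct.algHom_ext fun k ↦ AlgHom.ext fun a ↦ by
    simp only [mapFinset, AlgHom.comp_apply, liftFamily_singleAlgHom]

end PiTensorProduct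

section FlatCovers

open CategoryTheory

variable {B : Type u} [CommRing B] {I : Ideal B}

/-- `S` is flat and finitely presented over `B` and, together with the complement of `V(I)`, covers
`Spec B`. If `I` lies in the Jacobson radical these are exactly the fppf covers. -/
structure IsFlatCover (I : Ideal B) (S : Type u) [CommRing S] [Algebra B S] : Prop where
  flat : Module.Flat B S
  finitePresentation : Algebra.FinitePresentation B S
  coversZeroLocus : CoversZeroLocus I S

namespace IsFlatCover

variable {S T : Type u} [CommRing S] [Algebra B S] [CommRing T] [Algebra B T]

lemma of_faithfullyFlat [Module.FaithfullyFlat B S] [Algebra.FinitePresentation B S] :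
    IsFlatCover I S :=
  ⟨inferInstance, inferInstance, .of_faithfullyFlat⟩

lemma of_algEquiv (hS : IsFlatCover I S) (e : S ≃ₐ[B] T) : IsFlatCover I T := by
  obtain ⟨_, _, hcov⟩ := hS
  exact ⟨.of_linearEquiv e.symm.toLinearEquiv, .equiv e, hcov.of_algHom e.symm.toAlgHom⟩

lemma tensor (hS : IsFlatCover I S) (hT : IsFlatCover I T) : IsFlatCover I (S ⊗[B] T) := by
  obtain ⟨_, _, hS⟩ := hS
  obtain ⟨_, _, hT⟩ := hT
  exact ⟨inferInstance, .trans B S _, hS.trans hT.baseChange⟩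

lemma piTensorProduct {κ : Type u} [Finite κ] {A : κ → Type u} [∀ k, CommRing (A k)]
    [∀ k, Algebra B (A k)] (hA : ∀ k, IsFlatCover I (A k)) : IsFlatCover I (⨂[B] k, A k) := by
  induction κ using Finite.induction_empty_option with
  | of_equiv e ih => exact (ih fun k ↦ hA (e k)).of_algEquiv (reindexAlgEquiv B A e.symm).symm
  | h_empty =>
    exact of_faithfullyFlat.of_algEquiv (S := B) <|
      .ofAlgHom (Algebra.ofId B _) (liftFamily fun k ↦ k.elim)
        (PiTensorProduct.algHom_ext fun k ↦ k.elim) (by ext)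
  | h_option ih =>
    classical exact ((hA none).tensor (ih fun k ↦ hA (some k))).of_algEquiv (optionAlgEquiv B A)

end IsFlatCover

/-- Flat covers, given by generators and relations so that they form a small type. -/
structure FlatCover (I : Ideal B) where
  n : ℕ
  J : Ideal (MvPolynomial (Fin n) B)
  isFlatCover : IsFlatCover I (MvPolynomial (Fin n) B ⧸ J)

/-- The underlying algebra of a flat cover. -/
abbrev FlatCover.Alg (S : FlatCover I) : Type u := MvPolynomial (Fin S.n) B ⧸ S.J

lemma IsFlatCover.exists_algEquiv {S : Type u} [CommRing S] [Algebra B S] (hS : IsFlatCover I S) :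
    ∃ S' : FlatCover I, Nonempty (S ≃ₐ[B] S'.Alg) := by
  have := hS.finitePresentation
  obtain ⟨n, J, e, -⟩ := Algebra.FinitePresentation.iff.1 this
  exact ⟨⟨n, J, hS.of_algEquiv e.symm⟩, ⟨e.symm⟩⟩

open Classical in
/-- The coproducts of finitely many flat covers, indexed by finite sets of flat covers. -/
noncomputable def flatCoverSystem (I : Ideal B) : AlgSystem B where
  ι := Finset (FlatCover I)
  G F := ⨂[B] S : F, S.1.Alg
  t h := mapFinset FlatCover.Alg h
  t_id F := DFunLike.congr_fun (mapFinset_refl FlatCover.Alg F)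
  t_comp h h' := DFunLike.congr_fun (mapFinset_comp FlatCover.Alg h h')

end FlatCovers

/-! ### The tower of flat covers -/

section Tower

open CategoryTheory

variable {R B : Type u} [CommRing R] [CommRing B] [Algebra R B]

lemma IndFlat.trans_colimit (hB : IndFlat R B) {D : AlgSystem B} {L : Type u} [CommRing L]
    [Algebra B L] [Algebra R L] [IsScalarTower R B L] (c : D.Colimit L)
    (hflat : ∀ i, Module.Flat B (D.G i)) (hfp : ∀ i, Algebra.FinitePresentation B (D.G i)) :
    IndFlat R L := by
  have hstage (i : D.ι) :
      letI := ((algebraMap B (D.G i)).comp (algebraMap R B)).toAlgebra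
      IndFlat R (D.G i) := by
    algebraize [(algebraMap B (D.G i)).comp (algebraMap R B)]
    have := hflat i
    have := hfp i
    exact hB.trans
  exact (c.restrictScalars R).indFlat hstage

lemma isFlatCover_flatCoverSystem (I : Ideal B) (F : (flatCoverSystem I).ι) :
    IsFlatCover I ((flatCoverSystem I).G F) := by
  have h (F : Finset (FlatCover I)) : IsFlatCover I (⨂[B] S : F, S.1.Alg) :=
    .piTensorProduct fun S ↦ S.1.isFlatCover
  exact h F

lemma AlgSystem.Colimit.nonempty_algHom_of_isFlatCover {I : Ideal B} {L : Type u} [CommRing L]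
    [Algebra B L] (c : (flatCoverSystem I).Colimit L) {S : Type u} [CommRing S] [Algebra B S]
    (hS : IsFlatCover I S) : Nonempty (S →ₐ[B] L) := by
  classical
  obtain ⟨S', ⟨e⟩⟩ := hS.exists_algEquiv
  let F : Finset (FlatCover I) := {S'}
  let ι : (⨂[B] S : F, S.1.Alg) →ₐ[B] L := c.g F
  exact ⟨(ι.comp (PiTensorProduct.singleAlgHom ⟨S', Finset.mem_singleton_self S'⟩)).comp
    e.toAlgHom⟩

lemma exists_algHom_splitting_flatCovers {I : Ideal R} (hB : IndFlat R B)
    (hI : CoversZeroLocus I B) :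
    ∃ (L : Type u) (_ : CommRing L) (_ : Algebra R L) (f : B →ₐ[R] L),
      IndFlat R L ∧ CoversZeroLocus I L ∧
        ∀ (S : Type u) [CommRing S] [Algebra B S], IsFlatCover (I.map (algebraMap R B)) S →
          ∃ σ : S →+* L, σ.comp (algebraMap B S) = f.toRingHom := by
  have hcover := isFlatCover_flatCoverSystem (I.map (algebraMap R B))
  obtain ⟨L, _, _, ⟨c⟩⟩ := (flatCoverSystem (I.map (algebraMap R B))).exists_colimit
  algebraize [(algebraMap B L).comp (algebraMap R B)]
  refine ⟨L, inferInstance, inferInstance, IsScalarTower.toAlgHom R B L,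
    hB.trans_colimit c (fun F ↦ (hcover F).flat) (fun F ↦ (hcover F).finitePresentation),
    hI.trans (c.coversZeroLocus fun F ↦ (hcover F).coversZeroLocus), fun S _ _ hS ↦ ?_⟩
  obtain ⟨σ⟩ := c.nonempty_algHom_of_isFlatCover hS
  exact ⟨σ, σ.comp_algebraMap⟩

/-- The system given by a sequence of algebras and successive transition maps. -/
noncomputable def AlgSystem.ofSequence (X : ℕ → Type u) [∀ n, CommRing (X n)]
    [∀ n, Algebra R (X n)] (f : ∀ n, X n →ₐ[R] X (n + 1)) : AlgSystem R :=
  let F : ℕ ⥤ CommAlgCat R :=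
    Functor.ofSequence (X := fun n ↦ CommAlgCat.of R (X n)) fun n ↦ CommAlgCat.ofHom (f n)
  { ι := ULift.{u} ℕ
    G n := X n.down
    t h := (F.map (homOfLE h)).hom
    t_id n := DFunLike.congr_fun (congrArg CommAlgCat.Hom.hom (F.map_id n.down))
    t_comp h h' x := (DFunLike.congr_fun
      (congrArg CommAlgCat.Hom.hom (F.map_comp (homOfLE h) (homOfLE h'))) x).symm }

lemma AlgSystem.ofSequence_t_succ (X : ℕ → Type u) [∀ n, CommRing (X n)]
    [∀ n, Algebra R (X n)] (f : ∀ n, X n →ₐ[R] X (n + 1)) (n : ℕ) :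
    (ofSequence X f).t (i := ⟨n⟩) (j := ⟨n + 1⟩) n.le_succ = f n :=
  congrArg CommAlgCat.Hom.hom (Functor.ofSequence_map_homOfLE_succ _ n)

/-- Every flat cover of a stage along `V(I)` acquires a section at some later stage. -/
def AlgSystem.SplitsFlatCovers (D : AlgSystem R) (I : Ideal R) : Prop :=
  ∀ i, ∃ (j : D.ι) (h : i ≤ j), ∀ (S : Type u) [CommRing S] [Algebra (D.G i) S],
    IsFlatCover (I.map (algebraMap R (D.G i))) S →
      ∃ σ : S →+* D.G j, σ.comp (algebraMap (D.G i) S) = (D.t h).toRingHom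

theorem exists_algSystem_splitsFlatCovers (I : Ideal R) :
    ∃ D : AlgSystem R, (∀ i, IndFlat R (D.G i)) ∧ (∀ i, CoversZeroLocus I (D.G i)) ∧
      D.SplitsFlatCovers I := by
  have step (B : {B : CommAlgCat.{u} R // IndFlat R B ∧ CoversZeroLocus I B}) :
      ∃ (L : {L : CommAlgCat.{u} R // IndFlat R L ∧ CoversZeroLocus I L}) (f : B.1 →ₐ[R] L.1),
        ∀ (S : Type u) [CommRing S] [Algebra B.1 S], IsFlatCover (I.map (algebraMap R B.1)) S →
          ∃ σ : S →+* L.1, σ.comp (algebraMap B.1 S) = f.toRingHom := by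
    obtain ⟨L, _, _, f, hL, hLI, hf⟩ := exists_algHom_splitting_flatCovers B.2.1 B.2.2
    exact ⟨⟨.of R L, hL, hLI⟩, f, hf⟩
  choose next f hf using step
  let X : ℕ → {B : CommAlgCat.{u} R // IndFlat R B ∧ CoversZeroLocus I B} :=
    Nat.rec ⟨.of R R, .of_flat, .of_faithfullyFlat⟩ fun _ ↦ next
  let g (n : ℕ) : (X n).1 →ₐ[R] (X (n + 1)).1 := f (X n)
  refine ⟨.ofSequence (fun n ↦ (X n).1) g, fun n ↦ (X n.down).2.1, fun n ↦ (X n.down).2.2,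
    fun n ↦ ⟨⟨n.down + 1⟩, n.down.le_succ, fun S _ (_ : Algebra (X n.down).1 S) hS ↦ ?_⟩⟩
  obtain ⟨σ, hσ⟩ := hf (X n.down) S hS
  exact ⟨σ, hσ.trans (congrArg AlgHom.toRingHom (AlgSystem.ofSequence_t_succ _ g n.down).symm)⟩

end Tower

/-! ### Sections of flat covers and henselianity -/

section Henselian

open Polynomial

/-- Every flat cover along `V(I)` has a section. -/
def FlatCoversSplit {A : Type u} [CommRing A] (I : Ideal A) : Prop :=
  ∀ (S : Type u) [CommRing S] [Algebra A S], IsFlatCover I S → Nonempty (S →ₐ[A] A)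

variable {R L : Type u} [CommRing R] [CommRing L] [Algebra R L]

lemma AlgSystem.SplitsFlatCovers.flatCoversSplit {D : AlgSystem R} {I : Ideal R}
    (hD : D.SplitsFlatCovers I) (c : D.Colimit L) :
    FlatCoversSplit (I.map (algebraMap R L)) := fun S _ _ hS ↦ by
  obtain ⟨_, _, hcov⟩ := hS
  obtain ⟨i, S₀, _, _, _, _, ⟨e⟩⟩ := c.exists_flat_tensor_algEquiv S
  let _ : Algebra (D.G i) L := (c.g i).toRingHom.toAlgebra
  rw [← (c.g i).comp_algebraMap, ← Ideal.map_map] at hcov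
  obtain ⟨⟨j, hij : i ≤ j⟩, hj⟩ := (c.above i rfl).exists_coversZeroLocus_tensor
    (hcov.of_algHom e.toAlgHom)
  let _ : Algebra (D.G i) (D.G j) := (D.t hij).toRingHom.toAlgebra
  have hj' : IsFlatCover (I.map (algebraMap R (D.G j))) (D.G j ⊗[D.G i] S₀) := by
    rw [← (D.t hij).comp_algebraMap, ← Ideal.map_map]
    exact ⟨inferInstance, inferInstance, hj⟩
  obtain ⟨k, hjk, hk⟩ := hD j
  obtain ⟨σ, hσ⟩ := hk _ hj'
  have hτ (x : D.G i) : c.g k (σ (1 ⊗ₜ algebraMap (D.G i) S₀ x)) = c.g i x :=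
    calc c.g k (σ (1 ⊗ₜ algebraMap (D.G i) S₀ x))
      _ = c.g k (σ (algebraMap (D.G j) (D.G j ⊗[D.G i] S₀) (D.t hij x))) :=
        congrArg (fun z ↦ c.g k (σ z)) (Algebra.TensorProduct.includeRight.commutes x)
      _ = c.g k (D.t hjk (D.t hij x)) := congrArg (c.g k) (DFunLike.congr_fun hσ _)
      _ = c.g i x := by rw [c.g_comp, c.g_comp]
  let τ : S₀ →ₐ[D.G i] L :=
    { (c.g k).toRingHom.comp (σ.comp
        (Algebra.TensorProduct.includeRight : S₀ →ₐ[D.G i] D.G j ⊗[D.G i] S₀).toRingHom) with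
      commutes' := hτ }
  exact ⟨(Algebra.TensorProduct.lift (Algebra.ofId L L) τ fun _ _ ↦ Commute.all _ _).comp
    e.symm.toAlgHom⟩

variable {A : Type u} [CommRing A] {I : Ideal A}

lemma FlatCoversSplit.le_jacobson (h : FlatCoversSplit I) : I ≤ Ideal.jacobson ⊥ := by
  intro a ha
  refine Ideal.mem_jacobson_bot.2 fun y ↦ ?_
  let S := Localization.Away (a * y + 1)
  have hcov : CoversZeroLocus I S := fun p hp ↦ by
    rw [PrimeSpectrum.localization_away_comap_range S (a * y + 1)]
    refine fun hmem ↦ p.2.ne_top ((Ideal.eq_top_iff_one _).2 ?_)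
    exact (p.asIdeal.add_mem_iff_right (p.asIdeal.mul_mem_right y (hp ha))).1 hmem
  obtain ⟨σ⟩ := h S ⟨IsLocalization.flat S (.powers (a * y + 1)),
    IsLocalization.Away.finitePresentation (a * y + 1), hcov⟩
  simpa using (IsLocalization.Away.algebraMap_isUnit (S := S) (a * y + 1)).map σ

section UnitRootAlgebra

/-- The algebra representing the invertible roots of `g`. It is built from the inverse root, which
is a root of the reverse of `g`, because the reverse is monic when `g` has constant term `1`. -/
abbrev UnitRootAlgebra (g : A[X]) : Type u := Localization.Away (AdjoinRoot.root g.reverse)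

lemma exists_aeval_unitRootAlgebra_eq_zero (g : A[X]) :
    ∃ w : UnitRootAlgebra g, aeval w g = 0 := by
  let z : UnitRootAlgebra g := algebraMap _ _ (AdjoinRoot.root g.reverse)
  have hz : aeval z g.reverse = 0 := by
    rw [aeval_algebraMap_apply, AdjoinRoot.aeval_eq, AdjoinRoot.mk_self, map_zero]
  let _ : Invertible z := (IsLocalization.Away.algebraMap_isUnit _).invertible
  exact ⟨⅟z, (eval₂_reverse_eq_zero_iff _ _ _).1 (by rwa [invOf_invOf])⟩

lemma nonempty_unitRootAlgebra_algHom {g : A[X]} {T : Type*} [CommRing T] [Algebra A T] {w : T}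
    (hw : IsUnit w) (h : aeval w g = 0) : Nonempty (UnitRootAlgebra g →ₐ[A] T) := by
  let _ := hw.invertible
  let φ : AdjoinRoot g.reverse →ₐ[A] T :=
    AdjoinRoot.liftAlgHom _ (Algebra.ofId A T) (⅟w) ((eval₂_reverse_eq_zero_iff _ _ _).2 h)
  have hφ : IsUnit (φ (AdjoinRoot.root g.reverse)) := by
    rw [AdjoinRoot.liftAlgHom_root]
    exact isUnit_of_invertible _
  exact ⟨IsLocalization.Away.liftAlgHom _ hφ⟩

instance (g : A[X]) : Algebra.FinitePresentation A (UnitRootAlgebra g) :=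
  have : Algebra.FinitePresentation (AdjoinRoot g.reverse) (UnitRootAlgebra g) :=
    IsLocalization.Away.finitePresentation (AdjoinRoot.root g.reverse)
  .trans A (AdjoinRoot g.reverse) _

lemma flat_unitRootAlgebra {g : A[X]} (hg : g.coeff 0 = 1) :
    Module.Flat A (UnitRootAlgebra g) := by
  have hmonic : g.reverse.Monic := by
    rw [Monic]
    nontriviality A
    rw [reverse_leadingCoeff, trailingCoeff,
      natTrailingDegree_eq_zero.2 (.inr (by simp [hg])), hg]
  have := hmonic.free_adjoinRoot
  have : Module.Flat (AdjoinRoot g.reverse) (UnitRootAlgebra g) :=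
    IsLocalization.flat _ (.powers (AdjoinRoot.root g.reverse))
  exact .trans A (AdjoinRoot g.reverse) _

lemma isUnit_of_aeval_eq_zero {g : A[X]} (hg : g.coeff 0 = 1) {T : Type*} [CommRing T]
    [Algebra A T] {w : T} (h : aeval w g = 0) : IsUnit w := by
  rw [← divX_mul_X_add g, hg] at h
  refine .of_mul_eq_one (-aeval w g.divX) ?_
  simp only [map_add, map_mul, aeval_X, map_one] at h
  linear_combination -h

end UnitRootAlgebra

lemma FlatCoversSplit.exists_isRoot (hs : FlatCoversSplit I) {g : A[X]} (hg : g.coeff 0 = 1)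
    (h : ∀ p : PrimeSpectrum A, I ≤ p.asIdeal → ∃ w : p.asIdeal.ResidueField, aeval w g = 0) :
    ∃ w, g.IsRoot w := by
  have hcov : CoversZeroLocus I (UnitRootAlgebra g) := fun p hp ↦ by
    obtain ⟨w, hw⟩ := h p hp
    obtain ⟨φ⟩ := nonempty_unitRootAlgebra_algHom (isUnit_of_aeval_eq_zero hg hw) hw
    refine mem_range_comap_of_algHom φ ⟨⊥, PrimeSpectrum.ext ?_⟩
    exact Ideal.ker_algebraMap_residueField p.asIdeal
  obtain ⟨σ⟩ := hs _ ⟨flat_unitRootAlgebra hg, inferInstance, hcov⟩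
  obtain ⟨w, hw⟩ := exists_aeval_unitRootAlgebra_eq_zero g
  exact ⟨σ w, by rw [IsRoot, ← coe_aeval_eq_eval, aeval_algHom_apply, hw, map_zero]⟩

/-- The root is sought in the form `a₀ + f(a₀) w`. Dividing `f(a₀ + f(a₀) w)` by `f(a₀)` leaves an
equation for `w` with constant term `1`, which modulo `I` reads `1 + f'(a₀) w = 0`. -/
lemma FlatCoversSplit.henselianRing (hs : FlatCoversSplit I) : HenselianRing A I where
  jac := hs.le_jacobson
  is_henselian f _ a₀ h₀ h₁ := by
    let p := taylor a₀ f
    let g : A[X] := 1 + X * p.divX.comp (C (f.eval a₀) * X)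
    have hg : g.coeff 0 = 1 := by simp [g]
    have hp (w : A) : p.eval (f.eval a₀ * w) = f.eval a₀ * g.eval w := by
      rw [← divX_mul_X_add p, taylor_coeff_zero]
      simp [g]
      ring
    obtain ⟨w, hw⟩ := hs.exists_isRoot hg fun q hq ↦ by
      have hzero : algebraMap A q.asIdeal.ResidueField (f.eval a₀) = 0 := by
        simpa using hq h₀
      have hne : algebraMap A q.asIdeal.ResidueField (f.derivative.eval a₀) ≠ 0 := by
        have := (h₁.map (Ideal.Quotient.factor hq)).ne_zero
        rwa [Ideal.Quotient.factor_mk, Ne, Ideal.Quotient.eq_zero_iff_mem,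
          ← Ideal.algebraMap_residueField_eq_zero] at this
      refine ⟨-(algebraMap A q.asIdeal.ResidueField (f.derivative.eval a₀))⁻¹, ?_⟩
      have hdiv : aeval (0 : q.asIdeal.ResidueField) p.divX =
          algebraMap A q.asIdeal.ResidueField (f.derivative.eval a₀) := by
        rw [← coeff_zero_eq_aeval_zero', coeff_divX, taylor_coeff_one]
      simp only [g, map_add, map_one, map_mul, aeval_X, aeval_comp, aeval_C, hzero, zero_mul, hdiv]
      rw [neg_mul, inv_mul_cancel₀ hne, add_neg_cancel]
    refine ⟨a₀ + f.eval a₀ * w, ?_, ?_⟩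
    · rw [IsRoot, add_comm, ← taylor_eval, hp, hw, mul_zero]
    · rw [add_sub_cancel_left]
      exact I.mul_mem_right w h₀

end Henselian

end IndFppf

/-- For any commutative ring `R` and ideal `I` contained in every maximal ideal of `R`,
there is a faithfully flat, ind-fppf `R`-algebra `R̃` that is Henselian along `I·R̃` and has
no nonsplit fppf covers. -/
theorem exists_ind_fppf_splitting_algebra (R : Type u) [CommRing R] (I : Ideal R)
    (hI : ∀ m : Ideal R, m.IsMaximal → I ≤ m) :
    Nonempty (IndFppfSplittingAlgebra R I) := by
  obtain ⟨D, hflat, hcov, hsplit⟩ := IndFppf.exists_algSystem_splitsFlatCovers I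
  obtain ⟨L, _, _, ⟨c⟩⟩ := D.exists_colimit
  have hL : IndFppf.IndFlat R L := c.indFlat hflat
  have : Module.Flat R L := hL.flat
  have hs : IndFppf.FlatCoversSplit (I.map (algebraMap R L)) := hsplit.flatCoversSplit c
  obtain ⟨E, hE, hE', ⟨d⟩⟩ := hL.exists_algSystem
  exact ⟨{
    At := L
    faithfullyFlat := (c.coversZeroLocus hcov).faithfullyFlat hI
    ι := E.ι
    directed := E.directed
    nonempty_ι := E.nonempty
    A := E.G
    flatA := hE
    fpA := hE'
    t := E.t
    t_id := E.t_id
    t_comp := E.t_comp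
    g := d.g
    g_comp := d.g_comp
    g_jointly_surjective := d.exists_rep
    g_eq_eventually := d.exists_eq
    henselian := hs.henselianRing
    splits := fun S _ _ _ _ ↦ hs S .of_faithfullyFlat }⟩
end

section
/- Let R be a commutative ring and I ⊆ R an ideal contained in every maximal ideal of R. Then there exists a commutative R-algebra R̃ such that: (i) R̃ is faithfully flat over R; (ii) R̃ is a filtered colimit of étale R-algebras (R̃ is ind-étale over R); (iii) the pair (R̃, I·R̃) is Henselian; and (iv) every faithfully flat étale R̃-algebra S admits an R̃-algebra homomorphism S → R̃, i.e. every étale cover of R̃ splits. -/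
universe u

/-- Data witnessing that `R̃` (the field `At`) is a faithfully flat, ind-étale `R`-algebra
which is Henselian along `I·R̃` and over which every étale cover splits: it is exhibited as a
filtered colimit of étale `R`-algebras. -/
structure IndEtaleSplittingAlgebra (R : Type u) [CommRing R] (I : Ideal R) where
  /-- the `R`-algebra `R̃` -/
  At : Type u
  [commRing : CommRing At]
  [alg : Algebra R At]
  /-- (i) `R̃` is faithfully flat over `R` -/
  faithfullyFlat : Module.FaithfullyFlat R At
  /-- the filtered index of the ind-étale presentation -/
  ι : Type u
  [preorder : Preorder ι]
  directed : IsDirected ι (· ≤ ·)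
  nonempty_ι : Nonempty ι
  /-- the directed system of étale `R`-algebras -/
  A : ι → Type u
  [commRingA : ∀ i, CommRing (A i)]
  [algA : ∀ i, Algebra R (A i)]
  etaleA : ∀ i, Algebra.Etale R (A i)
  /-- the transition maps of the directed system -/
  t : ∀ {i j : ι}, i ≤ j → (A i →ₐ[R] A j)
  t_id : ∀ (i : ι) (x : A i), t (le_refl i) x = x
  t_comp : ∀ {i j k : ι} (hij : i ≤ j) (hjk : j ≤ k) (x : A i),
    t hjk (t hij x) = t (hij.trans hjk) x
  /-- the maps to the colimit -/
  g : ∀ i, A i →ₐ[R] At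
  g_comp : ∀ {i j : ι} (h : i ≤ j) (x : A i), g j (t h x) = g i x
  /-- (ii) `R̃` is the filtered colimit of the system: the maps to it are jointly
  surjective … -/
  g_jointly_surjective : ∀ x : At, ∃ (i : ι) (a : A i), g i a = x
  /-- … and two elements identified in `R̃` are identified already at a finite stage -/
  g_eq_eventually : ∀ (i : ι) (x y : A i), g i x = g i y → ∃ (j : ι) (h : i ≤ j), t h x = t h y
  /-- (iii) the pair `(R̃, I·R̃)` is Henselian -/
  henselian : HenselianRing At (I.map (algebraMap R At))
  /-- (iv) every faithfully flat, étale `R̃`-algebra admits an `R̃`-point,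
  i.e. every étale cover of `R̃` splits -/
  splits : ∀ (S : Type u) [CommRing S] [Algebra At S],
    Module.FaithfullyFlat At S → Algebra.Etale At S → Nonempty (S →ₐ[At] At)

/-!
Let `P` be the product of the algebraic closures of the residue fields of `R` at its maximal ideals,
and let `R̃` be the filtered colimit of all étale `R`-algebras `B` equipped with an `R`-point
`B → P`. An étale `R̃`-algebra `S` with a `P`-point over `R̃` descends to some stage `B`, and there
it becomes another object of the index category; hence `S` has an `R̃`-point. Étale
covers split because, by the Nullstellensatz, they acquire a point over each factor of `P`. A
standard étale algebra turns a root in `P` into a root in `R̃`, which gives the Henselian property.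
Finally `R̃` is flat as a filtered colimit, and faithfully so because no maximal ideal of `R`
generates the unit ideal in `P`.
-/

open CategoryTheory Limits MorphismProperty Polynomial TensorProduct

section

universe w v₁ u₁

variable {C : Type u₁} [Category.{v₁} C] (W : MorphismProperty C)

/-- `π : T ⟶ Y` is relatively closed for `W` if every `W`-morphism out of `T` through which `π`
factors has a retraction. For `W` the étale ring maps this is a relative form of strict
Henselianity of `T`. -/
def IsRelativelyClosed {T Y : C} (π : T ⟶ Y) : Prop :=
  ∀ ⦃S : C⦄ (f : T ⟶ S) (σ : S ⟶ Y), W f → f ≫ σ = π → ∃ r : S ⟶ T, f ≫ r = 𝟙 T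

/-- The category of factorizations `X ⟶ B ⟶ Y` of `f` whose left half is in `W`. -/
abbrev LeftFactorization {X Y : C} (f : X ⟶ Y) :=
  CostructuredArrow (Under.forget W ⊤ X) (CategoryTheory.Under.mk f)

instance [HasFiniteWidePushouts C] [W.IsMultiplicative] [W.IsStableUnderCobaseChange]
    [W.HasOfPrecompProperty W] {X Y : C} (f : X ⟶ Y) :
    IsFiltered (LeftFactorization W f) :=
  have := coflat_of_preservesFiniteColimits (Under.forget W ⊤ X)
  RepresentablyCoflat.filtered _

variable {W}

namespace LeftFactorization

variable {X Y : C} {f : X ⟶ Y}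

/-- The functor sending a factorization `X ⟶ B ⟶ Y` to its intermediate object `B`. -/
abbrev middle (f : X ⟶ Y) : LeftFactorization W f ⥤ C :=
  CostructuredArrow.proj _ _ ⋙ Under.forget W ⊤ X ⋙ CategoryTheory.Under.forget X

/-- Composing the left half of a factorization with a further `W`-morphism `b` through which the
right half factors. -/
def extend [W.IsStableUnderComposition] (E : LeftFactorization W f) {B : C} (b : E.left.right ⟶ B)
    (q : B ⟶ Y) (hb : W b) (hq : b ≫ q = E.hom.right) : LeftFactorization W f :=
  .mk (Y := Under.mk ⊤ (E.left.hom ≫ b) (W.comp_mem _ _ E.left.prop hb))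
    (CategoryTheory.Under.homMk q <|
      (Category.assoc _ _ _).trans <| (congrArg _ hq).trans (CategoryTheory.Under.w E.hom))

/-- The morphism of factorizations given by the `W`-morphism `b` that extends `E`. -/
def toExtend [W.IsStableUnderComposition] (E : LeftFactorization W f) {B : C}
    (b : E.left.right ⟶ B) (q : B ⟶ Y) (hb : W b) (hq : b ≫ q = E.hom.right) :
    E ⟶ E.extend b q hb hq :=
  CostructuredArrow.homMk (Under.homMk b rfl) (CategoryTheory.Under.UnderMorphism.ext hq)

theorem exists_map_eq_comp [W.IsStableUnderComposition] {J : Type*} [Category* J]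
    (K : J ⥤ LeftFactorization W f) [K.Full] [K.EssSurj]
    {j : J} {B : C} (b : (K ⋙ middle f).obj j ⟶ B) (q : B ⟶ Y) (hb : W b)
    (hq : b ≫ q = (K.obj j).hom.right) :
    ∃ (k : J) (t : j ⟶ k) (b' : B ⟶ (K ⋙ middle f).obj k), (K ⋙ middle f).map t = b ≫ b' := by
  let e := K.objObjPreimageIso ((K.obj j).extend b q hb hq)
  let u := (K.obj j).toExtend b q hb hq ≫ e.inv
  exact ⟨_, K.preimage u, (middle f).map e.inv,
    (congrArg (middle f).map (K.map_preimage u)).trans ((middle f).map_comp _ _)⟩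

end LeftFactorization

theorem isRelativelyClosed_of_isColimit [W.IsStableUnderComposition] [PreIndSpreads.{w} W]
    {X Y : C} {f : X ⟶ Y} {J : Type w} [SmallCategory J] [IsFiltered J]
    (K : J ⥤ LeftFactorization W f) [K.Full] [K.EssSurj]
    {c : Cocone (K ⋙ LeftFactorization.middle f)} (hc : IsColimit c) (π : c.pt ⟶ Y)
    (hπ : ∀ j, c.ι.app j ≫ π = (K.obj j).hom.right) :
    IsRelativelyClosed W π := by
  intro S s σ hs hσ
  obtain ⟨j, B, b, g, hpush, hb⟩ := W.exists_isPushout_of_isFiltered hc s hs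
  have hbg : b ≫ g ≫ σ = (K.obj j).hom.right := by
    rw [← Category.assoc, ← hpush.w, Category.assoc, hσ, hπ]
  obtain ⟨k, t, b', ht⟩ := LeftFactorization.exists_map_eq_comp K b (g ≫ σ) hb hbg
  have hj : c.ι.app j = b ≫ b' ≫ c.ι.app k := by rw [← c.w t, ht, Category.assoc]
  exact ⟨hpush.desc (𝟙 c.pt) (b' ≫ c.ι.app k) ((Category.comp_id _).trans hj),
    hpush.inl_desc _ _ _⟩

theorem exists_isRelativelyClosed_of_full_essSurj
    [HasFilteredColimitsOfSize.{w, w} C] [W.IsStableUnderComposition] [PreIndSpreads.{w} W]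
    {X Y : C} {f : X ⟶ Y} {J : Type w} [SmallCategory J] [IsFiltered J]
    (K : J ⥤ LeftFactorization W f) [K.Full] [K.EssSurj] :
    ∃ (T : CategoryTheory.Under X) (π : T ⟶ CategoryTheory.Under.mk f)
      (pres : ColimitPresentation J T),
      (∀ j, W (pres.diag.obj j).hom) ∧ IsRelativelyClosed W π.right := by
  have : IsConnected J := IsFiltered.isConnected J
  have : HasColimitsOfShape J C := HasFilteredColimitsOfSize.HasColimitsOfShape J
  let D : J ⥤ CategoryTheory.Under X := K ⋙ CostructuredArrow.proj _ _ ⋙ Under.forget W ⊤ X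
  have : HasColimit D := CategoryTheory.Under.hasColimitsOfShape_of_isConnected.has_colimit D
  let c : Cocone D :=
    ⟨CategoryTheory.Under.mk f, ⟨fun j ↦ (K.obj j).hom, fun _ _ h ↦
      (CostructuredArrow.w (K.map h)).trans (Category.comp_id _).symm⟩⟩
  refine ⟨colimit D, colimit.desc D c, .colimit D, fun j ↦ (K.obj j).left.prop, ?_⟩
  exact isRelativelyClosed_of_isColimit K
    (isColimitOfPreserves (CategoryTheory.Under.forget X) (colimit.isColimit D)) _
    fun j ↦ congrArg (·.right) (colimit.ι_desc c j)

theorem exists_colimitPresentation_isRelativelyClosed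
    [LocallySmall.{w} C] [HasFiniteColimits C] [HasFilteredColimitsOfSize.{w, w} C]
    [W.IsMultiplicative] [W.IsStableUnderCobaseChange] [W.HasOfPrecompProperty W]
    [PreIndSpreads.{w} W]
    {X Y : C} (f : X ⟶ Y) [EssentiallySmall.{w} (W.Under ⊤ X)] :
    ∃ (ι : Type w) (_ : PartialOrder ι) (_ : IsDirectedOrder ι) (_ : Nonempty ι)
      (T : CategoryTheory.Under X) (π : T ⟶ CategoryTheory.Under.mk f)
      (pres : ColimitPresentation ι T),
      (∀ i, W (pres.diag.obj i).hom) ∧ IsRelativelyClosed W π.right := by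
  let e := equivSmallModel.{w} (LeftFactorization W f)
  have := IsFiltered.of_equivalence e
  obtain ⟨T, π, pres, hW, hπ⟩ := exists_isRelativelyClosed_of_full_essSurj e.inverse
  obtain ⟨ι, _, _, _, F, _⟩ := IsFiltered.exists_directed (SmallModel.{w} (LeftFactorization W f))
  exact ⟨ι, _, ‹_›, ‹_›, T, π, pres.reindex F, fun i ↦ hW (F.obj i), hπ⟩

end

theorem preIndSpreads_of_exists_isPushout.{w, v₁, u₁} {C : Type u₁}
    [Category.{v₁} C] {W : MorphismProperty C} [HasPushouts C] [W.IsStableUnderCobaseChange]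
    {Z : C} (hZ : IsInitial Z)
    (h : ∀ ⦃T S : C⦄ (f : T ⟶ S), W f → ∃ (A B : C) (a : A ⟶ T) (g : A ⟶ B) (b : B ⟶ S),
      isFinitelyPresentable.{w} C (hZ.to A) ∧ W g ∧ IsPushout a g f b) :
    PreIndSpreads.{w} W where
  exists_isPushout {J _ _ D c} hc S f hf := by
    obtain ⟨A, B, a, g, b, hA, hg, hpush⟩ := h f hf
    obtain ⟨j, q, -, hq⟩ := exists_hom_of_isFinitelyPresentable hc hA
      ⟨fun j ↦ hZ.to (D.obj j), fun _ _ _ ↦ hZ.hom_ext _ _⟩ a fun _ ↦ hZ.hom_ext _ _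
    have hsq : IsPushout q g (pushout.inl q g) (pushout.inr q g) := .of_hasPushout q g
    exact ⟨j, _, pushout.inl q g, _, .of_left' (hq ▸ hpush) hsq, W.of_isPushout hsq hg⟩

/-- Étale ring maps as a class of morphisms of `CommRingCat`. -/
abbrev etale : MorphismProperty CommRingCat.{u} := RingHom.toMorphismProperty RingHom.Etale

instance : etale.{u}.IsMultiplicative where
  id_mem _ := RingHom.Etale.containsIdentities _
  comp_mem _ _ hf hg := RingHom.Etale.stableUnderComposition _ _ hf hg

instance : etale.{u}.IsStableUnderCobaseChange :=
  RingHom.isStableUnderCobaseChange_toMorphismProperty_iff.mpr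
    RingHom.Etale.isStableUnderBaseChange

instance : etale.{u}.HasOfPrecompProperty etale where
  of_precomp {X Y Z} f g hf hfg := by
    replace hf : f.hom.Etale := hf
    replace hfg : (g.hom.comp f.hom).Etale := hfg
    algebraize [f.hom, g.hom, g.hom.comp f.hom]
    exact Algebra.Etale.of_restrictScalars X Y Z

instance (R : CommRingCat.{u}) : EssentiallySmall.{u} (etale.Under ⊤ R) := by
  refine essentiallySmall_of_le (fun A B f hf ↦ ?_) R
  replace hf : f.hom.Etale := hf
  algebraize [f.hom]
  have : Algebra.FinitePresentation A B := inferInstance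
  exact Algebra.FiniteType.of_finitePresentation

theorem exists_isPushout_of_etale {T S : CommRingCat.{u}} (f : T ⟶ S) (hf : etale f) :
    ∃ (A B : CommRingCat.{u}) (a : A ⟶ T) (g : A ⟶ B) (b : B ⟶ S),
      isFinitelyPresentable.{u} CommRingCat.{u} (CommRingCat.isInitial.to A) ∧ etale g ∧
        IsPushout a g f b := by
  replace hf : f.hom.Etale := hf
  algebraize [f.hom, (CommRingCat.isInitial.to T).hom]
  obtain ⟨A, B, _, _, hA, _, ⟨e⟩⟩ := Algebra.Etale.exists_subalgebra_fg (ULift.{u} ℤ) T S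
  have : Algebra.FiniteType (ULift.{u} ℤ) A := A.fg_iff_finiteType.mp hA
  have : IsNoetherianRing (ULift.{u} ℤ) := isNoetherianRing_of_ringEquiv ℤ ULift.ringEquiv.symm
  have hA' : (algebraMap (ULift.{u} ℤ) A).FinitePresentation :=
    RingHom.finitePresentation_algebraMap.mpr (Algebra.FinitePresentation.of_finiteType.mp ‹_›)
  refine ⟨.of A, .of B, CommRingCat.ofHom (algebraMap A T), CommRingCat.ofHom (algebraMap A B),
    CommRingCat.ofHom (e.symm.toRingHom.comp Algebra.TensorProduct.includeRight.toRingHom),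
    ?_, RingHom.etale_algebraMap.mpr ‹_›, ?_⟩
  · rw [CommRingCat.isInitial.hom_ext (CommRingCat.isInitial.to _)
      (CommRingCat.ofHom (algebraMap _ A))]
    exact CommRingCat.isFinitelyPresentable_hom _ hA'
  · refine (CommRingCat.isPushout_tensorProduct A T B).of_iso (.refl _) (.refl _) (.refl _)
      e.symm.toRingEquiv.toCommRingCatIso rfl rfl ?_ rfl
    ext x
    exact e.symm.commutes x

instance : PreIndSpreads.{u} etale.{u} :=
  preIndSpreads_of_exists_isPushout CommRingCat.isInitial fun _ _ ↦ exists_isPushout_of_etale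

theorem flat_of_forall_exists_factorization {R T : Type u} [CommRing R] [CommRing T] [Algebra R T]
    (h : ∀ (Q : Type u) [CommRing Q] [Algebra R Q] [Algebra.FinitePresentation R Q]
      (σ : Q →ₐ[R] T), ∃ (B : Type u) (_ : CommRing B) (_ : Algebra R B) (_ : Module.Flat R B)
        (q : Q →ₐ[R] B) (p : B →ₐ[R] T), p.comp q = σ) :
    Module.Flat R T := by
  -- A relation `∑ aᵢ xᵢ = 0` in `T` is a `T`-point of `R[X₁, …, Xₗ] / (∑ aᵢ Xᵢ)`.
  refine Module.Flat.of_forall_isTrivialRelation fun {l a x} hax ↦ ?_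
  let F : MvPolynomial (Fin l) R := ∑ i, a i • MvPolynomial.X i
  let π := Ideal.Quotient.mkₐ R (Ideal.span {F})
  have hFx : ∀ r ∈ Ideal.span {F}, MvPolynomial.aeval x r = 0 := fun r hr ↦ by
    obtain ⟨r, rfl⟩ := Ideal.mem_span_singleton'.mp hr
    simp [F, hax]
  have : Algebra.FinitePresentation R (MvPolynomial (Fin l) R ⧸ Ideal.span {F}) :=
    .quotient (Submodule.fg_span_singleton F)
  obtain ⟨B, _, _, _, q, p, hpq⟩ := h _ (Ideal.Quotient.liftₐ (Ideal.span {F}) _ hFx)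
  let y (i : Fin l) : B := q (π (MvPolynomial.X i))
  have hpy (i : Fin l) : p (y i) = x i :=
    (DFunLike.congr_fun hpq _).trans (MvPolynomial.aeval_X x i)
  have hay : ∑ i, a i • y i = 0 := calc
    ∑ i, a i • y i = q (π F) := by simp only [y, F, map_sum, map_smul]
    _ = 0 := by
      rw [show π F = 0 from Ideal.Quotient.eq_zero_iff_mem.mpr (Ideal.mem_span_singleton_self F),
        map_zero]
  obtain ⟨m, c, z, hz, hac⟩ :=
    Module.Flat.isTrivialRelation_of_sum_smul_eq_zero (R := R) (M := B) hay
  refine ⟨m, c, p ∘ z, fun i ↦ ?_, hac⟩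
  simp only [← hpy, hz, map_sum, map_smul, Function.comp_apply]

theorem flat_of_ind_flat {R T : CommRingCat.{u}} {f : R ⟶ T}
    (hf : ind.{u} (RingHom.toMorphismProperty RingHom.Flat) f) : f.hom.Flat := by
  obtain ⟨J, _, _, D, s, c, hc, hD⟩ := hf
  let _ := f.hom.toAlgebra
  refine flat_of_forall_exists_factorization fun Q _ _ hQ σ ↦ ?_
  obtain ⟨j, q, hq, hqσ⟩ := exists_hom_of_isFinitelyPresentable hc
    (CommRingCat.isFinitelyPresentable_hom (CommRingCat.ofHom (algebraMap R Q))
      (RingHom.finitePresentation_algebraMap.mpr hQ)) s (CommRingCat.ofHom σ.toRingHom) fun i ↦ by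
        refine (hD i).2.trans ?_
        ext r
        exact (σ.commutes r).symm
  let _ : Algebra R (D.obj j) := (s.app j).hom.toAlgebra
  exact ⟨D.obj j, inferInstance, inferInstance, (hD j).1,
    { q.hom with commutes' := fun r ↦ congr($hq r) },
    { (c.app j).hom with commutes' := fun r ↦ congr($((hD j).2) r) },
    AlgHom.ext fun x ↦ congr($hqσ x)⟩

theorem flat_of_colimitPresentation {R : CommRingCat.{u}} {ι : Type u} [SmallCategory ι]
    [IsFiltered ι] {T : CategoryTheory.Under R} (pres : ColimitPresentation ι T)
    (hflat : ∀ i, (pres.diag.obj i).hom.hom.Flat) : T.hom.hom.Flat :=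
  flat_of_ind_flat <| (ind_iff_ind_underMk _).mpr ⟨ι, inferInstance, inferInstance, pres, hflat⟩

/-- `T` is étale-closed in the `T`-algebra `P` if every étale `T`-algebra with a `P`-point has a
`T`-point: the analogue for rings of a field being separably closed in an extension. -/
def IsEtaleClosedIn (T : Type u) (P : Type*) [CommRing T] [CommRing P] [Algebra T P] : Prop :=
  ∀ (S : Type u) [CommRing S] [Algebra T S] [Algebra.Etale T S],
    Nonempty (S →ₐ[T] P) → Nonempty (S →ₐ[T] T)

theorem ker_le_jacobson_bot_of_isLocalHom {A B : Type*} [CommRing A] [CommRing B] (f : A →+* B)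
    [IsLocalHom f] : RingHom.ker f ≤ Ideal.jacobson ⊥ := by
  refine fun x hx ↦ Ideal.mem_jacobson_bot.mpr fun y ↦ isUnit_of_map_unit f _ ?_
  simp only [map_add, map_mul, RingHom.mem_ker.mp hx, zero_mul, zero_add, map_one, isUnit_one]

theorem eval_divByMonic_X_sub_C_eq_eval_derivative {A : Type*} [CommRing A] (f : A[X]) (a : A) :
    (f /ₘ (X - C a)).eval a = f.derivative.eval a := by
  rw [← divByMonic_add_X_sub_C_mul_derivative_divByMonic_eq_derivative f a]
  simp only [eval_add, eval_mul, eval_sub, eval_X, eval_C, sub_self, zero_mul, add_zero]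

theorem eval_add_sub_mul_eval_divByMonic {A : Type*} [CommRing A] (f : A[X]) (a b : A) :
    f.eval a + (b - a) * (f /ₘ (X - C a)).eval b = f.eval b := by
  conv_rhs => rw [← modByMonic_add_div f (X - C a), modByMonic_X_sub_C_eq_C_eval]
  simp only [eval_add, eval_mul, eval_sub, eval_X, eval_C]

theorem sub_mem_of_isRoot_of_isUnit_eval_divByMonic {A : Type*} [CommRing A] {J : Ideal A}
    {f : A[X]} {a b : A} (ha : f.eval a ∈ J) (hb : f.IsRoot b)
    (hunit : IsUnit ((f /ₘ (X - C a)).eval b)) : b - a ∈ J := by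
  refine (Ideal.mul_unit_mem_iff_mem J hunit).mp ?_
  rwa [eq_neg_of_add_eq_zero_right ((eval_add_sub_mul_eval_divByMonic f a b).trans hb),
    J.neg_mem_iff]

namespace IsEtaleClosedIn

variable {T : Type u} {P : Type*} [CommRing T] [CommRing P] [Algebra T P]

theorem isLocalHom_algebraMap (h : IsEtaleClosedIn T P) : IsLocalHom (algebraMap T P) where
  map_nonunit x hx := by
    have : Algebra.Etale T (Localization.Away x) := .of_isLocalizationAway x
    let σ : Localization.Away x →ₐ[T] P :=
      { IsLocalization.Away.lift x hx with commutes' := IsLocalization.Away.lift_eq x hx }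
    obtain ⟨r⟩ := h _ ⟨σ⟩
    simpa only [r.commutes, Algebra.algebraMap_self_apply] using
      (IsLocalization.Away.algebraMap_isUnit (S := Localization.Away x) x).map r

theorem exists_isRoot (h : IsEtaleClosedIn T P) {f g : T[X]} (hf : f.Monic)
    (hg : f.derivative ∣ g) {a : P} (ha : aeval a f = 0) (hga : IsUnit (aeval a g)) :
    ∃ b : T, f.IsRoot b ∧ IsUnit (g.eval b) := by
  obtain ⟨k, rfl⟩ := hg
  let E : StandardEtalePair T := ⟨f, hf, f.derivative * k, k, 0, 1, by simp⟩
  obtain ⟨r⟩ := h E.Ring ⟨E.lift a ⟨ha, hga⟩⟩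
  have hr := E.hasMap_X.map r
  rw [StandardEtalePair.HasMap, coe_aeval_eq_eval] at hr
  exact ⟨r E.X, hr⟩

theorem henselianRing (h : IsEtaleClosedIn T P) {J : Ideal T}
    (hJ : J ≤ RingHom.ker (algebraMap T P)) : HenselianRing T J := by
  have := h.isLocalHom_algebraMap
  have hjac := hJ.trans (ker_le_jacobson_bot_of_isLocalHom (algebraMap T P))
  refine ⟨hjac, fun f hf a ha hfa ↦ ?_⟩
  have := isLocalHom_of_le_jacobson_bot J hjac
  have hunit : IsUnit (f.derivative.eval a) := isUnit_of_map_unit (Ideal.Quotient.mk J) _ hfa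
  -- Inverting also the difference quotient of `f` at `a` forces the lifted root into `a + J`.
  obtain ⟨b, hb, hgb⟩ := h.exists_isRoot (g := f.derivative * (f /ₘ (X - C a))) hf
    (Dvd.intro _ rfl) (a := algebraMap T P a)
    (by rw [aeval_algebraMap_apply_eq_algebraMap_eval]; exact hJ ha)
    (by
      rw [aeval_algebraMap_apply_eq_algebraMap_eval, eval_mul,
        eval_divByMonic_X_sub_C_eq_eval_derivative]
      exact (hunit.mul hunit).map _)
  exact ⟨b, hb, sub_mem_of_isRoot_of_isUnit_eval_divByMonic ha hb
    (isUnit_of_mul_isUnit_right (eval_mul (R := T) ▸ hgb))⟩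

end IsEtaleClosedIn

theorem nonempty_algHom_of_isAlgClosed {K B : Type*} [Field K] [IsAlgClosed K] [CommRing B]
    [Algebra K B] [Nontrivial B] [Algebra.FiniteType K B] : Nonempty (B →ₐ[K] K) := by
  obtain ⟨n, hn⟩ := Ideal.exists_maximal B
  let _ : Field (B ⧸ n) := Ideal.Quotient.field n
  have : Module.Finite K (B ⧸ n) := finite_of_finite_type_of_isJacobsonRing K (B ⧸ n)
  exact ⟨(IsAlgClosed.lift : B ⧸ n →ₐ[K] K).comp (Ideal.Quotient.mkₐ K n)⟩

theorem nonempty_algHom_isAlgClosed_of_faithfullyFlat (T S K : Type*) [CommRing T] [CommRing S]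
    [Algebra T S] [Module.FaithfullyFlat T S] [Algebra.FiniteType T S] [Field K] [IsAlgClosed K]
    [Algebra T K] : Nonempty (S →ₐ[T] K) := by
  obtain ⟨p⟩ := nonempty_algHom_of_isAlgClosed (K := K) (B := K ⊗[T] S)
  exact ⟨(p.restrictScalars T).comp Algebra.TensorProduct.includeRight⟩

theorem nonempty_algHom_pi_isAlgClosed_of_faithfullyFlat (T S : Type*) [CommRing T] [CommRing S]
    [Algebra T S] [Module.FaithfullyFlat T S] [Algebra.FiniteType T S] {κ : Type*} (K : κ → Type*)
    [∀ m, Field (K m)] [∀ m, IsAlgClosed (K m)] [Algebra T (∀ m, K m)] :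
    Nonempty (S →ₐ[T] ∀ m, K m) := by
  have hpoint (m : κ) : ∃ σ : S →+* K m,
      σ.comp (algebraMap T S) = (Pi.evalRingHom K m).comp (algebraMap T (∀ m, K m)) := by
    let _ : Algebra T (K m) := ((Pi.evalRingHom K m).comp (algebraMap T (∀ m, K m))).toAlgebra
    obtain ⟨σ⟩ := nonempty_algHom_isAlgClosed_of_faithfullyFlat T S (K m)
    exact ⟨σ, σ.comp_algebraMap⟩
  choose σ hσ using hpoint
  exact ⟨{ RingHom.pi σ with commutes' := fun x ↦ funext fun m ↦ congr($(hσ m) x) }⟩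

theorem faithfullyFlat_of_map_ne_top {R T : Type*} (P : Type*) [CommRing R] [CommRing T]
    [CommRing P] [Algebra R T] [Algebra R P] [Algebra T P] [IsScalarTower R T P] [Module.Flat R T]
    (h : ∀ m : Ideal R, m.IsMaximal → m.map (algebraMap R P) ≠ ⊤) :
    Module.FaithfullyFlat R T where
  submodule_ne_top m hm htop := by
    refine h m hm ?_
    rw [Ideal.smul_top_eq_map, Submodule.restrictScalars_eq_top_iff] at htop
    rw [IsScalarTower.algebraMap_eq R T P, ← Ideal.map_map, htop, Ideal.map_top]

/-- Repackages a directed colimit presentation in the category of `R`-algebras as the elementwise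
data of `IndEtaleSplittingAlgebra`. -/
noncomputable def IndEtaleSplittingAlgebra.ofColimitPresentation {R : Type u} [CommRing R]
    {I : Ideal R} {ι : Type u} [Preorder ι] [IsDirectedOrder ι] [Nonempty ι]
    {T : CategoryTheory.Under (CommRingCat.of R)} (pres : ColimitPresentation ι T)
    (hetale : ∀ i, (pres.diag.obj i).hom.hom.Etale) (hff : T.hom.hom.FaithfullyFlat)
    (hhensel : HenselianRing T.right (I.map T.hom.hom))
    (hsplits : ∀ (S : Type u) [CommRing S] [Algebra T.right S],
      Module.FaithfullyFlat T.right S → Algebra.Etale T.right S →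
        Nonempty (S →ₐ[T.right] T.right)) :
    IndEtaleSplittingAlgebra R I where
  At := T.right
  alg := T.hom.hom.toAlgebra
  faithfullyFlat := hff
  ι := ι
  directed := inferInstance
  nonempty_ι := inferInstance
  A i := (pres.diag.obj i).right
  algA i := (pres.diag.obj i).hom.hom.toAlgebra
  etaleA := hetale
  t {i j} h := CommRingCat.toAlgHom (pres.diag.map (homOfLE h))
  t_id i x := congr(($(pres.diag.map_id i)).right x)
  t_comp hij hjk x := congr(($(pres.diag.map_comp (homOfLE hij) (homOfLE hjk))).right x).symm
  g i := CommRingCat.toAlgHom (pres.ι.app i)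
  g_comp h x := congr(($(pres.w (homOfLE h))).right x)
  g_jointly_surjective :=
    have := IsFiltered.isConnected ι
    Concrete.isColimit_exists_rep _
      (isColimitOfPreserves (CategoryTheory.Under.forget _) pres.isColimit)
  g_eq_eventually i x y h := by
    have := IsFiltered.isConnected ι
    obtain ⟨j, f, _, hfg⟩ := Concrete.isColimit_exists_of_rep_eq _
      (isColimitOfPreserves (CategoryTheory.Under.forget _) pres.isColimit) x y h
    exact ⟨j, leOfHom f, hfg⟩
  henselian := hhensel
  splits := hsplits

/-- The product of algebraic closures of all residue fields of `R` at maximal ideals, i.e. the ring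
of functions on a choice of geometric point over each closed point of `Spec R`. -/
abbrev ClosedGeometricPoints (R : Type u) [CommRing R] : Type u :=
  ∀ m : MaximalSpectrum R, AlgebraicClosure m.asIdeal.ResidueField

namespace ClosedGeometricPoints

variable {R : Type u} [CommRing R]

theorem ker_evalRingHom_comp_algebraMap (m : MaximalSpectrum R) :
    RingHom.ker ((Pi.evalRingHom _ m).comp (algebraMap R (ClosedGeometricPoints R))) =
      m.asIdeal := by
  have hm : (Pi.evalRingHom _ m).comp (algebraMap R (ClosedGeometricPoints R)) =
      (algebraMap m.asIdeal.ResidueField (AlgebraicClosure m.asIdeal.ResidueField)).comp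
        (algebraMap R m.asIdeal.ResidueField) := rfl
  rw [hm, RingHom.ker_comp_of_injective _ (algebraMap m.asIdeal.ResidueField _).injective,
    Ideal.ker_algebraMap_residueField]

theorem le_ker_algebraMap {I : Ideal R} (hI : ∀ m : Ideal R, m.IsMaximal → I ≤ m) :
    I ≤ RingHom.ker (algebraMap R (ClosedGeometricPoints R)) := fun _ hx ↦
  funext fun m ↦ (ker_evalRingHom_comp_algebraMap m).ge (hI _ m.isMaximal hx)

theorem map_algebraMap_ne_top (m : Ideal R) (hm : m.IsMaximal) :
    m.map (algebraMap R (ClosedGeometricPoints R)) ≠ ⊤ := by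
  let ev := Pi.evalRingHom (fun m : MaximalSpectrum R ↦
    AlgebraicClosure m.asIdeal.ResidueField) ⟨m, hm⟩
  have hle : m.map (algebraMap R (ClosedGeometricPoints R)) ≤ RingHom.ker ev := by
    rw [Ideal.map_le_iff_le_comap, RingHom.comap_ker]
    exact (ker_evalRingHom_comp_algebraMap ⟨m, hm⟩).ge
  exact ne_top_of_le_ne_top (RingHom.ker_ne_top ev) hle

end ClosedGeometricPoints

theorem isEtaleClosedIn_of_isRelativelyClosed {T P : CommRingCat.{u}} {π : T ⟶ P}
    (h : IsRelativelyClosed etale π) :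
    letI := π.hom.toAlgebra
    IsEtaleClosedIn T P := by
  let _ := π.hom.toAlgebra
  rintro S _ _ _ ⟨σ⟩
  obtain ⟨r, hr⟩ := h (CommRingCat.ofHom (algebraMap T S)) (CommRingCat.ofHom σ.toRingHom)
    (RingHom.etale_algebraMap.mpr ‹_›) (CommRingCat.hom_ext σ.comp_algebraMap)
  exact ⟨{ r.hom with commutes' := fun x ↦ congr($hr x) }⟩

/-- For any commutative ring `R` and ideal `I` contained in every maximal ideal of `R`,
there is a faithfully flat, ind-étale `R`-algebra `R̃` that is Henselian along `I·R̃` and has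
no nonsplit étale covers. -/
theorem exists_ind_etale_splitting_algebra (R : Type u) [CommRing R] (I : Ideal R)
    (hI : ∀ m : Ideal R, m.IsMaximal → I ≤ m) :
    Nonempty (IndEtaleSplittingAlgebra R I) := by
  let P := ClosedGeometricPoints R
  obtain ⟨ι, _, _, _, T, π, pres, hetale, hrel⟩ :=
    exists_colimitPresentation_isRelativelyClosed.{u} (W := etale)
      (CommRingCat.ofHom (algebraMap R P))
  let _ : Algebra R T.right := T.hom.hom.toAlgebra
  let _ : Algebra T.right P := π.right.hom.toAlgebra
  have : IsScalarTower R T.right P :=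
    .of_algebraMap_eq' (congrArg CommRingCat.Hom.hom (CategoryTheory.Under.w π)).symm
  have hclosed : IsEtaleClosedIn T.right P := isEtaleClosedIn_of_isRelativelyClosed hrel
  have : Module.Flat R T.right := flat_of_colimitPresentation pres fun i ↦
    (RingHom.Etale.iff_flat_and_formallyUnramified.mp (hetale i)).1
  have hff : Module.FaithfullyFlat R T.right :=
    faithfullyFlat_of_map_ne_top P ClosedGeometricPoints.map_algebraMap_ne_top
  have hI_ker : I.map (algebraMap R T.right) ≤ RingHom.ker (algebraMap T.right P) := by
    rw [Ideal.map_le_iff_le_comap, RingHom.comap_ker, ← IsScalarTower.algebraMap_eq]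
    exact ClosedGeometricPoints.le_ker_algebraMap hI
  exact ⟨.ofColimitPresentation pres hetale hff (hclosed.henselianRing hI_ker) fun S _ _ _ _ ↦
    hclosed S (nonempty_algHom_pi_isAlgClosed_of_faithfullyFlat T.right S _)⟩
end
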